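/- (Property 1, averages case: minor arc multiplier decay.) Let k ∈ ℕ, Γ ⊆ ℕ_0^k∖{0} nonempty finite, k', k'' ∈ {0,…,k} with k' + k'' = k, Ω ⊆ ℝ^k a bounded convex open set with B(0,c_Ω) ⊆ Ω ⊆ B(0,1), τ ∈ (0,1], and N_n := ⌊2^{n^τ}⌋. For each α > 0 there is β_α > 0 such that for any β > β_α and n ∈ ℕ: if there is a multi-index γ_0 ∈ Γ with |ξ_{γ_0} − a/q| ≤ 1/q² for some coprime integers a, q with 1 ≤ a ≤ q and (log N_n)^β ≤ q ≤ N_n^{|γ_0|} (log N_n)^{−β}, then |𝔪_{N_n}(ξ) − 𝔪_{N_{n−1}}(ξ)| ≲ (log N_n)^{−α}. -/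

import Mathlib

open MeasureTheory
open scoped ENNReal NNReal

noncomputable section

/-- Embedding of `ℤ^k` into Euclidean space `ℝ^k`. -/
def zEmbed {k : ℕ} (v : Fin k → ℤ) : EuclideanSpace ℝ (Fin k) :=
  WithLp.toLp 2 fun i => (v i : ℝ)

/-- The dilated set `Ω_t = {x : t⁻¹ x ∈ Ω}`. -/
def dilate {k : ℕ} (Ω : Set (EuclideanSpace ℝ (Fin k))) (t : ℝ) :
    Set (EuclideanSpace ℝ (Fin k)) := {x | t⁻¹ • x ∈ Ω}

/-- The weight `𝟙_{(n,p) ∈ ℤ^{k'} × (±ℙ)^{k''}} ∏_{i ≥ k'} log |p_i|`. -/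
def primeWeight {k : ℕ} (k' : ℕ) (v : Fin k → ℤ) : ℝ :=
  Set.indicator {w : Fin k → ℤ | ∀ i : Fin k, k' ≤ (i : ℕ) → Prime (w i)} (fun _ => 1) v *
    ∏ i : Fin k, if k' ≤ (i : ℕ) then Real.log |(v i : ℝ)| else 1

/-- The Chebyshev function `ϑ_Ω(t)`. -/
def cheby {k : ℕ} (k' : ℕ) (Ω : Set (EuclideanSpace ℝ (Fin k))) (t : ℝ) : ℝ :=
  ∑' v : Fin k → ℤ,
    primeWeight k' v * Set.indicator (dilate Ω t) (fun _ => 1) (zEmbed v)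

/-- `e(x) = e^{2πix}`. -/
def eC (x : ℝ) : ℂ := Complex.exp (2 * Real.pi * Complex.I * x)

/-- The pairing `ξ · 𝒬(v)` for `v ∈ ℤ^k`. -/
def qPair {k : ℕ} (Γ : Finset (Fin k → ℕ)) (ξ : (Fin k → ℕ) → ℝ) (v : Fin k → ℤ) : ℝ :=
  ∑ γ ∈ Γ, ξ γ * ∏ i, ((v i : ℝ)) ^ (γ i)

/-- The pairing `θ · 𝒬(u)` for `u ∈ ℝ^k`. -/
def qPairR {k : ℕ} (Γ : Finset (Fin k → ℕ)) (θ : (Fin k → ℕ) → ℝ)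
    (u : EuclideanSpace ℝ (Fin k)) : ℝ :=
  ∑ γ ∈ Γ, θ γ * ∏ i, (u i) ^ (γ i)

/-- The discrete Fourier multiplier `𝔪_t` of the polynomial averaging operator along
primes associated with the canonical polynomial mapping `𝒬`. -/
def discMultA {k : ℕ} (Γ : Finset (Fin k → ℕ)) (k' : ℕ)
    (Ω : Set (EuclideanSpace ℝ (Fin k))) (t : ℝ) (ξ : (Fin k → ℕ) → ℝ) : ℂ :=
  ((cheby k' Ω t : ℝ) : ℂ)⁻¹ *
    ∑' v : Fin k → ℤ,
      ((primeWeight k' v * Set.indicator (dilate Ω t) (fun _ => 1) (zEmbed v) : ℝ) : ℂ) *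
        eC (qPair Γ ξ v)

/-- The continuous multiplier `Φ_t(ξ) = |Ω_t|⁻¹ ∫_{Ω_t} e(ξ·𝒬(u)) du`. -/
def contMultA {k : ℕ} (Γ : Finset (Fin k → ℕ)) (Ω : Set (EuclideanSpace ℝ (Fin k)))
    (t : ℝ) (ξ : (Fin k → ℕ) → ℝ) : ℂ :=
  (((MeasureTheory.volume (dilate Ω t)).toReal : ℝ) : ℂ)⁻¹ *
    ∫ u in dilate Ω t, eC (qPairR Γ ξ u)

/-- The Gaussian sum `G(a/q)` associated with the canonical polynomial mapping. -/
def gaussSumQ {k : ℕ} (Γ : Finset (Fin k → ℕ)) (k' k'' : ℕ) (q : ℕ)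
    (a : (Fin k → ℕ) → ℕ) : ℂ :=
  ((q : ℂ) ^ k' * (Nat.totient q : ℂ) ^ k'')⁻¹ *
    ∑ v ∈ Fintype.piFinset (fun i : Fin k =>
        if (i : ℕ) < k' then Finset.Icc 1 q
        else (Finset.Icc 1 q).filter fun m => Nat.Coprime m q),
      eC (∑ γ ∈ Γ, ((a γ : ℝ) / (q : ℝ)) * ∏ i, (v i : ℝ) ^ (γ i))

/-- The subexponential sequence `N_n = ⌊2^{n^τ}⌋`. -/
def Nseq (τ : ℝ) (n : ℕ) : ℕ := Nat.floor ((2 : ℝ) ^ ((n : ℝ) ^ τ))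

end

/-!
Let `K` be comparable to `log N`, and suppose that `𝔪_N(ξ)` exceeds a fixed power of `K⁻¹` in size.
By convexity each line parallel to a coordinate axis meets `Ω_N` in an interval, so for each axis
the sum splits into exponential sums of real polynomials over the integers or the signed primes of
an interval, and many of these are within a power of `K` of their trivial bound. The inverse form of
Weyl's inequality (van der Corput differencing down to the linear case) and, for primes, Vaughan's
identity with Cauchy–Schwarz for the bilinear part place the nonconstant coefficients of each such
polynomial in major arcs. These coefficients are values of polynomials in the other variables, one
fewer in number, at many integer points. A polynomial which lies in major arcs at many integers has
its coefficients in major arcs, by a pigeonhole over the denominators and a Remez-type inequality;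
this brings the major arcs down to the `ξ_γ` one variable at a time. So every `ξ_γ` has distance at
most a power of `K` times `N^{-|γ|}` from a fraction with denominator at most a power of `K`, which
is impossible at a minor arc frequency once `β` is large.
-/

/-! ### Major arcs -/

section

open Polynomial Finset

theorem two_pow_mul_pow_le {R : Type*} [Semiring R] [PartialOrder R] [IsOrderedRing R] {x : R}
    (hx : 2 ≤ x) (n a : ℕ) : 2 ^ n * x ^ a ≤ x ^ (a + n) := by
  rw [add_comm, pow_add]
  have hx0 : 0 ≤ x := zero_le_two.trans hx
  gcongr
  exact zero_le_two

theorem exists_card_le_card_mul_card_fiber {α β : Type*} [DecidableEq β] {s : Finset α}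
    {t : Finset β} {f : α → β} (hf : Set.MapsTo f s t) (ht : t.Nonempty) :
    ∃ y ∈ t, #s ≤ #t * #{x ∈ s | f x = y} := by
  refine exists_le_of_sum_le ht ?_
  rw [← mul_sum, ← card_eq_sum_card_fiberwise hf, sum_const, smul_eq_mul]

theorem unitAddCircle_norm_coe_le_abs_sub (x : ℝ) (n : ℤ) : ‖(x : UnitAddCircle)‖ ≤ |x - n| :=
  UnitAddCircle.norm_eq.trans_le (round_le x n)

theorem unitAddCircle_coe_intCast (n : ℤ) : ((n : ℝ) : UnitAddCircle) = 0 :=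
  (AddCircle.coe_eq_zero_iff 1).2 ⟨n, by simp⟩

theorem unitAddCircle_coe_intCast_mul (n : ℤ) (x : ℝ) :
    ((n * x : ℝ) : UnitAddCircle) = n • (x : UnitAddCircle) := by
  rw [← AddCircle.coe_zsmul, zsmul_eq_mul]

theorem unitAddCircle_coe_natCast_mul (n : ℕ) (x : ℝ) :
    ((n * x : ℝ) : UnitAddCircle) = n • (x : UnitAddCircle) := by
  rw [← AddCircle.coe_nsmul, nsmul_eq_mul]

theorem unitAddCircle_coe_sum {ι : Type*} (s : Finset ι) (x : ι → ℝ) :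
    ((∑ i ∈ s, x i : ℝ) : UnitAddCircle) = ∑ i ∈ s, (x i : UnitAddCircle) :=
  map_sum (QuotientAddGroup.mk' (AddSubgroup.zmultiples (1 : ℝ))) x s

/-- `x` lies in a major arc: it is at distance at most `K ^ B * η / q` from a fraction of
denominator `q ≤ K ^ B`. Throughout, `K` is comparable to `log N`, and `η` is a power of `N⁻¹`. -/
def IsMajor (K B : ℕ) (η : ℝ) (x : UnitAddCircle) : Prop :=
  ∃ q : ℕ, 0 < q ∧ q ≤ K ^ B ∧ ‖q • x‖ ≤ K ^ B * η

namespace IsMajor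

variable {ι : Type*} {K B C : ℕ} {η : ℝ} {x y : UnitAddCircle}

theorem rescale {η' : ℝ} (hK : 1 ≤ K) (h : IsMajor K B η x) (hη : η ≤ (K : ℝ) ^ C * η') :
    IsMajor K (B + C) η' x := by
  obtain ⟨q, hq, hqB, hx⟩ := h
  refine ⟨q, hq, hqB.trans (Nat.pow_le_pow_right hK (Nat.le_add_right B C)), hx.trans ?_⟩
  rw [pow_add, mul_assoc]
  gcongr

theorem mono_scale {η' : ℝ} (hK : 1 ≤ K) (h : IsMajor K B η x) (hη : η ≤ η') :
    IsMajor K B η' x := by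
  simpa using h.rescale (C := 0) hK (by simpa)

theorem mono (hK : 1 ≤ K) (hη : 0 ≤ η) (h : IsMajor K B η x) (hBC : B ≤ C) :
    IsMajor K C η x := by
  have hK' : (1 : ℝ) ≤ K := by exact_mod_cast hK
  obtain ⟨C, rfl⟩ := Nat.exists_eq_add_of_le hBC
  exact h.rescale hK (le_mul_of_one_le_left hη (one_le_pow₀ hK'))

theorem zero (hK : 1 ≤ K) (hη : 0 ≤ η) : IsMajor K B η 0 :=
  ⟨1, one_pos, Nat.one_le_pow _ _ hK, by simpa using by positivity⟩

theorem neg (h : IsMajor K B η x) : IsMajor K B η (-x) := by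
  simpa only [IsMajor, smul_neg, norm_neg] using h

theorem zsmul (hK : 1 ≤ K) (h : IsMajor K B η x) {n : ℤ} (hn : |(n : ℝ)| ≤ (K : ℝ) ^ C) :
    IsMajor K (B + C) η (n • x) := by
  obtain ⟨q, hq, hqB, hx⟩ := h
  refine ⟨q, hq, hqB.trans (Nat.pow_le_pow_right hK (Nat.le_add_right B C)), ?_⟩
  calc ‖q • n • x‖ = ‖n • q • x‖ := by rw [smul_comm]
    _ ≤ |(n : ℝ)| * ‖q • x‖ := norm_zsmul_le n (q • x)
    _ ≤ K ^ C * (K ^ B * η) := by gcongr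
    _ = K ^ (B + C) * η := by ring

theorem of_zsmul (hK : 1 ≤ K) (hη : 0 ≤ η) {n : ℤ} (hn : n ≠ 0) (hnC : n.natAbs ≤ K ^ C)
    (h : IsMajor K B η (n • x)) : IsMajor K (B + C) η x := by
  have hK' : (1 : ℝ) ≤ K := by exact_mod_cast hK
  obtain ⟨q, hq, hqB, hx⟩ := h
  refine ⟨q * n.natAbs, Nat.mul_pos hq (Int.natAbs_pos.2 hn), ?_, ?_⟩
  · rw [pow_add]
    gcongr
  · rw [mul_comm, mul_smul, norm_natAbs_smul, smul_comm]
    exact hx.trans (by gcongr; lia)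

theorem exists_common_denominator (s : Finset ι) {η : ι → ℝ} {x : ι → UnitAddCircle}
    (h : ∀ i ∈ s, IsMajor K B (η i) (x i)) :
    ∃ q : ℕ, 0 < q ∧ q ≤ K ^ (B * #s) ∧ ∀ i ∈ s, ‖q • x i‖ ≤ K ^ (B * #s) * η i := by
  classical
  choose! q hq hqB hx using h
  refine ⟨∏ i ∈ s, q i, prod_pos hq, ?_, fun i hi => ?_⟩
  · exact (prod_le_pow_card s q _ hqB).trans_eq (pow_mul K B #s).symm
  · have hother : ((∏ j ∈ s.erase i, q j : ℕ) : ℝ) ≤ (K ^ B) ^ (#s - 1) := by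
      rw [← card_erase_of_mem hi]
      exact_mod_cast prod_le_pow_card _ q _ fun j hj => hqB j (mem_of_mem_erase hj)
    calc ‖(∏ j ∈ s, q j) • x i‖ = ‖(∏ j ∈ s.erase i, q j) • q i • x i‖ := by
          rw [← mul_smul, prod_erase_mul _ _ hi]
      _ ≤ (∏ j ∈ s.erase i, q j : ℕ) * ‖q i • x i‖ := norm_nsmul_le
      _ ≤ (K ^ B) ^ (#s - 1) * (K ^ B * η i) := by gcongr; exact hx i hi
      _ = K ^ (B * #s) * η i := by
          rw [← mul_assoc, ← pow_succ, Nat.sub_add_cancel (card_pos.2 ⟨i, hi⟩), ← pow_mul]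

theorem sum (hK : 2 ≤ K) (hη : 0 ≤ η) (s : Finset ι) {x : ι → UnitAddCircle}
    (h : ∀ i ∈ s, IsMajor K B η (x i)) : IsMajor K ((B + 1) * #s) η (∑ i ∈ s, x i) := by
  obtain ⟨q, hq, hqB, hx⟩ := exists_common_denominator s h
  have hs : (#s : ℝ) ≤ (K : ℝ) ^ #s := by exact_mod_cast (Nat.lt_pow_self (by lia)).le
  refine ⟨q, hq, hqB.trans (Nat.pow_le_pow_right (by lia) (by gcongr; lia)), ?_⟩
  calc ‖q • ∑ i ∈ s, x i‖ ≤ ∑ _i ∈ s, K ^ (B * #s) * η := by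
        rw [smul_sum]
        exact norm_sum_le_of_le s hx
    _ = #s * (K ^ (B * #s) * η) := by rw [sum_const, nsmul_eq_mul]
    _ ≤ K ^ #s * (K ^ (B * #s) * η) := by gcongr
    _ = K ^ ((B + 1) * #s) * η := by ring

theorem add (hK : 2 ≤ K) (hη : 0 ≤ η) (hx : IsMajor K B η x) (hy : IsMajor K B η y) :
    IsMajor K ((B + 1) * 2) η (x + y) := by
  simpa using sum hK hη univ (x := ![x, y]) (by simp [hx, hy])

theorem exists_denominator_of_forall_mem (hK : 1 ≤ K) (s : Finset ι) {x : ι → UnitAddCircle}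
    (h : ∀ i ∈ s, IsMajor K B η (x i)) :
    ∃ q : ℕ, 0 < q ∧ q ≤ K ^ B ∧ ∃ t ⊆ s, #s ≤ K ^ B * #t ∧ ∀ i ∈ t, ‖q • x i‖ ≤ K ^ B * η := by
  classical
  choose! q hq hqB hx using h
  have hmaps : Set.MapsTo q s (Icc 1 (K ^ B)) := fun i hi => by
    simpa using ⟨hq i hi, hqB i hi⟩
  obtain ⟨q₀, hq₀, hcard⟩ := exists_card_le_card_mul_card_fiber hmaps
    (nonempty_Icc.2 (Nat.one_le_pow _ _ hK))
  rw [Nat.card_Icc, Nat.add_sub_cancel] at hcard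
  rw [mem_Icc] at hq₀
  refine ⟨q₀, hq₀.1, hq₀.2, _, filter_subset _ s, hcard, fun i hi => ?_⟩
  obtain ⟨his, rfl⟩ := mem_filter.1 hi
  exact hx i his

end IsMajor

end

/-! ### A Remez-type inequality -/

section

open Polynomial Finset

/-- `S` is a subset of `[-N, N]` of cardinality at least `K ^ (-A) * N`; with `K` comparable to
`log N`, these are the sets that are dense up to logarithmic factors. -/
structure IsDenseIn (S : Finset ℤ) (K A N : ℕ) : Prop where
  subset : S ⊆ Icc (-(N : ℤ)) N
  le_card : N ≤ K ^ A * #S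

namespace IsDenseIn

variable {S : Finset ℤ} {K A N : ℕ}

theorem nonempty (hS : IsDenseIn S K A N) (hN : 0 < N) : S.Nonempty :=
  card_pos.1 (Nat.pos_of_mul_pos_left (hN.trans_le hS.le_card))

theorem mono {B : ℕ} (hK : 1 ≤ K) (hAB : A ≤ B) (hS : IsDenseIn S K A N) : IsDenseIn S K B N :=
  ⟨hS.subset, hS.le_card.trans (Nat.mul_le_mul_right _ (Nat.pow_le_pow_right hK hAB))⟩

theorem abs_le (hS : IsDenseIn S K A N) {x : ℤ} (hx : x ∈ S) : |(x : ℝ)| ≤ N := by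
  have := mem_Icc.1 (hS.subset hx)
  exact_mod_cast _root_.abs_le.2 this

theorem of_subset {T : Finset ℤ} {C : ℕ} (hS : IsDenseIn S K A N) (hT : T ⊆ S)
    (hcard : #S ≤ K ^ C * #T) : IsDenseIn T K (A + C) N := by
  refine ⟨hT.trans hS.subset, ?_⟩
  calc N ≤ K ^ A * #S := hS.le_card
    _ ≤ K ^ A * (K ^ C * #T) := by gcongr
    _ = K ^ (A + C) * #T := by ring

theorem exists_fiber {β : Type*} [DecidableEq β] {C : ℕ} {t : Finset β} {f : ℤ → β}
    (hS : IsDenseIn S K A N) (hf : Set.MapsTo f S t) (ht : t.Nonempty) (htC : #t ≤ K ^ C) :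
    ∃ y ∈ t, IsDenseIn {x ∈ S | f x = y} K (A + C) N := by
  obtain ⟨y, hy, hcard⟩ := exists_card_le_card_mul_card_fiber hf ht
  exact ⟨y, hy, hS.of_subset (filter_subset _ S) (hcard.trans (by gcongr))⟩

theorem far_from (hK : 2 ≤ K) (hN : K ^ (A + 4) ≤ N) (hS : IsDenseIn S K A N) (x₀ : ℤ) :
    IsDenseIn {x ∈ S | (N : ℤ) ≤ K ^ (A + 4) * |x - x₀|} K (A + 1) N := by
  set H := K ^ (A + 4) with hH
  set far := {x ∈ S | (N : ℤ) ≤ K ^ (A + 4) * |x - x₀|}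
  set near := {x ∈ S | ¬ (N : ℤ) ≤ K ^ (A + 4) * |x - x₀|}
  have hHpos : 0 < H := by positivity
  have hnear : #near ≤ 2 * (N / H) + 1 := by
    have hsub : near ⊆ Icc (x₀ - (N / H : ℕ)) (x₀ + (N / H : ℕ)) := fun x hx => by
      have hx' : |x - x₀| ≤ (N / H : ℕ) := by
        rw [Int.natCast_div, Int.le_ediv_iff_mul_le (by exact_mod_cast hHpos), mul_comm, hH]
        push_cast
        exact (not_le.1 (mem_filter.1 hx).2).le
      have := _root_.abs_le.1 hx'
      rw [mem_Icc]
      lia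
    refine (card_le_card hsub).trans ?_
    rw [Int.card_Icc]
    lia
  have hsum : #far + #near = #S := card_filter_add_card_filter_not _
  refine ⟨(filter_subset _ S).trans hS.subset, ?_⟩
  have hHK : 2 ^ 4 * K ^ A ≤ H := two_pow_mul_pow_le hK 4 A
  have hdiv : N / H * (2 ^ 4 * K ^ A) ≤ N :=
    (by gcongr : _ ≤ N / H * H).trans (Nat.div_mul_le_self N H)
  have hKfar : 2 * (K ^ A * #far) ≤ K ^ (A + 1) * #far := by
    rw [pow_succ', mul_assoc]
    gcongr
  have hcard := hS.le_card
  rw [← hsum] at hcard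
  have : K ^ A * #near ≤ K ^ A * (2 * (N / H) + 1) := by gcongr
  lia

theorem card_le_of_lt_sub {H N : ℕ} (hH : 0 < H) {U : Finset ℤ} (hU : U ⊆ Icc (-(N : ℤ)) N)
    (hgap : ∀ x ∈ U, ∀ y ∈ U, x < y → (H : ℤ) < y - x) : #U ≤ 2 * (N / H) + 2 := by
  have hH' : (0 : ℤ) < H := by exact_mod_cast hH
  have hmaps : Set.MapsTo (· / (H : ℤ)) U (Icc (-((N / H : ℕ) : ℤ) - 1) (N / H : ℕ)) := by
    intro x hx
    obtain ⟨hlo, hhi⟩ := mem_Icc.1 (hU hx)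
    rw [mem_coe, mem_Icc, Int.natCast_div]
    refine ⟨(Int.le_ediv_iff_mul_le hH').2 ?_, Int.ediv_le_ediv hH' hhi⟩
    linarith [Int.lt_ediv_add_one_mul_self (N : ℤ) hH']
  have hinj : Set.InjOn (· / (H : ℤ)) U := fun x hx y hy hxy => by
    dsimp only at hxy
    have hx' := Int.mul_ediv_add_emod x H
    have hy' := Int.mul_ediv_add_emod y H
    rw [hxy] at hx'
    have := Int.emod_nonneg x hH'.ne'
    have := Int.emod_nonneg y hH'.ne'
    have := Int.emod_lt_of_pos x hH'
    have := Int.emod_lt_of_pos y hH'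
    rcases lt_trichotomy x y with h | h | h
    · linarith [hgap x hx y hy h]
    · exact h
    · linarith [hgap y hy x hx h]
  refine (card_le_card_of_injOn _ hmaps hinj).trans ?_
  rw [Int.card_Icc]
  lia

theorem exists_popular_difference (hK : 2 ≤ K) (hN : K ^ (A + 4) ≤ N) (hS : IsDenseIn S K A N) :
    ∃ h : ℤ, 1 ≤ h ∧ h ≤ K ^ (A + 4) ∧ IsDenseIn {x ∈ S | x + h ∈ S} K (2 * A + 5) N := by
  set H := K ^ (A + 4) with hH
  have hHpos : 0 < H := by positivity
  set close := {x ∈ S | ∃ h ∈ Icc (1 : ℤ) H, x + h ∈ S}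
  set isolated := {x ∈ S | ¬ ∃ h ∈ Icc (1 : ℤ) H, x + h ∈ S}
  have hisolated : #isolated ≤ 2 * (N / H) + 2 := by
    refine card_le_of_lt_sub hHpos ((filter_subset _ S).trans hS.subset) fun x hx y hy hxy => ?_
    by_contra! hyx
    exact (mem_filter.1 hx).2 ⟨y - x, mem_Icc.2 ⟨by lia, hyx⟩, by simpa using (mem_filter.1 hy).1⟩
  have hclose : #S ≤ 2 * #close := by
    have hsum : #close + #isolated = #S := card_filter_add_card_filter_not _
    have hHK : 2 ^ 4 * K ^ A ≤ H := two_pow_mul_pow_le hK 4 A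
    have hdiv : N / H * (2 ^ 4 * K ^ A) ≤ N :=
      (by gcongr : _ ≤ N / H * H).trans (Nat.div_mul_le_self N H)
    have : K ^ A * (2 * (2 * (N / H) + 2)) ≤ K ^ A * #S := by linarith [hS.le_card]
    have := Nat.le_of_mul_le_mul_left this (by positivity)
    lia
  choose! f hf using fun x (hx : x ∈ close) => (mem_filter.1 hx).2
  obtain ⟨h, hh, hcard⟩ := exists_card_le_card_mul_card_fiber (t := Icc (1 : ℤ) H)
    (fun x hx => (hf x hx).1) ⟨1, mem_Icc.2 ⟨le_rfl, by lia⟩⟩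
  rw [Int.card_Icc, add_sub_cancel_right, Int.toNat_natCast] at hcard
  rw [mem_Icc] at hh
  refine ⟨h, hh.1, by exact_mod_cast hh.2, (filter_subset _ S).trans hS.subset, ?_⟩
  have hfiber : {x ∈ close | f x = h} ⊆ {x ∈ S | x + h ∈ S} := fun x hx => by
    obtain ⟨hxc, rfl⟩ := mem_filter.1 hx
    exact mem_filter.2 ⟨filter_subset _ S hxc, (hf x hxc).2⟩
  calc N ≤ K ^ A * #S := hS.le_card
    _ ≤ K ^ A * (K * (H * #{x ∈ S | x + h ∈ S})) := by
      gcongr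
      exact hclose.trans (Nat.mul_le_mul hK (hcard.trans (by gcongr)))
    _ = K ^ (2 * A + 5) * #{x ∈ S | x + h ∈ S} := by
      rw [hH]
      ring

end IsDenseIn

theorem abs_coeff_C_add_X_sub_C_mul_le {c x₀ R N : ℝ} {g : ℝ[X]} (hN : 0 < N) (hc : |c| ≤ R)
    (hx₀ : |x₀| ≤ N) (hg : ∀ j, |g.coeff j| ≤ R / N ^ (j + 1)) (j : ℕ) :
    |(C c + (X - C x₀) * g).coeff j| ≤ 2 * (R / N ^ j) := by
  have hx₀g : |x₀ * g.coeff j| ≤ R / N ^ j := by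
    rw [abs_mul]
    calc |x₀| * |g.coeff j| ≤ N * (R / N ^ (j + 1)) := by gcongr; exact hg j
      _ = R / N ^ j := by rw [pow_succ', ← mul_div_assoc, mul_div_mul_left _ _ hN.ne']
  have hrest : |(C c + X * g).coeff j| ≤ R / N ^ j := by
    rcases j with _ | j
    · simpa using hc
    · simpa using hg j
  calc |(C c + (X - C x₀) * g).coeff j| = |(C c + X * g).coeff j - x₀ * g.coeff j| := by
        simp only [sub_mul, coeff_add, coeff_sub, coeff_C_mul, add_sub_assoc]
    _ ≤ |(C c + X * g).coeff j| + |x₀ * g.coeff j| := abs_sub _ _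
    _ ≤ 2 * (R / N ^ j) := by linarith

theorem abs_eval_divByMonic_X_sub_C_le {p : ℝ[X]} {x x₀ η N R : ℝ} (hN : 0 < N) (hR : 0 ≤ R)
    (hfar : N ≤ R * |x - x₀|) (hx : |p.eval x| ≤ η) (hx₀ : |p.eval x₀| ≤ η) :
    |(p /ₘ (X - C x₀)).eval x| ≤ R * (2 * (η / N)) := by
  have heval : (x - x₀) * (p /ₘ (X - C x₀)).eval x = p.eval x - p.eval x₀ := by
    conv_rhs => rw [← modByMonic_add_div p (X - C x₀), modByMonic_X_sub_C_eq_C_eval]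
    simp
  calc |(p /ₘ (X - C x₀)).eval x| ≤ |(p /ₘ (X - C x₀)).eval x| * (R * |x - x₀| / N) :=
        le_mul_of_one_le_right (abs_nonneg _) ((one_le_div₀ hN).2 hfar)
    _ = R * (|p.eval x - p.eval x₀| / N) := by
        rw [← heval, abs_mul]
        ring
    _ ≤ R * (2 * η / N) := by
        gcongr
        linarith [abs_sub (p.eval x) (p.eval x₀)]
    _ = R * (2 * (η / N)) := by ring

theorem exists_abs_coeff_le_of_abs_eval_le (d : ℕ) : ∀ A : ℕ, ∃ B : ℕ, ∀ K N : ℕ, 2 ≤ K →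
    K ^ B ≤ N → ∀ p : ℝ[X], p.natDegree ≤ d → ∀ S : Finset ℤ, IsDenseIn S K A N →
    ∀ η : ℝ, (∀ x ∈ S, |p.eval (x : ℝ)| ≤ η) → ∀ j, |p.coeff j| ≤ K ^ B * (η / N ^ j) := by
  induction d with
  | zero =>
    intro A
    refine ⟨0, fun K N hK hN p hp S hS η hpS j => ?_⟩
    obtain ⟨x, hx⟩ := hS.nonempty (by lia)
    have hη := hpS x hx
    rw [eq_C_of_natDegree_le_zero hp, eval_C] at hη
    have hη0 : 0 ≤ η := (abs_nonneg _).trans hη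
    rcases Nat.eq_zero_or_pos j with rfl | hj
    · simpa using hη
    · rw [coeff_eq_zero_of_natDegree_lt (hp.trans_lt hj), abs_zero]
      positivity
  | succ d ih =>
    intro A
    obtain ⟨B, hB⟩ := ih (A + 1)
    refine ⟨B + A + 6, fun K N hK hN p hp S hS η hpS j => ?_⟩
    have hN' : ∀ e ≤ B + A + 6, K ^ e ≤ N := fun e he =>
      (Nat.pow_le_pow_right (by lia) he).trans hN
    have hN0 : (0 : ℝ) < N := by exact_mod_cast (Nat.one_le_pow _ _ (by lia)).trans hN
    have hK2 : (2 : ℝ) ≤ K := by exact_mod_cast hK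
    obtain ⟨x₀, hx₀⟩ := hS.nonempty (by exact_mod_cast hN0)
    have hη0 : 0 ≤ η := (abs_nonneg _).trans (hpS x₀ hx₀)
    set g := p /ₘ (X - C (x₀ : ℝ))
    have hpg : p = C (p.eval (x₀ : ℝ)) + (X - C (x₀ : ℝ)) * g := by
      rw [← modByMonic_X_sub_C_eq_C_eval, modByMonic_add_div]
    have hgd : g.natDegree ≤ d := by
      rw [natDegree_divByMonic _ (monic_X_sub_C _), natDegree_X_sub_C]
      lia
    have hgS : ∀ x ∈ S.filter fun x => (N : ℤ) ≤ K ^ (A + 4) * |x - x₀|,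
        |g.eval (x : ℝ)| ≤ K ^ (A + 5) * (η / N) := fun x hx => by
      obtain ⟨hxS, hfar⟩ := mem_filter.1 hx
      have hfar' : (N : ℝ) ≤ K ^ (A + 4) * |(x : ℝ) - x₀| := by exact_mod_cast hfar
      calc |g.eval (x : ℝ)| ≤ K ^ (A + 4) * (2 * (η / N)) :=
            abs_eval_divByMonic_X_sub_C_le hN0 (by positivity) hfar' (hpS x hxS) (hpS x₀ hx₀)
        _ ≤ K ^ (A + 4) * (K * (η / N)) := by gcongr
        _ = K ^ (A + 5) * (η / N) := by ring
    have hg := hB K N hK (hN' _ (by lia)) g hgd _ (hS.far_from hK (hN' _ (by lia)) x₀) _ hgS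
    have hc : |p.eval (x₀ : ℝ)| ≤ K ^ (B + A + 5) * η :=
      (hpS x₀ hx₀).trans (le_mul_of_one_le_left hη0 (one_le_pow₀ (by linarith)))
    rw [hpg]
    calc _ ≤ 2 * (K ^ (B + A + 5) * η / N ^ j) :=
          abs_coeff_C_add_X_sub_C_mul_le hN0 hc (hS.abs_le hx₀) (fun j => (hg j).trans_eq (by
            field_simp
            ring)) j
      _ ≤ K * (K ^ (B + A + 5) * η / N ^ j) := by gcongr
      _ = K ^ (B + A + 6) * (η / N ^ j) := by ring

end

/-! ### Polynomials with differences or values in major arcs -/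

section

open Polynomial Finset

theorem natDegree_taylor_sub_self_le {R : Type*} [CommRing R] {p : R[X]} {d : ℕ}
    (hp : p.natDegree ≤ d + 1) (r : R) : (taylor r p - p).natDegree ≤ d := by
  refine natDegree_le_iff_coeff_eq_zero.2 fun n hn => ?_
  rw [coeff_sub, sub_eq_zero]
  rcases (by lia : p.natDegree ≤ n).eq_or_lt with rfl | hlt
  · exact coeff_taylor_natDegree r p
  · rw [coeff_eq_zero_of_natDegree_lt hlt,
      coeff_eq_zero_of_natDegree_lt (by rwa [natDegree_taylor])]

theorem coeff_taylor_sub_self {R : Type*} [CommRing R] {p : R[X]} {d : ℕ} (hp : p.natDegree ≤ d)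
    (r : R) (j : ℕ) : (taylor r p - p).coeff j =
      ∑ l ∈ range d, (l + 1 + j).choose j * p.coeff (l + 1 + j) * r ^ (l + 1) := by
  have hd : (hasseDeriv j p).natDegree < d + 1 := by
    have := natDegree_hasseDeriv_le p j
    lia
  rw [coeff_sub, taylor_coeff, eval_eq_sum_range' hd, sum_range_succ']
  simp [hasseDeriv_coeff]

theorem abs_choose_mul_pow_le {K C d i l : ℕ} {h : ℤ} (hK : 2 ≤ K) (h0 : 0 ≤ h)
    (hhK : h ≤ K ^ C) (hl : l + i ≤ d) :
    |((((l + i).choose i : ℕ) * h ^ l : ℤ) : ℝ)| ≤ (K : ℝ) ^ ((C + 1) * d) := by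
  rw [abs_of_nonneg (by positivity)]
  have hchoose : (l + i).choose i ≤ K ^ d := (Nat.choose_le_two_pow _ _).trans
    ((Nat.pow_le_pow_left hK _).trans (Nat.pow_le_pow_right (by lia) hl))
  have hpow : h ^ l ≤ (K : ℤ) ^ (C * d) := by
    calc h ^ l ≤ ((K : ℤ) ^ C) ^ l := by gcongr
      _ ≤ ((K : ℤ) ^ C) ^ d := pow_le_pow_right₀ (one_le_pow₀ (by lia)) (by lia)
      _ = (K : ℤ) ^ (C * d) := (pow_mul _ _ _).symm
  calc ((((l + i).choose i : ℕ) * h ^ l : ℤ) : ℝ) ≤ ((K ^ d : ℕ) * (K : ℤ) ^ (C * d) : ℤ) := by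
        gcongr
    _ = (K : ℝ) ^ ((C + 1) * d) := by
        push_cast
        ring

theorem isMajor_coeff_succ_of_taylor_sub_self {K B C d i : ℕ} {p : ℝ[X]} {h : ℤ} {η : ℝ}
    (hK : 2 ≤ K) (hη : 0 ≤ η) (hp : p.natDegree ≤ d) (hh : 1 ≤ h) (hhK : h ≤ K ^ C)
    (hΔ : IsMajor K B η ((taylor (h : ℝ) p - p).coeff i))
    (hhigh : ∀ l > i + 1, IsMajor K B η (p.coeff l)) :
    IsMajor K (((B + (C + 1) * d + 1) * d + 1) * 2 + (C + 1) * d) η (p.coeff (i + 1)) := by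
  have hK1 : 1 ≤ K := by lia
  by_cases hid : d < i + 1
  · rw [coeff_eq_zero_of_natDegree_lt (hp.trans_lt hid)]
    exact .zero hK1 hη
  obtain ⟨d, rfl⟩ := Nat.exists_eq_add_of_lt (by lia : 0 < d)
  rw [zero_add] at *
  set E := (C + 1) * (d + 1)
  set coef : ℕ → ℤ := fun l => ((l + i).choose i : ℕ) * h ^ l with hcoef
  have hterm : ∀ l ∈ range d, IsMajor K (B + E) η (coef (l + 2) • (p.coeff (l + 2 + i) :)) := by
    intro l _
    by_cases hl : l + 2 + i ≤ d + 1
    · exact (hhigh _ (by lia)).zsmul hK1 (abs_choose_mul_pow_le hK (by lia) hhK hl)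
    · rw [coeff_eq_zero_of_natDegree_lt (by lia)]
      simpa using IsMajor.zero hK1 hη
  have hlow : IsMajor K (((B + E + 1) * (d + 1) + 1) * 2) η (coef 1 • (p.coeff (i + 1) :)) := by
    have hsum := IsMajor.sum hK hη (range d) hterm
    rw [card_range] at hsum
    have hΔ' : IsMajor K ((B + E + 1) * (d + 1)) η ((taylor (h : ℝ) p - p).coeff i) :=
      hΔ.mono hK1 hη (by nlinarith)
    convert hΔ'.add hK hη (hsum.neg.mono hK1 hη (by gcongr; lia)) using 1
    rw [coeff_taylor_sub_self hp, sum_range_succ', ← unitAddCircle_coe_intCast_mul]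
    simp only [← unitAddCircle_coe_intCast_mul, ← unitAddCircle_coe_sum, ← AddCircle.coe_neg,
      ← AddCircle.coe_add, hcoef]
    congr 1
    push_cast
    rw [← sub_eq_add_neg, eq_sub_iff_add_eq']
    congr 1
    · exact sum_congr rfl fun l _ => by ring
    · ring_nf
  refine hlow.of_zsmul hK1 hη ?_ ?_
  · exact mul_ne_zero (by exact_mod_cast (Nat.choose_pos (by lia)).ne') (pow_ne_zero _ (by lia))
  · have := abs_choose_mul_pow_le (l := 1) hK (by lia) hhK (by lia : 1 + i ≤ d + 1)
    rw [← Int.cast_abs, ← Nat.cast_natAbs] at this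
    exact_mod_cast this

theorem exists_isMajor_coeff_succ_of_taylor_sub_self (d C B : ℕ) :
    ∃ B' : ℕ, ∀ K N : ℕ, 2 ≤ K → 1 ≤ N → ∀ p : ℝ[X], p.natDegree ≤ d →
      ∀ h : ℤ, 1 ≤ h → h ≤ K ^ C → ∀ ε : ℝ, 0 ≤ ε →
      (∀ j, IsMajor K B (ε / N ^ j) ((taylor (h : ℝ) p - p).coeff j)) →
      ∀ i, IsMajor K B' (ε / N ^ i) (p.coeff (i + 1)) := by
  suffices ∀ t : ℕ, ∃ B' : ℕ, ∀ K N : ℕ, 2 ≤ K → 1 ≤ N → ∀ p : ℝ[X], p.natDegree ≤ d →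
      ∀ h : ℤ, 1 ≤ h → h ≤ K ^ C → ∀ ε : ℝ, 0 ≤ ε →
      (∀ j, IsMajor K B (ε / N ^ j) ((taylor (h : ℝ) p - p).coeff j)) →
      ∀ i, d < i + 1 + t → IsMajor K B' (ε / N ^ i) (p.coeff (i + 1)) by
    obtain ⟨B', hB'⟩ := this d
    exact ⟨B', fun K N hK hN p hp h hh hhK ε hε hΔ i =>
      hB' K N hK hN p hp h hh hhK ε hε hΔ i (by lia)⟩
  intro t
  induction t with
  | zero =>
    refine ⟨0, fun K N hK _ p hp _ _ _ ε hε _ i hi => ?_⟩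
    rw [coeff_eq_zero_of_natDegree_lt (by lia)]
    exact .zero (by lia) (by positivity)
  | succ t ih =>
    obtain ⟨B', hB'⟩ := ih
    refine ⟨_, fun K N hK hN p hp h hh hhK ε hε hΔ i hi =>
      isMajor_coeff_succ_of_taylor_sub_self (B := max B B') hK (by positivity) hp hh hhK
        ((hΔ i).mono (by lia) (by positivity) (le_max_left _ _)) fun l hl => ?_⟩
    obtain ⟨l, rfl⟩ := Nat.exists_eq_add_of_lt hl
    have hmajor := hB' K N hK hN p hp h hh hhK ε hε hΔ (i + 1 + l) (by lia)
    refine (hmajor.mono (by lia) (by positivity) (le_max_right _ _)).mono_scale (by lia) ?_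
    have : (1 : ℝ) ≤ N := by exact_mod_cast hN
    gcongr
    lia

theorem exists_abs_coeff_sub_intCast_eq_norm (p : ℝ[X]) : ∃ r : ℤ[X], r.natDegree ≤ p.natDegree ∧
    ∀ j, |p.coeff j - r.coeff j| = ‖(p.coeff j : UnitAddCircle)‖ := by
  set r : ℤ[X] := ∑ i ∈ range (p.natDegree + 1), monomial i (round (p.coeff i)) with hr
  have hcoeff : ∀ j, r.coeff j = round (p.coeff j) := fun j => by
    rw [hr, finsetSum_coeff]
    simp only [coeff_monomial, sum_ite_eq', mem_range]
    split_ifs with hj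
    · rfl
    · rw [coeff_eq_zero_of_natDegree_lt (by lia), round_zero]
  refine ⟨r, natDegree_le_iff_coeff_eq_zero.2 fun j hj => ?_, fun j => ?_⟩
  · rw [hcoeff, coeff_eq_zero_of_natDegree_lt hj, round_zero]
  · rw [hcoeff, UnitAddCircle.norm_eq]

theorem round_mem_Icc_of_abs_le {x : ℝ} {n : ℕ} (hx : |x| ≤ n) :
    round x ∈ Icc (-(n : ℤ)) n := by
  obtain ⟨hlo, hhi⟩ := abs_le.1 hx
  obtain ⟨hlo', hhi'⟩ := abs_le.1 (abs_sub_round x)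
  have : (-(n : ℤ) : ℝ) - 1 < round x := by push_cast; linarith
  have : (round x : ℝ) < (n : ℤ) + 1 := by push_cast; linarith
  rw [mem_Icc]
  norm_cast at *
  lia

theorem abs_eval_le_of_forall_abs_coeff_mul_pow_le {p : ℝ[X]} {d : ℕ} (hp : p.natDegree ≤ d)
    {x N R : ℝ} (hx : |x| ≤ N) (hcoeff : ∀ i, |p.coeff i| * N ^ i ≤ R) :
    |p.eval x| ≤ (d + 1 : ℕ) * R := by
  rw [eval_eq_sum_range' (Nat.lt_succ_of_le hp)]
  calc |∑ i ∈ range (d + 1), p.coeff i * x ^ i| ≤ ∑ _i ∈ range (d + 1), R := by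
        refine (abs_sum_le_sum_abs _ _).trans (sum_le_sum fun i _ => ?_)
        rw [abs_mul, abs_pow]
        exact (by gcongr : _ ≤ |p.coeff i| * N ^ i).trans (hcoeff i)
    _ = (d + 1 : ℕ) * R := by rw [sum_const, card_range, nsmul_eq_mul]

theorem exists_norm_coeff_le_of_norm_eval_le (d A : ℕ) : ∃ B : ℕ, ∀ K N : ℕ, 2 ≤ K → K ^ B ≤ N →
    ∀ p : ℝ[X], p.natDegree ≤ d → ∀ S : Finset ℤ, IsDenseIn S K A N → ∀ ε : ℝ, ε * N ≤ K ^ A →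
    (∀ x ∈ S, ‖((p.eval (x : ℝ) : ℝ) : UnitAddCircle)‖ ≤ ε) →
    (∀ i, ‖(p.coeff (i + 1) : UnitAddCircle)‖ ≤ ε / N ^ i) →
    ∀ j, ‖(p.coeff j : UnitAddCircle)‖ ≤ K ^ B * (ε / N ^ j) := by
  obtain ⟨B, hB⟩ := exists_abs_coeff_le_of_abs_eval_le d (A + (A + d + 3))
  refine ⟨B, fun K N hK hN p hp S hS ε hεN hpS hcoeff j => ?_⟩
  have hN0 : (0 : ℝ) < N := by exact_mod_cast (Nat.one_le_pow _ _ (by lia)).trans hN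
  have hK1 : (1 : ℝ) ≤ K := by exact_mod_cast (by lia : 1 ≤ K)
  obtain ⟨r, hr, hpr⟩ := exists_abs_coeff_sub_intCast_eq_norm p
  set s := p - r.map (Int.castRingHom ℝ)
  have hs : ∀ j, s.coeff j = p.coeff j - r.coeff j := fun j => by simp [s]
  have hseval : ∀ x : ℤ, s.eval (x : ℝ) = p.eval (x : ℝ) - (r.eval x : ℤ) := fun x => by simp [s]
  have hsd : s.natDegree ≤ d :=
    (natDegree_sub_le_of_le hp (natDegree_map_le.trans (hr.trans hp))).trans_eq (max_self d)
  have hterm : ∀ j, |s.coeff j| * N ^ j ≤ K ^ A := fun j => by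
    rw [hs, hpr]
    rcases j with _ | i
    · have := UnitAddCircle.norm_eq.trans_le (abs_sub_round (p.coeff 0))
      linarith [one_le_pow₀ hK1 (n := A)]
    · calc _ ≤ ε / N ^ i * N ^ (i + 1) := by gcongr; exact hcoeff i
        _ = ε * N := by field_simp; ring
        _ ≤ K ^ A := hεN
  have hsS : ∀ x ∈ S, |s.eval (x : ℝ)| ≤ (K ^ (A + d + 1) : ℕ) := fun x hx =>
    calc |s.eval (x : ℝ)| ≤ (d + 1 : ℕ) * (K : ℝ) ^ A :=
          abs_eval_le_of_forall_abs_coeff_mul_pow_le hsd (hS.abs_le hx) hterm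
      _ ≤ (K : ℝ) ^ (d + 1) * K ^ A := by
          gcongr
          exact_mod_cast (Nat.lt_pow_self (by lia)).le
      _ = (K ^ (A + d + 1) : ℕ) := by push_cast; ring
  obtain ⟨c, -, hc⟩ := hS.exists_fiber (f := fun x => round (s.eval (x : ℝ)))
    (fun x hx => mem_coe.2 (round_mem_Icc_of_abs_le (hsS x hx))) (nonempty_Icc.2 (by lia))
    (C := A + d + 3) (by
      rw [Int.card_Icc]
      have := two_pow_mul_pow_le hK 2 (A + d + 1)
      have := Nat.one_le_pow (A + d + 1) K (by lia)
      lia)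
  have hfiber : ∀ x ∈ S.filter fun x : ℤ => round (s.eval (x : ℝ)) = c,
      |(s - C (c : ℝ)).eval (x : ℝ)| ≤ ε := fun x hx => by
    obtain ⟨hxS, rfl⟩ := mem_filter.1 hx
    have hcirc : ((s.eval (x : ℝ) : ℝ) : UnitAddCircle) = p.eval (x : ℝ) := by
      rw [hseval, AddCircle.coe_sub, sub_eq_self]
      exact unitAddCircle_coe_intCast _
    rw [eval_sub, eval_C, ← UnitAddCircle.norm_eq, hcirc]
    exact hpS x hxS
  refine le_trans ?_ (hB K N hK hN (s - C (c : ℝ)) (by rwa [natDegree_sub_C]) _ hc ε hfiber j)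
  refine (unitAddCircle_norm_coe_le_abs_sub _ ((r + C c).coeff j)).trans_eq (congrArg abs ?_)
  rw [coeff_sub, hs, coeff_add, coeff_C, coeff_C]
  split_ifs <;> push_cast <;> ring

theorem exists_isMajor_coeff_of_isMajor_coeff_succ (d A B : ℕ) : ∃ B' : ℕ, ∀ K N : ℕ, 2 ≤ K →
    K ^ B' ≤ N → ∀ p : ℝ[X], p.natDegree ≤ d → ∀ S : Finset ℤ, IsDenseIn S K A N →
    ∀ ε : ℝ, ε * N ≤ K ^ A → (∀ x ∈ S, ‖((p.eval (x : ℝ) : ℝ) : UnitAddCircle)‖ ≤ ε) →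
    (∀ i, IsMajor K B (ε / N ^ i) (p.coeff (i + 1))) →
    ∀ j, IsMajor K B' (ε / N ^ j) (p.coeff j) := by
  set b := B * d with hb
  obtain ⟨B', hB'⟩ := exists_norm_coeff_le_of_norm_eval_le d (A + b)
  refine ⟨B' + b, fun K N hK hN p hp S hS ε hεN hpS hmajor j => ?_⟩
  have hN' : ∀ e ≤ B' + b, K ^ e ≤ N := fun e he => (Nat.pow_le_pow_right (by lia) he).trans hN
  obtain ⟨x₀, hx₀⟩ := hS.nonempty ((Nat.one_le_pow _ _ (by lia)).trans hN)
  have hε0 : 0 ≤ ε := (norm_nonneg _).trans (hpS x₀ hx₀)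
  obtain ⟨q, hq, hqb, hqp⟩ := IsMajor.exists_common_denominator (range d) fun i _ => hmajor i
  rw [card_range, ← hb] at hqb hqp
  have hcoe : ∀ j, ((C (q : ℝ) * p).coeff j : UnitAddCircle) = q • (p.coeff j :) := fun j => by
    rw [coeff_C_mul, unitAddCircle_coe_natCast_mul]
  have hfinal := hB' K N hK (hN' _ (by lia)) (C (q : ℝ) * p) ((natDegree_C_mul_le _ _).trans hp) S
    (hS.mono (by lia) (by lia)) (K ^ b * ε)
    (by
      calc (K : ℝ) ^ b * ε * N = K ^ b * (ε * N) := by ring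
        _ ≤ K ^ b * K ^ A := by gcongr
        _ = K ^ (A + b) := by ring)
    (fun x hx => by
      rw [eval_mul, eval_C, unitAddCircle_coe_natCast_mul]
      exact norm_nsmul_le.trans (by gcongr; exacts [by exact_mod_cast hqb, hpS x hx]))
    (fun i => by
      rw [hcoe, mul_div_assoc]
      by_cases hi : i ∈ range d
      · exact hqp i hi
      · rw [mem_range, not_lt] at hi
        rw [coeff_eq_zero_of_natDegree_lt (by lia)]
        simpa using by positivity) j
  rw [hcoe] at hfinal
  refine ⟨q, hq, hqb.trans (Nat.pow_le_pow_right (by lia) (by lia)), hfinal.trans_eq ?_⟩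
  ring

theorem exists_isMajor_coeff_of_norm_eval_le (d : ℕ) : ∀ A : ℕ, ∃ B : ℕ, ∀ K N : ℕ, 2 ≤ K →
    K ^ B ≤ N → ∀ p : ℝ[X], p.natDegree ≤ d → ∀ S : Finset ℤ, IsDenseIn S K A N →
    ∀ ε : ℝ, ε * N ≤ K ^ A → (∀ x ∈ S, ‖((p.eval (x : ℝ) : ℝ) : UnitAddCircle)‖ ≤ ε) →
    ∀ j, IsMajor K B (ε / N ^ j) (p.coeff j) := by
  induction d with
  | zero =>
    intro A
    refine ⟨0, fun K N hK hN p hp S hS ε _ hpS j => ?_⟩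
    obtain ⟨x, hx⟩ := hS.nonempty (by lia)
    have hε := hpS x hx
    rw [eq_C_of_natDegree_le_zero hp, eval_C] at hε
    rcases Nat.eq_zero_or_pos j with rfl | hj
    · exact ⟨1, one_pos, le_rfl, by simpa using hε⟩
    · rw [coeff_eq_zero_of_natDegree_lt (hp.trans_lt hj)]
      have := (norm_nonneg _).trans hε
      exact .zero (by lia) (by positivity)
  | succ d ih =>
    intro A
    obtain ⟨B₁, hB₁⟩ := ih (2 * A + 5)
    obtain ⟨B₂, hB₂⟩ := exists_isMajor_coeff_succ_of_taylor_sub_self (d + 1) (A + 4) B₁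
    obtain ⟨B₃, hB₃⟩ := exists_isMajor_coeff_of_isMajor_coeff_succ (d + 1) A (B₂ + 1)
    refine ⟨B₁ + B₃ + A + 4, fun K N hK hN p hp S hS ε hεN hpS j => ?_⟩
    have hN' : ∀ e ≤ B₁ + B₃ + A + 4, K ^ e ≤ N := fun e he =>
      (Nat.pow_le_pow_right (by lia) he).trans hN
    have hN1 : 1 ≤ N := (Nat.one_le_pow _ _ (by lia)).trans hN
    have hK2 : (2 : ℝ) ≤ K := by exact_mod_cast hK
    obtain ⟨x₀, hx₀⟩ := hS.nonempty hN1
    have hε0 : 0 ≤ ε := (norm_nonneg _).trans (hpS x₀ hx₀)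
    obtain ⟨h, hh, hhK, hSh⟩ := hS.exists_popular_difference hK (hN' _ (by lia))
    have hΔ := hB₁ K N hK (hN' _ (by lia)) _ (natDegree_taylor_sub_self_le hp (h : ℝ)) _ hSh (2 * ε)
      (by
        calc 2 * ε * N = 2 * (ε * N) := by ring
          _ ≤ K * K ^ A := by gcongr
          _ = K ^ (A + 1) := by ring
          _ ≤ K ^ (2 * A + 5) := pow_le_pow_right₀ (by linarith) (by lia))
      (fun x hx => by
        obtain ⟨hx, hxh⟩ := mem_filter.1 hx
        have hxh := hpS _ hxh
        push_cast at hxh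
        rw [eval_sub, taylor_eval, AddCircle.coe_sub]
        refine (norm_sub_le _ _).trans ?_
        linarith [hpS x hx])
    have hmajor : ∀ i, IsMajor K (B₂ + 1) (ε / N ^ i) (p.coeff (i + 1)) := fun i =>
      (hB₂ K N hK hN1 p hp h hh hhK (2 * ε) (by positivity) hΔ i).rescale (by lia) (by
        rw [mul_div_assoc, pow_one]
        gcongr)
    exact (hB₃ K N hK (hN' _ (by lia)) p hp S hS ε hεN hpS hmajor j).mono (by lia) (by positivity)
      (by lia)

end

/-! ### Exponential sums over intervals -/

section

open Polynomial Finset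

open scoped ComplexConjugate

theorem eC_eq_exp_I_mul (x : ℝ) : eC x = Complex.exp (Complex.I * (2 * Real.pi * x : ℝ)) := by
  rw [eC]
  congr 1
  push_cast
  ring

theorem norm_eC (x : ℝ) : ‖eC x‖ = 1 := by
  rw [eC_eq_exp_I_mul, mul_comm]
  exact Complex.norm_exp_ofReal_mul_I _

theorem eC_add (x y : ℝ) : eC (x + y) = eC x * eC y := by
  simp only [eC, ← Complex.exp_add, Complex.ofReal_add, mul_add]

theorem eC_add_intCast (x : ℝ) (n : ℤ) : eC (x + n) = eC x := by
  rw [eC_add, mul_eq_left₀ (norm_ne_zero_iff.1 (by simp [norm_eC])), eC,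
    ← Complex.exp_int_mul_two_pi_mul_I n]
  congr 1
  push_cast
  ring

theorem eC_mul_natCast (x : ℝ) (n : ℕ) : eC (x * n) = eC x ^ n := by
  rw [eC, eC, ← Complex.exp_nat_mul]
  congr 1
  push_cast
  ring

theorem conj_eC (x : ℝ) : conj (eC x) = eC (-x) := by
  simp [eC, ← Complex.exp_conj, Complex.conj_ofNat]

theorem norm_eC_sub_eC_le (x y : ℝ) : ‖eC x - eC y‖ ≤ 7 * ‖((x - y : ℝ) : UnitAddCircle)‖ := by
  set δ := x - y - round (x - y)
  have hfactor : eC x - eC y = eC y * (eC δ - 1) := by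
    rw [mul_sub, mul_one, ← eC_add, ← eC_add_intCast (y + δ) (round (x - y))]
    congr 2
    ring
  rw [hfactor, norm_mul, norm_eC, one_mul, eC_eq_exp_I_mul, UnitAddCircle.norm_eq]
  refine Real.norm_exp_I_mul_ofReal_sub_one_le.trans ?_
  rw [Real.norm_eq_abs, abs_mul, abs_of_pos Real.two_pi_pos]
  gcongr
  linarith [Real.pi_lt_d2]

theorem four_mul_norm_le_norm_eC_sub_one (x : ℝ) :
    4 * ‖(x : UnitAddCircle)‖ ≤ ‖eC x - 1‖ := by
  set δ := x - round x with hδ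
  have hx : eC x = eC δ := by rw [← eC_add_intCast δ (round x), hδ, sub_add_cancel]
  have hπδ : |Real.pi * δ| = Real.pi * |δ| := by rw [abs_mul, abs_of_pos Real.pi_pos]
  have hsin := Real.mul_abs_le_abs_sin (x := Real.pi * δ) (by
    rw [hπδ]
    nlinarith [abs_sub_round x, Real.pi_pos])
  rw [hπδ, ← mul_assoc, div_mul_cancel₀ _ Real.pi_ne_zero] at hsin
  rw [UnitAddCircle.norm_eq, hx, eC_eq_exp_I_mul, Complex.norm_exp_I_mul_ofReal_sub_one, norm_mul,
    Real.norm_two, Real.norm_eq_abs, (by ring : 2 * Real.pi * δ / 2 = Real.pi * δ)]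
  linarith

theorem norm_sum_range_eC_mul_norm_le_one (x : ℝ) (n : ℕ) :
    ‖∑ t ∈ range n, eC (x * t)‖ * ‖(x : UnitAddCircle)‖ ≤ 1 := by
  simp_rw [eC_mul_natCast]
  have hgeom : ‖eC x - 1‖ * ‖∑ t ∈ range n, eC x ^ t‖ ≤ 1 + 1 := by
    rw [← norm_mul, mul_geom_sum]
    exact (norm_sub_le _ _).trans_eq (by rw [norm_pow, norm_eC, one_pow, norm_one])
  have : 4 * ‖(x : UnitAddCircle)‖ * ‖∑ t ∈ range n, eC x ^ t‖ ≤ 1 + 1 :=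
    (mul_le_mul_of_nonneg_right (four_mul_norm_le_norm_eC_sub_one x) (norm_nonneg _)).trans hgeom
  linarith

theorem norm_sum_eC_le_card {ι : Type*} (s : Finset ι) (θ : ι → ℝ) : ‖∑ x ∈ s, eC (θ x)‖ ≤ #s := by
  simpa using norm_sum_le_of_le s fun i _ => (norm_eC (θ i)).le

theorem le_pow_mul_card_filter_of_le_sum {ι : Type*} {s : Finset ι} {f : ι → ℝ} {A c e : ℕ}
    {K X Y : ℝ} (hK : 2 ≤ K) (hX : 0 < X) (hY : 0 < Y) (hs : #s ≤ K ^ c * X)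
    (hf : ∀ i ∈ s, f i ≤ K ^ e * Y) (hsum : X * Y ≤ K ^ A * ∑ i ∈ s, f i) :
    X ≤ K ^ (A + e + 1) * #{i ∈ s | Y ≤ K ^ (A + c + 1) * f i} := by
  set popular := {i ∈ s | Y ≤ K ^ (A + c + 1) * f i}
  set rare := {i ∈ s | ¬ Y ≤ K ^ (A + c + 1) * f i}
  have hpopular : ∑ i ∈ popular, f i ≤ #popular * (K ^ e * Y) := by
    rw [← nsmul_eq_mul]
    exact sum_le_card_nsmul _ _ _ fun i hi => hf i (filter_subset _ s hi)
  have hrare : K ^ c * (K ^ (A + 1) * ∑ i ∈ rare, f i) ≤ K ^ c * (X * Y) := by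
    calc K ^ c * (K ^ (A + 1) * ∑ i ∈ rare, f i) = ∑ i ∈ rare, K ^ (A + c + 1) * f i := by
          rw [← mul_sum]
          ring
      _ ≤ #rare * Y := by
          rw [← nsmul_eq_mul]
          exact sum_le_card_nsmul _ _ _ fun i hi => (not_le.1 (mem_filter.1 hi).2).le
      _ ≤ #s * Y := by gcongr; exact filter_subset _ s
      _ ≤ K ^ c * X * Y := by gcongr
      _ = K ^ c * (X * Y) := mul_assoc _ _ _
  replace hrare := le_of_mul_le_mul_left hrare (by positivity)
  refine le_of_mul_le_mul_right ?_ hY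
  rw [← sum_filter_add_sum_filter_not s fun i => Y ≤ K ^ (A + c + 1) * f i] at hsum
  have : K * (X * Y) ≤ K ^ (A + 1) * (#popular * (K ^ e * Y)) + X * Y := by
    calc K * (X * Y) ≤ K * (K ^ A * (∑ i ∈ popular, f i + ∑ i ∈ rare, f i)) := by gcongr
      _ = K ^ (A + 1) * ∑ i ∈ popular, f i + K ^ (A + 1) * ∑ i ∈ rare, f i := by ring
      _ ≤ _ := by gcongr
  calc X * Y ≤ K * (X * Y) - X * Y := by nlinarith [mul_pos hX hY]
    _ ≤ K ^ (A + 1) * (#popular * (K ^ e * Y)) := by linarith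
    _ = K ^ (A + e + 1) * #popular * Y := by ring

theorem norm_sum_Icc_sq_le (z : ℤ → ℂ) (u v : ℤ) :
    ‖∑ x ∈ Icc u v, z x‖ ^ 2 ≤ ∑ h ∈ Icc (u - v) (v - u),
      ‖∑ x ∈ Icc (max u (u - h)) (min v (v - h)), z (x + h) * conj (z x)‖ := by
  have hsq : ((‖∑ x ∈ Icc u v, z x‖ ^ 2 : ℝ) : ℂ) = ∑ h ∈ Icc (u - v) (v - u),
      ∑ x ∈ Icc (max u (u - h)) (min v (v - h)), z (x + h) * conj (z x) := by
    push_cast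
    rw [← Complex.conj_mul', map_sum, sum_mul_sum, sum_sigma', sum_sigma']
    refine sum_bij' (fun a _ => ⟨a.2 - a.1, a.1⟩) (fun b _ => ⟨b.2, b.2 + b.1⟩) ?_ ?_ ?_ ?_ ?_
    · simp only [mem_sigma, mem_Icc]
      lia
    · simp only [mem_sigma, mem_Icc]
      lia
    · simp
    · simp
    · simp [mul_comm]
  rw [← Complex.norm_of_nonneg (sq_nonneg ‖∑ x ∈ Icc u v, z x‖), hsq]
  exact norm_sum_le _ _

theorem exists_isDenseIn_le_norm_sum_eC_difference {A K N : ℕ} (hK : 2 ≤ K) (hN : 1 ≤ N)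
    {θ : ℤ → ℝ} {u v : ℤ} (hu : -(N : ℤ) ≤ u) (hv : v ≤ N)
    (hθ : N ≤ K ^ A * ‖∑ x ∈ Icc u v, eC (θ x)‖) :
    ∃ S, IsDenseIn S K (2 * A + 4) (2 * N) ∧ ∀ h ∈ S, ∃ u' v' : ℤ, -(N : ℤ) ≤ u' ∧ v' ≤ N ∧
      N ≤ K ^ (2 * A + 4) * ‖∑ x ∈ Icc u' v', eC (θ (x + h) - θ x)‖ := by
  have hK2 : (2 : ℝ) ≤ K := by exact_mod_cast hK
  have hN0 : (0 : ℝ) < N := by exact_mod_cast hN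
  have hcard : ∀ {u v : ℤ} {n : ℕ}, v - u < 2 ^ n * N →
      (#(Icc u v) : ℝ) ≤ (K : ℝ) ^ n * N := fun {u v n} huv => by
    have : (#(Icc u v) : ℝ) ≤ 2 ^ n * N := by
      rw [Int.card_Icc]
      exact_mod_cast (by lia : (v + 1 - u).toNat ≤ 2 ^ n * N)
    exact this.trans (by gcongr)
  set T : ℤ → ℂ := fun h => ∑ x ∈ Icc (max u (u - h)) (min v (v - h)), eC (θ (x + h) - θ x)
  have hvdc : ‖∑ x ∈ Icc u v, eC (θ x)‖ ^ 2 ≤ ∑ h ∈ Icc (u - v) (v - u), ‖T h‖ := by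
    simpa only [T, conj_eC, ← eC_add, ← sub_eq_add_neg] using
      norm_sum_Icc_sq_le (fun x => eC (θ x)) u v
  have hmany := le_pow_mul_card_filter_of_le_sum (s := Icc (u - v) (v - u)) (f := fun h => ‖T h‖)
    (A := 2 * A) (c := 3) (e := 2) hK2 hN0 hN0 (hcard (by lia))
    (fun h _ => (norm_sum_eC_le_card _ _).trans
      (hcard (u := max u (u - h)) (v := min v (v - h)) (by lia)))
    (by
      calc (N : ℝ) * N ≤ (K ^ A * ‖∑ x ∈ Icc u v, eC (θ x)‖) *
            (K ^ A * ‖∑ x ∈ Icc u v, eC (θ x)‖) := by gcongr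
        _ = K ^ (2 * A) * ‖∑ x ∈ Icc u v, eC (θ x)‖ ^ 2 := by ring
        _ ≤ K ^ (2 * A) * ∑ h ∈ Icc (u - v) (v - u), ‖T h‖ := by gcongr)
  refine ⟨{h ∈ Icc (u - v) (v - u) | (N : ℝ) ≤ K ^ (2 * A + 4) * ‖T h‖},
    ⟨(filter_subset _ _).trans (Icc_subset_Icc ?_ ?_), ?_⟩, fun h hh =>
    ⟨max u (u - h), min v (v - h), by lia, by lia, (mem_filter.1 hh).2⟩⟩
  · push_cast; lia
  · push_cast; lia
  · rw [pow_succ', mul_assoc]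
    exact Nat.mul_le_mul hK (by exact_mod_cast hmany)

theorem norm_sum_Icc_sub_sum_Icc_add_one_le {z : ℤ → ℂ} (hz : ∀ x, ‖z x‖ ≤ 1) (u v : ℤ) :
    ‖∑ x ∈ Icc u v, z x - ∑ x ∈ Icc u v, z (x + 1)‖ ≤ 2 := by
  rcases lt_or_ge v u with huv | huv
  · simp [Icc_eq_empty_of_lt huv]
  · have htelescope : ∑ x ∈ Icc u v, z x - ∑ x ∈ Icc u v, z (x + 1) = z u - z (v + 1) := by
      have hshift : ∑ x ∈ Icc u v, z (x + 1) = ∑ x ∈ Icc (u + 1) (v + 1), z x := by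
        rw [← map_add_right_Icc, sum_map]
        rfl
      have hleft : Icc u v = insert u (Icc (u + 1) v) := by ext; simp; lia
      have hright : Icc (u + 1) (v + 1) = insert (v + 1) (Icc (u + 1) v) := by ext; simp; lia
      rw [hshift, hleft, hright, sum_insert (by simp), sum_insert (by simp)]
      ring
    rw [htelescope]
    exact (norm_sub_le _ _).trans (by linarith [hz u, hz (v + 1)])

theorem norm_sum_Icc_sub_sum_Icc_add_natCast_le {z : ℤ → ℂ} (hz : ∀ x, ‖z x‖ ≤ 1) (u v : ℤ)
    (n : ℕ) : ‖∑ x ∈ Icc u v, z x - ∑ x ∈ Icc u v, z (x + n)‖ ≤ 2 * n := by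
  induction n with
  | zero => simp
  | succ n ih =>
    have hstep := norm_sum_Icc_sub_sum_Icc_add_one_le (z := fun x => z (x + n)) (fun x => hz _) u v
    simp only [add_right_comm _ (1 : ℤ)] at hstep
    rw [← sub_add_sub_cancel _ (∑ x ∈ Icc u v, z (x + n))]
    push_cast
    simp only [← add_assoc]
    exact (norm_add_le _ _).trans (by linarith)

theorem natCast_mul_norm_sum_Icc_le {z : ℤ → ℂ} (hz : ∀ x, ‖z x‖ ≤ 1) (u v : ℤ) (q T : ℕ) :
    T * ‖∑ x ∈ Icc u v, z x‖ ≤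
      T * (2 * (q * T)) + ∑ x ∈ Icc u v, ‖∑ t ∈ range T, z (x + (q * t : ℕ))‖ := by
  have hsplit : T * ∑ x ∈ Icc u v, z x =
      ∑ t ∈ range T, (∑ x ∈ Icc u v, z x - ∑ x ∈ Icc u v, z (x + (q * t : ℕ))) +
        ∑ x ∈ Icc u v, ∑ t ∈ range T, z (x + (q * t : ℕ)) := by
    rw [sum_comm (s := Icc u v), ← sum_add_distrib]
    simp
  have hshift : ∀ t ∈ range T,
      ‖∑ x ∈ Icc u v, z x - ∑ x ∈ Icc u v, z (x + (q * t : ℕ))‖ ≤ 2 * (q * T) := fun t ht => by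
    refine (norm_sum_Icc_sub_sum_Icc_add_natCast_le hz u v (q * t)).trans ?_
    push_cast
    gcongr
    exact (mem_range.1 ht).le
  calc T * ‖∑ x ∈ Icc u v, z x‖ = ‖T * ∑ x ∈ Icc u v, z x‖ := by rw [norm_mul, Complex.norm_natCast]
    _ ≤ _ := by
      rw [hsplit]
      refine (norm_add_le _ _).trans (add_le_add ?_ (norm_sum_le _ _))
      simpa using norm_sum_le_of_le _ hshift

theorem exists_mem_Icc_le_norm_sum_range {z : ℤ → ℂ} (hz : ∀ x, ‖z x‖ ≤ 1) {N q T : ℕ}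
    (hN : 1 ≤ N) {u v : ℤ} (hu : -(N : ℤ) ≤ u) (hv : v ≤ N) {C : ℝ} (hC : 0 ≤ C)
    (hqT : 4 * C * (q * T) ≤ N) (hsum : N ≤ C * ‖∑ x ∈ Icc u v, z x‖) :
    ∃ x ∈ Icc u v, T ≤ 8 * C * ‖∑ t ∈ range T, z (x + (q * t : ℕ))‖ := by
  have hN0 : (0 : ℝ) < N := by exact_mod_cast hN
  have hne : (Icc u v).Nonempty := by
    rw [nonempty_iff_ne_empty]
    intro hempty
    rw [hempty, sum_empty, norm_zero, mul_zero] at hsum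
    exact hsum.not_gt hN0
  refine exists_le_of_sum_le hne ?_
  have hcard : (#(Icc u v) : ℝ) ≤ 4 * N := by
    rw [Int.card_Icc]
    exact_mod_cast (by lia : (v + 1 - u).toNat ≤ 4 * N)
  have havg := mul_le_mul_of_nonneg_left (natCast_mul_norm_sum_Icc_le hz u v q T) hC
  have hsumT := mul_le_mul_of_nonneg_right hsum (Nat.cast_nonneg T)
  have hqTT := mul_le_mul_of_nonneg_right hqT (Nat.cast_nonneg T)
  rw [sum_const, nsmul_eq_mul, ← mul_sum]
  calc (#(Icc u v) : ℝ) * T ≤ 4 * N * T := by gcongr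
    _ ≤ _ := by linarith

theorem natCast_mul_norm_coe_le_of_le_norm_sum_eC {T : ℕ} {θ : ℕ → ℝ} {y c δ C : ℝ} (hC : 0 ≤ C)
    (hθ : ∀ t ∈ range T, ‖((θ t - (y + c * t) : ℝ) : UnitAddCircle)‖ ≤ δ) (hδ : 14 * C * δ ≤ 1)
    (hsum : T ≤ C * ‖∑ t ∈ range T, eC (θ t)‖) : T * ‖(c : UnitAddCircle)‖ ≤ 2 * C := by
  have hlinear : ‖∑ t ∈ range T, eC (θ t)‖ ≤ ‖∑ t ∈ range T, eC (c * t)‖ + T * (7 * δ) := by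
    have hsplit : ∑ t ∈ range T, eC (θ t) =
        eC y * ∑ t ∈ range T, eC (c * t) + ∑ t ∈ range T, (eC (θ t) - eC (y + c * t)) := by
      simp_rw [eC_add y, mul_sum, ← sum_add_distrib, add_sub_cancel]
    rw [hsplit]
    refine (norm_add_le _ _).trans (add_le_add (by rw [norm_mul, norm_eC, one_mul]) ?_)
    refine (norm_sum_le_of_le (n := fun _ => 7 * δ) _ fun t ht => ?_).trans_eq (by simp)
    exact (norm_eC_sub_eC_le _ _).trans (by gcongr; exact hθ t ht)
  have hT : T ≤ 2 * C * ‖∑ t ∈ range T, eC (c * t)‖ := by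
    have := mul_le_mul_of_nonneg_left hlinear hC
    have := mul_le_mul_of_nonneg_right hδ (Nat.cast_nonneg T)
    linarith
  calc T * ‖(c : UnitAddCircle)‖
      ≤ 2 * C * ‖∑ t ∈ range T, eC (c * t)‖ * ‖(c : UnitAddCircle)‖ := by gcongr
    _ = 2 * C * (‖∑ t ∈ range T, eC (c * t)‖ * ‖(c : UnitAddCircle)‖) := by ring
    _ ≤ 2 * C * 1 := by gcongr; exact norm_sum_range_eC_mul_norm_le_one c T
    _ = 2 * C := mul_one _

theorem norm_coe_mul_add_pow_sub_pow_le {c δ M : ℝ} {q : ℕ} (hc : ‖q • (c : UnitAddCircle)‖ ≤ δ)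
    {x t : ℤ} (hx : |(x : ℝ)| ≤ M) (hxt : |(x + q * t : ℝ)| ≤ M) (n : ℕ) :
    ‖((c * ((x + q * t) ^ (n + 1) - x ^ (n + 1)) : ℝ) : UnitAddCircle)‖ ≤
      |(t : ℝ)| * ((n + 1) * M ^ n) * δ := by
  have hM : 0 ≤ M := (abs_nonneg _).trans hx
  set m : ℤ := ∑ i ∈ range (n + 1), (x + q * t) ^ i * x ^ (n - i) with hm
  have hpow : ((x + q * t : ℝ) ^ (n + 1) - x ^ (n + 1)) = m * (q * t) := by
    rw [← Commute.geom_sum₂_mul (Commute.all _ _), add_sub_cancel_left]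
    simp [hm]
  have hmabs : |(m : ℝ)| ≤ (n + 1) * M ^ n := by
    rw [hm, Int.cast_sum]
    refine (abs_sum_le_sum_abs _ _).trans
      ((sum_le_sum (g := fun _ => M ^ n) fun i hi => ?_).trans_eq (by simp))
    push_cast
    rw [abs_mul, abs_pow, abs_pow, ← pow_mul_pow_sub M (mem_range_succ_iff.1 hi)]
    gcongr
  have hcircle : ((c * ((x + q * t) ^ (n + 1) - x ^ (n + 1)) : ℝ) : UnitAddCircle) =
      (t * m) • q • (c : UnitAddCircle) := by
    rw [hpow, ← unitAddCircle_coe_natCast_mul, ← unitAddCircle_coe_intCast_mul]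
    congr 1
    push_cast
    ring
  rw [hcircle]
  refine (norm_zsmul_le _ _).trans ?_
  rw [Int.norm_eq_abs, Int.cast_mul, abs_mul]
  gcongr

theorem eval_eq_add_sum_coeff_add_two {d : ℕ} {p : ℝ[X]} (hp : p.natDegree ≤ d + 1) (x : ℝ) :
    p.eval x = p.coeff 0 + p.coeff 1 * x + ∑ i ∈ range d, p.coeff (i + 2) * x ^ (i + 2) := by
  rw [eval_eq_sum_range' (n := d + 2) (by lia), sum_range_succ', sum_range_succ']
  ring

theorem norm_eval_add_sub_linear_le {d b K N q : ℕ} (hK : 2 ≤ K) (hN : 1 ≤ N) {p : ℝ[X]}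
    (hp : p.natDegree ≤ d + 1) (hq : ∀ i ∈ range d,
      ‖q • (p.coeff (i + 2) : UnitAddCircle)‖ ≤ K ^ b * (1 / N ^ (i + 2)))
    {x t : ℤ} (hx : |(x : ℝ)| ≤ 2 * N) (hxt : |(x + q * t : ℝ)| ≤ 2 * N) :
    ‖((p.eval (x + q * t : ℝ) - (p.eval (x : ℝ) + q * p.coeff 1 * t) : ℝ) : UnitAddCircle)‖ ≤
      K ^ (b + 3 * d + 4) * |(t : ℝ)| / N := by
  have hK2 : (2 : ℝ) ≤ K := by exact_mod_cast hK
  have : (0 : ℝ) < N := by exact_mod_cast hN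
  have hsum : p.eval (x + q * t : ℝ) - (p.eval (x : ℝ) + q * p.coeff 1 * t) =
      ∑ i ∈ range d, p.coeff (i + 2) * ((x + q * t) ^ (i + 2) - x ^ (i + 2)) := by
    simp_rw [eval_eq_add_sum_coeff_add_two hp, mul_sub, sum_sub_distrib]
    ring
  have hterm : ∀ i ∈ range d,
      ‖((p.coeff (i + 2) * ((x + q * t) ^ (i + 2) - x ^ (i + 2)) : ℝ) : UnitAddCircle)‖ ≤
        K ^ (b + 2 * d + 4) * |(t : ℝ)| / N := fun i hi => by
    have hconst : ((i + 2 : ℕ) : ℝ) * 2 ^ (i + 1) ≤ (K : ℝ) ^ (2 * d + 4) := by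
      calc ((i + 2 : ℕ) : ℝ) * 2 ^ (i + 1) ≤ 2 ^ (i + 2) * 2 ^ (i + 1) := by
            gcongr
            exact_mod_cast Nat.lt_two_pow_self.le
        _ = 2 ^ (2 * i + 3) := by ring
        _ ≤ 2 ^ (2 * d + 4) := pow_le_pow_right₀ one_le_two (by have := mem_range.1 hi; lia)
        _ ≤ K ^ (2 * d + 4) := by gcongr
    calc _ ≤ |(t : ℝ)| * (((i + 1 : ℕ) + 1) * (2 * N) ^ (i + 1)) * (K ^ b * (1 / N ^ (i + 2))) :=
          norm_coe_mul_add_pow_sub_pow_le (hq i hi) hx hxt (i + 1)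
      _ = K ^ b * (((i + 2 : ℕ) * 2 ^ (i + 1)) * |(t : ℝ)| / N) := by
          push_cast
          field_simp
          ring
      _ ≤ K ^ b * (K ^ (2 * d + 4) * |(t : ℝ)| / N) := by gcongr
      _ = K ^ (b + 2 * d + 4) * |(t : ℝ)| / N := by ring
  rw [hsum, unitAddCircle_coe_sum]
  calc _ ≤ d * (K ^ (b + 2 * d + 4) * |(t : ℝ)| / N) := by simpa using norm_sum_le_of_le _ hterm
    _ ≤ K ^ d * (K ^ (b + 2 * d + 4) * |(t : ℝ)| / N) := by
        gcongr
        exact_mod_cast (Nat.lt_pow_self (by lia)).le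
    _ = K ^ (b + 3 * d + 4) * |(t : ℝ)| / N := by ring

theorem exists_mul_pow_le_le_two_mul_mul_pow {K N w : ℕ} (hK : 1 ≤ K) (hN : K ^ w ≤ N) :
    ∃ T : ℕ, T * K ^ w ≤ N ∧ N ≤ 2 * T * K ^ w := by
  have hKw : 0 < K ^ w := by positivity
  have hT : 1 ≤ N / K ^ w := by rwa [Nat.le_div_iff_mul_le hKw, one_mul]
  exact ⟨N / K ^ w, Nat.div_mul_le_self _ _, by nlinarith [Nat.lt_div_mul_add (a := N) hKw]⟩

/-- Along a progression whose step is a common denominator of the higher coefficients, the phase is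
nearly linear. -/
theorem natCast_mul_norm_nsmul_coeff_one_le {d b A K N q T : ℕ} (hK : 2 ≤ K) (hN : 1 ≤ N)
    {p : ℝ[X]} (hp : p.natDegree ≤ d + 1) (hqb : q ≤ K ^ b) (hq : ∀ i ∈ range d,
      ‖q • (p.coeff (i + 2) : UnitAddCircle)‖ ≤ K ^ b * (1 / N ^ (i + 2)))
    (hT : T * K ^ (b + 3 * d + A + 11) ≤ N) {u v : ℤ} (hu : -(N : ℤ) ≤ u) (hv : v ≤ N)
    (hsum : N ≤ K ^ A * ‖∑ x ∈ Icc u v, eC (p.eval (x : ℝ))‖) :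
    T * ‖q • (p.coeff 1 : UnitAddCircle)‖ ≤ 16 * K ^ A := by
  have hK2 : (2 : ℝ) ≤ K := by exact_mod_cast hK
  have hN0 : (0 : ℝ) < N := by exact_mod_cast hN
  have hqb' : (q : ℝ) ≤ K ^ b := by exact_mod_cast hqb
  have hT' : (T : ℝ) * K ^ (b + 3 * d + A + 11) ≤ N := by exact_mod_cast hT
  have hqT : 4 * K ^ A * (q * T) ≤ (N : ℝ) := by
    calc 4 * K ^ A * (q * T) ≤ (K : ℝ) ^ 2 * K ^ A * (K ^ b * T) := by gcongr; nlinarith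
      _ = T * K ^ (2 + A + b) := by ring
      _ ≤ T * K ^ (b + 3 * d + A + 11) :=
        mul_le_mul_of_nonneg_left (pow_le_pow_right₀ (by linarith) (by lia)) T.cast_nonneg
      _ ≤ N := hT'
  obtain ⟨x, hx, hxT⟩ := exists_mem_Icc_le_norm_sum_range (z := fun x => eC (p.eval (x : ℝ)))
    (fun x => (norm_eC _).le) hN hu hv (by positivity) hqT hsum
  have hxN : |(x : ℝ)| ≤ N := by
    rw [mem_Icc] at hx
    exact abs_le.2 ⟨by exact_mod_cast hu.trans hx.1, by exact_mod_cast hx.2.trans hv⟩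
  have hδ : 14 * (8 * K ^ A) * (K ^ (b + 3 * d + 4) * T / N) ≤ (1 : ℝ) := by
    have h112 : (14 * 8 : ℝ) ≤ K ^ 7 := le_trans (by norm_num) (pow_le_pow_left₀ zero_le_two hK2 7)
    rw [mul_div_assoc', div_le_one hN0]
    calc 14 * (8 * K ^ A) * (K ^ (b + 3 * d + 4) * T) =
          14 * 8 * (T * (K : ℝ) ^ (b + 3 * d + A + 4)) := by ring
      _ ≤ K ^ 7 * (T * (K : ℝ) ^ (b + 3 * d + A + 4)) := by gcongr
      _ = T * K ^ (b + 3 * d + A + 11) := by ring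
      _ ≤ N := hT'
  have hphase : ∀ t ∈ range T, ‖((p.eval ((x + (q * t : ℕ) : ℤ) : ℝ) -
      (p.eval (x : ℝ) + q * p.coeff 1 * t) : ℝ) : UnitAddCircle)‖ ≤
        K ^ (b + 3 * d + 4) * T / N := fun t ht => by
    have htT : (t : ℝ) ≤ T := by exact_mod_cast (mem_range.1 ht).le
    have hqt : (q * t : ℝ) ≤ N := by
      refine le_trans ?_ hqT
      have := one_le_pow₀ (n := A) (by linarith : (1 : ℝ) ≤ K)
      have : (q * t : ℝ) ≤ q * T := by gcongr
      nlinarith [(by positivity : (0 : ℝ) ≤ q * T)]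
    have hxt : |(x + q * (t : ℤ) : ℝ)| ≤ 2 * N := by
      refine (abs_add_le _ _).trans ?_
      rw [Int.cast_natCast, abs_of_nonneg (by positivity : (0 : ℝ) ≤ q * t)]
      linarith
    refine le_trans ?_ ((norm_eval_add_sub_linear_le hK hN hp hq (by linarith) hxt).trans ?_)
    · push_cast
      rfl
    · rw [Int.cast_natCast, Nat.abs_cast]
      gcongr
  have hlin := natCast_mul_norm_coe_le_of_le_norm_sum_eC (by positivity) hphase hδ hxT
  rw [unitAddCircle_coe_natCast_mul] at hlin
  linarith

theorem exists_isMajor_coeff_one_of_le_norm_sum_Icc (d B A : ℕ) : ∃ B' : ℕ, ∀ K N : ℕ, 2 ≤ K →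
    K ^ B' ≤ N → ∀ p : ℝ[X], p.natDegree ≤ d + 1 →
    (∀ i, IsMajor K B (1 / N ^ (i + 2)) (p.coeff (i + 2))) →
    ∀ u v : ℤ, -(N : ℤ) ≤ u → v ≤ N → N ≤ K ^ A * ‖∑ x ∈ Icc u v, eC (p.eval (x : ℝ))‖ →
    IsMajor K B' (1 / N) (p.coeff 1) := by
  set b := B * d with hb
  set w := b + 3 * d + A + 11
  refine ⟨A + w + 5, fun K N hK hN p hp hmajor u v hu hv hsum => ?_⟩
  have hK2 : (2 : ℝ) ≤ K := by exact_mod_cast hK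
  have hN1 : 1 ≤ N := (Nat.one_le_pow _ _ (by lia)).trans hN
  obtain ⟨q, hq, hqb, hqp⟩ := IsMajor.exists_common_denominator (range d) fun i _ => hmajor i
  rw [card_range, ← hb] at hqb hqp
  obtain ⟨T, hTN, hNT⟩ := exists_mul_pow_le_le_two_mul_mul_pow (by lia : 1 ≤ K)
    ((Nat.pow_le_pow_right (by lia) (by lia : w ≤ A + w + 5)).trans hN)
  have hNT' : (N : ℝ) ≤ 2 * T * K ^ w := by exact_mod_cast hNT
  refine ⟨q, hq, hqb.trans (Nat.pow_le_pow_right (by lia) (by lia)), ?_⟩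
  rw [mul_one_div, le_div_iff₀ (by exact_mod_cast hN1)]
  have hlin := natCast_mul_norm_nsmul_coeff_one_le hK hN1 hp hqb hqp hTN hu hv hsum
  calc ‖q • (p.coeff 1 : UnitAddCircle)‖ * N
      ≤ ‖q • (p.coeff 1 : UnitAddCircle)‖ * (2 * T * K ^ w) := by gcongr
    _ = 2 * K ^ w * (T * ‖q • (p.coeff 1 : UnitAddCircle)‖) := by ring
    _ ≤ 2 * K ^ w * (16 * K ^ A) := by gcongr
    _ = 2 ^ 5 * K ^ (A + w) := by ring
    _ ≤ K ^ 5 * K ^ (A + w) := by gcongr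
    _ = K ^ (A + w + 5) := by ring

theorem exists_isMajor_coeff_add_two_of_derivative (d A B : ℕ) : ∃ B' : ℕ, ∀ K N : ℕ, 2 ≤ K →
    K ^ B' ≤ N → ∀ p : ℝ[X], p.natDegree ≤ d + 1 →
    ∀ S, IsDenseIn S K A (2 * N) →
    (∀ h ∈ S, IsMajor K B (1 / N) ((p.derivative.eval (h : ℝ) - p.coeff 1 : ℝ) : UnitAddCircle)) →
    ∀ i, IsMajor K B' (1 / N ^ (i + 2)) (p.coeff (i + 2)) := by
  obtain ⟨B', hB'⟩ := exists_isMajor_coeff_of_norm_eval_le d (A + B + 1)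
  refine ⟨B' + B + (B + d + 1), fun K N hK hN p hp S hS hmajor i => ?_⟩
  have hK2 : (2 : ℝ) ≤ K := by exact_mod_cast hK
  have hN1 : 1 ≤ N := (Nat.one_le_pow _ _ (by lia)).trans hN
  have hN0 : (0 : ℝ) < N := by exact_mod_cast hN1
  rcases lt_or_ge d (i + 1) with hi | hi
  · rw [coeff_eq_zero_of_natDegree_lt (by lia)]
    exact .zero (by lia) (by positivity)
  obtain ⟨q, hq, hqb, S', hS'S, hS', hqS'⟩ :=
    IsMajor.exists_denominator_of_forall_mem (by lia) S hmajor
  set P : ℝ[X] := C (q : ℝ) * (derivative p - C (p.coeff 1)) with hP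
  have hPd : P.natDegree ≤ d := by
    refine (natDegree_C_mul_le _ _).trans ?_
    rw [natDegree_sub_C]
    exact (natDegree_derivative_le p).trans (by lia)
  have hPi : (P.coeff (i + 1) : UnitAddCircle) =
      ((q * (i + 2) : ℕ) : ℤ) • (p.coeff (i + 2) : UnitAddCircle) := by
    rw [← unitAddCircle_coe_intCast_mul, hP, coeff_C_mul, coeff_sub, coeff_C_succ, coeff_derivative]
    congr 1
    push_cast
    ring
  have hrec := hB' K (2 * N) hK (((Nat.pow_le_pow_right (by lia) (by lia)).trans hN).trans
    (by lia)) P hPd S' ((hS.of_subset hS'S hS').mono (by lia) (by lia)) (K ^ B * (1 / N))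
    (by
      push_cast
      calc (K : ℝ) ^ B * (1 / N) * (2 * N) = 2 * K ^ B := by field_simp
        _ ≤ K * K ^ B := by gcongr
        _ = K ^ (B + 1) := by ring
        _ ≤ K ^ (A + B + 1) := pow_le_pow_right₀ (by linarith) (by lia))
    (fun x hx => by
      rw [hP, eval_mul, eval_C, eval_sub, eval_C, unitAddCircle_coe_natCast_mul]
      exact hqS' x hx) (i + 1)
  rw [hPi] at hrec
  refine IsMajor.of_zsmul (by lia) (by positivity) (by positivity) ?_
    (hrec.rescale (η' := 1 / N ^ (i + 2)) (by lia) ?_)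
  · rw [Int.natAbs_natCast, add_assoc B, pow_add]
    have := Nat.lt_pow_self (n := d + 1) (by lia : 1 < K)
    gcongr
    lia
  · push_cast
    calc (K : ℝ) ^ B * (1 / N) / (2 * N) ^ (i + 1) ≤ K ^ B * (1 / N) / N ^ (i + 1) := by
          gcongr
          linarith
      _ = K ^ B * (1 / N ^ (i + 2)) := by rw [pow_succ' _ (i + 1)]; field_simp

theorem exists_isMajor_coeff_of_le_norm_sum_Icc (d : ℕ) : ∀ A : ℕ, ∃ B : ℕ, ∀ K N : ℕ, 2 ≤ K →
    K ^ B ≤ N → ∀ p : ℝ[X], p.natDegree ≤ d → ∀ u v : ℤ, -(N : ℤ) ≤ u → v ≤ N →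
    N ≤ K ^ A * ‖∑ x ∈ Icc u v, eC (p.eval (x : ℝ))‖ →
    ∀ j, 1 ≤ j → IsMajor K B (1 / N ^ j) (p.coeff j) := by
  induction d with
  | zero =>
    refine fun A => ⟨0, fun K N hK _ p hp _ _ _ _ _ j hj => ?_⟩
    rw [coeff_eq_zero_of_natDegree_lt (by lia)]
    exact .zero (by lia) (by positivity)
  | succ d ih =>
    intro A
    obtain ⟨B₁, hB₁⟩ := ih (2 * A + 4)
    obtain ⟨B₂, hB₂⟩ := exists_isMajor_coeff_add_two_of_derivative d (2 * A + 4) B₁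
    obtain ⟨B₃, hB₃⟩ := exists_isMajor_coeff_one_of_le_norm_sum_Icc d B₂ A
    refine ⟨B₁ + B₂ + B₃, fun K N hK hN p hp u v hu hv hsum j hj => ?_⟩
    have hN' : ∀ e ≤ B₁ + B₂ + B₃, K ^ e ≤ N := fun e he =>
      (Nat.pow_le_pow_right (by lia) he).trans hN
    obtain ⟨S, hS, hsumS⟩ := exists_isDenseIn_le_norm_sum_eC_difference hK
      ((Nat.one_le_pow _ _ (by lia)).trans hN) hu hv hsum
    have hderivative : ∀ h ∈ S,
        IsMajor K B₁ (1 / N) ((p.derivative.eval (h : ℝ) - p.coeff 1 : ℝ) : UnitAddCircle) :=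
      fun h hh => by
        obtain ⟨u', v', hu', hv', hsum'⟩ := hsumS h hh
        have := hB₁ K N hK (hN' _ (by lia)) _ (natDegree_taylor_sub_self_le hp (h : ℝ)) u' v' hu'
          hv' (by simpa [taylor_eval] using hsum') 1 le_rfl
        rwa [coeff_sub, taylor_coeff_one, pow_one] at this
    have hhigh := hB₂ K N hK (hN' _ (by lia)) p hp S hS hderivative
    match j, hj with
    | 1, _ =>
      rw [pow_one]
      exact (hB₃ K N hK (hN' _ (by lia)) p hp hhigh u v hu hv hsum).mono (by lia) (by positivity)
        (by lia)
    | i + 2, _ => exact (hhigh i).mono (by lia) (by positivity) (by lia)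

end

/-! ### Bilinear exponential sums -/

noncomputable section

open Polynomial Finset

open scoped ComplexConjugate

theorem sum_norm_sum_mul_sq_le {ι κ : Type*} (s : Finset ι) (t : Finset κ) (b : κ → ℂ)
    (z : ι → κ → ℂ) :
    ∑ m ∈ s, ‖∑ n ∈ t, b n * z m n‖ ^ 2 ≤
      ∑ n ∈ t, ∑ n' ∈ t, ‖b n‖ * ‖b n'‖ * ‖∑ m ∈ s, conj (z m n) * z m n'‖ := by
  have hexpand : ((∑ m ∈ s, ‖∑ n ∈ t, b n * z m n‖ ^ 2 : ℝ) : ℂ) =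
      ∑ n ∈ t, ∑ n' ∈ t, conj (b n) * b n' * ∑ m ∈ s, conj (z m n) * z m n' := by
    simp only [Complex.ofReal_sum, Complex.ofReal_pow, ← Complex.conj_mul', map_sum, map_mul,
      sum_mul_sum]
    rw [sum_comm]
    refine sum_congr rfl fun n _ => ?_
    rw [sum_comm]
    refine sum_congr rfl fun n' _ => ?_
    rw [mul_sum]
    exact sum_congr rfl fun m _ => by ring
  calc ∑ m ∈ s, ‖∑ n ∈ t, b n * z m n‖ ^ 2
      = ‖((∑ m ∈ s, ‖∑ n ∈ t, b n * z m n‖ ^ 2 : ℝ) : ℂ)‖ := by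
        rw [Complex.norm_of_nonneg (by positivity)]
    _ ≤ _ := by
        rw [hexpand]
        refine norm_sum_le_of_le _ fun n _ => norm_sum_le_of_le _ fun n' _ => ?_
        rw [norm_mul, norm_mul, Complex.norm_conj]

theorem sum_sum_mul_mul_le_of_symm {κ : Type*} (t : Finset κ) (x : κ → ℝ) {w : κ → κ → ℝ}
    (hw : ∀ n n', w n n' = w n' n) (hw0 : ∀ n n', 0 ≤ w n n') :
    ∑ n ∈ t, ∑ n' ∈ t, x n * x n' * w n n' ≤ ∑ n ∈ t, x n ^ 2 * ∑ n' ∈ t, w n n' := by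
  have hswap : ∑ n ∈ t, ∑ n' ∈ t, x n' ^ 2 * w n n' = ∑ n ∈ t, ∑ n' ∈ t, x n ^ 2 * w n n' := by
    rw [sum_comm]
    simp only [hw]
  calc ∑ n ∈ t, ∑ n' ∈ t, x n * x n' * w n n'
      ≤ ∑ n ∈ t, ∑ n' ∈ t, (x n ^ 2 * w n n' + x n' ^ 2 * w n n') / 2 := by
        refine sum_le_sum fun n _ => sum_le_sum fun n' _ => ?_
        nlinarith [mul_nonneg (sq_nonneg (x n - x n')) (hw0 n n')]
    _ = ∑ n ∈ t, x n ^ 2 * ∑ n' ∈ t, w n n' := by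
        simp only [← sum_div, sum_add_distrib, hswap, mul_sum, add_self_div_two]

theorem exists_norm_sum_sum_mul_sq_le {ι κ : Type*} (s : Finset ι) {t : Finset κ}
    (ht : t.Nonempty) (a : ι → ℂ) (b : κ → ℂ) (z : ι → κ → ℂ) :
    ∃ n ∈ t, ‖∑ m ∈ s, ∑ n ∈ t, a m * b n * z m n‖ ^ 2 ≤
      (∑ m ∈ s, ‖a m‖ ^ 2) * ((∑ n ∈ t, ‖b n‖ ^ 2) *
        ∑ n' ∈ t, ‖∑ m ∈ s, conj (z m n) * z m n'‖) := by
  set w : κ → κ → ℝ := fun n n' => ‖∑ m ∈ s, conj (z m n) * z m n'‖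
  have hw : ∀ n n', w n n' = w n' n := fun n n' => by
    simp only [w]
    rw [← Complex.norm_conj]
    simp [mul_comm]
  obtain ⟨n, hn, hmax⟩ := t.exists_max_image (fun n => ∑ n' ∈ t, w n n') ht
  refine ⟨n, hn, ?_⟩
  have htriangle : ‖∑ m ∈ s, ∑ n ∈ t, a m * b n * z m n‖ ≤
      ∑ m ∈ s, ‖a m‖ * ‖∑ n ∈ t, b n * z m n‖ :=
    norm_sum_le_of_le _ fun m _ => by simp only [← norm_mul, mul_sum, mul_assoc, le_refl]
  refine (pow_le_pow_left₀ (norm_nonneg _) htriangle 2).trans ?_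
  calc (∑ m ∈ s, ‖a m‖ * ‖∑ n ∈ t, b n * z m n‖) ^ 2
      ≤ (∑ m ∈ s, ‖a m‖ ^ 2) * ∑ m ∈ s, ‖∑ n ∈ t, b n * z m n‖ ^ 2 :=
        sum_mul_sq_le_sq_mul_sq s _ _
    _ ≤ (∑ m ∈ s, ‖a m‖ ^ 2) * ∑ n ∈ t, ‖b n‖ ^ 2 * ∑ n' ∈ t, w n n' := by
        refine mul_le_mul_of_nonneg_left ?_ (by positivity)
        exact (sum_norm_sum_mul_sq_le s t b z).trans
          (sum_sum_mul_mul_le_of_symm t _ hw fun n n' => norm_nonneg _)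
    _ ≤ _ := by
        refine mul_le_mul_of_nonneg_left ?_ (by positivity)
        rw [sum_mul]
        exact sum_le_sum fun n' hn' => mul_le_mul_of_nonneg_left (hmax n' hn') (sq_nonneg _)

theorem exists_le_sum_norm_sum_conj_mul {ι κ : Type*} {s : Finset ι} {t : Finset κ}
    (ht : t.Nonempty) {a : ι → ℂ} {b : κ → ℂ} {z : ι → κ → ℂ} {L M R : ℝ} {A : ℕ} (hL : 0 ≤ L)
    (hM : 0 < M) (hR : 0 < R) (ha : ∑ m ∈ s, ‖a m‖ ^ 2 ≤ L ^ A * M)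
    (hb : ∑ n ∈ t, ‖b n‖ ^ 2 ≤ L ^ A * R)
    (hsum : M * R ≤ L ^ A * ‖∑ m ∈ s, ∑ n ∈ t, a m * b n * z m n‖) :
    ∃ n ∈ t, M * R ≤ L ^ (4 * A) * ∑ n' ∈ t, ‖∑ m ∈ s, conj (z m n) * z m n'‖ := by
  obtain ⟨n, hn, hsq⟩ := exists_norm_sum_sum_mul_sq_le s ht a b z
  refine ⟨n, hn, le_of_mul_le_mul_left ?_ (mul_pos hM hR)⟩
  set W := ∑ n' ∈ t, ‖∑ m ∈ s, conj (z m n) * z m n'‖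
  calc (M * R) * (M * R) ≤ (L ^ A * ‖∑ m ∈ s, ∑ n ∈ t, a m * b n * z m n‖) ^ 2 := by
        rw [← sq]
        gcongr
    _ ≤ (L ^ A) ^ 2 * ((L ^ A * M) * ((L ^ A * R) * W)) := by
        rw [mul_pow]
        gcongr
        exact hsq.trans (by gcongr)
    _ = (M * R) * (L ^ (4 * A) * W) := by ring

theorem exists_eq_Icc_of_ordConnected {s : Finset ℤ} (hs : (s : Set ℤ).OrdConnected) {N : ℕ}
    (hN : s ⊆ Icc (-(N : ℤ)) N) : ∃ u v : ℤ, -(N : ℤ) ≤ u ∧ v ≤ N ∧ s = Icc u v := by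
  rcases s.eq_empty_or_nonempty with rfl | hne
  · exact ⟨1, 0, by lia, by lia, by simp⟩
  · refine ⟨s.min' hne, s.max' hne, (mem_Icc.1 (hN (s.min'_mem hne))).1,
      (mem_Icc.1 (hN (s.max'_mem hne))).2, subset_antisymm (fun x hx => ?_) fun x hx => ?_⟩
    · exact mem_Icc.2 ⟨s.min'_le x hx, s.le_max' x hx⟩
    · exact hs.out (s.min'_mem hne) (s.max'_mem hne) (mem_Icc.1 hx)

theorem ordConnected_map_natCast {s : Finset ℕ} (hs : (s : Set ℕ).OrdConnected) :
    (s.map (Nat.castEmbedding (R := ℤ)) : Set ℤ).OrdConnected := by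
  constructor
  intro x hx y hy z hz
  simp only [coe_map, Set.mem_image, mem_coe, Nat.castEmbedding_apply] at hx hy ⊢
  obtain ⟨x, hx, rfl⟩ := hx
  obtain ⟨y, hy, rfl⟩ := hy
  obtain ⟨z, rfl⟩ := Int.eq_ofNat_of_zero_le ((Int.natCast_nonneg x).trans hz.1)
  exact ⟨z, hs.out hx hy ⟨by exact_mod_cast hz.1, by exact_mod_cast hz.2⟩, rfl⟩

theorem map_natCast_subset_Icc {s : Finset ℕ} {N : ℕ} (hs : ∀ n ∈ s, n ≤ N) :
    s.map (Nat.castEmbedding (R := ℤ)) ⊆ Icc (-(N : ℤ)) N := fun x hx => by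
  obtain ⟨n, hn, rfl⟩ := mem_map.1 hx
  have := hs n hn
  simp only [Nat.castEmbedding_apply, mem_Icc]
  lia

theorem exists_isMajor_coeff_of_le_norm_sum_natCast (d A : ℕ) : ∃ B : ℕ, ∀ K N : ℕ, 2 ≤ K →
    K ^ B ≤ N → ∀ p : ℝ[X], p.natDegree ≤ d → ∀ s : Finset ℕ, (s : Set ℕ).OrdConnected →
    (∀ n ∈ s, n ≤ N) → (N : ℝ) ≤ (K : ℝ) ^ A * ‖∑ n ∈ s, eC (p.eval (n : ℝ))‖ →
    ∀ j, 1 ≤ j → IsMajor K B (1 / (N : ℝ) ^ j) (p.coeff j) := by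
  obtain ⟨B, hB⟩ := exists_isMajor_coeff_of_le_norm_sum_Icc d A
  refine ⟨B, fun K N hK hN p hp s hs hsN hsum => ?_⟩
  obtain ⟨u, v, hu, hv, huv⟩ := exists_eq_Icc_of_ordConnected (ordConnected_map_natCast hs)
    (map_natCast_subset_Icc hsN)
  refine hB K N hK hN p hp u v hu hv ?_
  rw [← huv, sum_map]
  simpa using hsum

theorem exists_isMajor_of_isMajor_pow_sub_mul (d A B : ℕ) : ∃ B' : ℕ, ∀ K M R : ℕ, 2 ≤ K →
    K ^ B' ≤ R → R ≤ M → ∀ j, 1 ≤ j → j ≤ d → ∀ S, IsDenseIn S K A R → ∀ c x : ℝ,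
    (∀ n ∈ S, IsMajor K B (1 / (M : ℝ) ^ j) ((((n : ℝ) ^ j - c) * x : ℝ) : UnitAddCircle)) →
    IsMajor K B' (1 / ((M : ℝ) * R) ^ j) x := by
  obtain ⟨B', hB'⟩ := exists_isMajor_coeff_of_norm_eval_le d (A + B)
  refine ⟨B' + B + B, fun K M R hK hR hRM j hj hjd S hS c x hmajor => ?_⟩
  have hK1 : (1 : ℝ) ≤ K := by exact_mod_cast (by lia : 1 ≤ K)
  have hR0 : (1 : ℝ) ≤ R := by exact_mod_cast (Nat.one_le_pow _ _ (by lia)).trans hR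
  have hRM' : (R : ℝ) ≤ M := by exact_mod_cast hRM
  obtain ⟨q, hq, hqb, S', hS'S, hS', hqS'⟩ :=
    IsMajor.exists_denominator_of_forall_mem (by lia) S hmajor
  set P : ℝ[X] := C (q * x) * (X ^ j - C c) with hP
  have hPd : P.natDegree ≤ d :=
    (natDegree_C_mul_le _ _).trans (by rwa [natDegree_sub_C, natDegree_X_pow])
  have hPj : P.coeff j = (q : ℤ) * x := by
    rw [hP, coeff_C_mul]
    simp [coeff_X_pow, coeff_C, (by lia : j ≠ 0)]
  have hε : (K : ℝ) ^ B * (1 / (M : ℝ) ^ j) * R ≤ (K : ℝ) ^ (A + B) := by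
    have hMj : (M : ℝ) ≤ (M : ℝ) ^ j := le_self_pow₀ (hR0.trans hRM') (by lia)
    calc (K : ℝ) ^ B * (1 / (M : ℝ) ^ j) * R = (K : ℝ) ^ B * (R / (M : ℝ) ^ j) := by ring
      _ ≤ (K : ℝ) ^ B * 1 := by
          gcongr
          exact div_le_one_of_le₀ (hRM'.trans hMj) (by positivity)
      _ ≤ _ := by rw [mul_one]; exact pow_le_pow_right₀ hK1 (by lia)
  have hcoeff := hB' K R hK ((Nat.pow_le_pow_right (by lia) (by lia)).trans hR) P hPd S'
    (hS.of_subset hS'S hS') _ hε (fun n hn => by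
      convert hqS' n hn using 2
      rw [← unitAddCircle_coe_natCast_mul, hP]
      simp only [eval_mul, eval_C, eval_sub, eval_pow, eval_X]
      congr 1
      ring) j
  rw [hPj, unitAddCircle_coe_intCast_mul] at hcoeff
  refine IsMajor.of_zsmul (by lia) (by positivity) (by exact_mod_cast hq.ne') (by simpa using hqb)
    (hcoeff.rescale (by lia) (le_of_eq ?_))
  rw [mul_one_div, mul_one_div, div_div, mul_pow]

theorem natDegree_comp_C_mul_X_le (p : ℝ[X]) (r : ℝ) :
    (p.comp (C r * X)).natDegree ≤ p.natDegree :=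
  natDegree_comp_le.trans (mul_le_of_le_one_right (Nat.zero_le _)
    ((natDegree_C_mul_le _ _).trans natDegree_X_le))

theorem sum_conj_mul_ite_eC (s : Finset ℕ) (p : ℝ[X]) (u v n n' : ℕ) {z : ℕ → ℕ → ℂ}
    (hz : ∀ m n, z m n = if u ≤ m * n ∧ m * n ≤ v then eC (p.eval ((m * n : ℕ) : ℝ)) else 0) :
    ∑ m ∈ s, conj (z m n) * z m n' =
      ∑ m ∈ s with (u ≤ m * n ∧ m * n ≤ v) ∧ (u ≤ m * n' ∧ m * n' ≤ v),
        eC ((p.comp (C (n' : ℝ) * X) - p.comp (C (n : ℝ) * X)).eval (m : ℝ)) := by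
  rw [sum_filter]
  refine sum_congr rfl fun m _ => ?_
  have heval : eC ((p.comp (C (n' : ℝ) * X) - p.comp (C (n : ℝ) * X)).eval (m : ℝ)) =
      conj (eC (p.eval ((m * n : ℕ) : ℝ))) * eC (p.eval ((m * n' : ℕ) : ℝ)) := by
    rw [conj_eC, ← eC_add]
    congr 1
    simp only [eval_sub, eval_comp, eval_mul, eval_C, eval_X, Nat.cast_mul, mul_comm (m : ℝ)]
    ring
  rw [hz, hz, heval]
  split_ifs <;> simp_all

theorem exists_isMajor_pow_sub_pow_mul_coeff (d A : ℕ) : ∃ B : ℕ, ∀ K N : ℕ, 2 ≤ K → K ^ B ≤ N →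
    ∀ p : ℝ[X], p.natDegree ≤ d → ∀ u v n n' : ℕ, ∀ z : ℕ → ℕ → ℂ,
    (∀ m n, z m n = if u ≤ m * n ∧ m * n ≤ v then eC (p.eval ((m * n : ℕ) : ℝ)) else 0) →
    (N : ℝ) ≤ (K : ℝ) ^ A * ‖∑ m ∈ range N, conj (z m n) * z m n'‖ → ∀ j, 1 ≤ j →
    IsMajor K B (1 / (N : ℝ) ^ j)
      ((((n' : ℝ) ^ j - (n : ℝ) ^ j) * p.coeff j : ℝ) : UnitAddCircle) := by
  obtain ⟨B, hB⟩ := exists_isMajor_coeff_of_le_norm_sum_natCast d A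
  refine ⟨B, fun K N hK hN p hp u v n n' z hz hsum j hj => ?_⟩
  have hdeg : ∀ r : ℝ, (p.comp (C r * X)).natDegree ≤ d := fun r =>
    (natDegree_comp_C_mul_X_le p r).trans hp
  rw [sum_conj_mul_ite_eC _ p u v n n' hz] at hsum
  have hmajor := hB K N hK hN _ ((natDegree_sub_le _ _).trans (max_le (hdeg n') (hdeg n))) _
    ⟨fun x hx y hy w hw => ?_⟩ (fun m hm => (mem_range.1 (mem_filter.1 hm).1).le) hsum j hj
  · convert hmajor using 2
    rw [coeff_sub, comp_C_mul_X_coeff, comp_C_mul_X_coeff]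
    ring
  · simp only [coe_filter, Set.mem_ofPred_eq, mem_range] at hx hy ⊢
    have := Nat.mul_le_mul_right n hw.1
    have := Nat.mul_le_mul_right n hw.2
    have := Nat.mul_le_mul_right n' hw.1
    have := Nat.mul_le_mul_right n' hw.2
    have := hw.2
    lia

/-- The exponential phase `n ↦ e(p(n))` cut off to the window `u ≤ n ≤ v`, so that the other ranges
of summation need not depend on `u` and `v`. -/
def windowedPhase (p : ℝ[X]) (u v n : ℕ) : ℂ :=
  if u ≤ n ∧ n ≤ v then eC (p.eval (n : ℝ)) else 0

theorem norm_windowedPhase_le_one (p : ℝ[X]) (u v n : ℕ) : ‖windowedPhase p u v n‖ ≤ 1 := by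
  unfold windowedPhase
  split_ifs <;> simp [norm_eC]

theorem norm_sum_conj_mul_le_card {ι : Type*} {s : Finset ι} {f g : ι → ℂ}
    (hf : ∀ i ∈ s, ‖f i‖ ≤ 1) (hg : ∀ i ∈ s, ‖g i‖ ≤ 1) : ‖∑ i ∈ s, conj (f i) * g i‖ ≤ #s := by
  refine (norm_sum_le_of_le s fun i hi => ?_).trans (by simp : ∑ _i ∈ s, (1 : ℝ) ≤ #s)
  rw [norm_mul, Complex.norm_conj]
  exact mul_le_one₀ (hf i hi) (norm_nonneg _) (hg i hi)

theorem exists_isMajor_coeff_of_le_norm_bilinear_sum (d A : ℕ) : ∃ B : ℕ, ∀ K M R : ℕ, 2 ≤ K →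
    K ^ B ≤ R → R ≤ M → ∀ p : ℝ[X], p.natDegree ≤ d → ∀ a b : ℕ → ℂ,
    ∑ m ∈ range M, ‖a m‖ ^ 2 ≤ (K : ℝ) ^ A * M → ∑ n ∈ range R, ‖b n‖ ^ 2 ≤ (K : ℝ) ^ A * R →
    ∀ u v : ℕ, (M : ℝ) * R ≤ (K : ℝ) ^ A * ‖∑ m ∈ range M, ∑ n ∈ range R,
      a m * b n * windowedPhase p u v (m * n)‖ →
    ∀ j, 1 ≤ j → IsMajor K B (1 / ((M : ℝ) * R) ^ j) (p.coeff j) := by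
  obtain ⟨B₁, hB₁⟩ := exists_isMajor_pow_sub_pow_mul_coeff d (4 * A + 1)
  obtain ⟨B₂, hB₂⟩ := exists_isMajor_of_isMajor_pow_sub_mul d (4 * A + 1) B₁
  refine ⟨B₁ + B₂, fun K M R hK hR hRM p hp a b ha hb u v hsum j hj => ?_⟩
  have hK2 : (2 : ℝ) ≤ K := by exact_mod_cast hK
  have hR' : ∀ e ≤ B₁ + B₂, K ^ e ≤ R := fun e he => (Nat.pow_le_pow_right (by lia) he).trans hR
  have hR0 : 0 < R := (Nat.one_le_pow _ _ (by lia)).trans hR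
  rcases lt_or_ge d j with hjd | hjd
  · rw [coeff_eq_zero_of_natDegree_lt (by lia)]
    exact .zero (by lia) (by positivity)
  set z : ℕ → ℕ → ℂ := fun m n => windowedPhase p u v (m * n)
  have hz : ∀ m n, ‖z m n‖ ≤ 1 := fun m n => norm_windowedPhase_le_one p u v (m * n)
  obtain ⟨n, -, hn⟩ := exists_le_sum_norm_sum_conj_mul (nonempty_range_iff.2 hR0.ne')
    (by positivity) (by exact_mod_cast hR0.trans_le hRM) (by exact_mod_cast hR0) ha hb hsum
  set W : ℕ → ℝ := fun n' => ‖∑ m ∈ range M, conj (z m n) * z m n'‖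
  have hpopular := le_pow_mul_card_filter_of_le_sum (s := range R) (f := W) (c := 0) (e := 0) hK2
    (by positivity) (by exact_mod_cast hR0.trans_le hRM) (X := R) (Y := M) (by simp) (fun n' _ => by
      simpa using norm_sum_conj_mul_le_card (s := range M) (fun m _ => hz m n) fun m _ => hz m n')
    (by rwa [mul_comm (R : ℝ)])
  set S := {n' ∈ range R | (M : ℝ) ≤ (K : ℝ) ^ (4 * A + 0 + 1) * W n'}
  have hS : IsDenseIn (S.map Nat.castEmbedding) K (4 * A + 1) R :=
    ⟨map_natCast_subset_Icc fun n' hn' => (mem_range.1 (mem_filter.1 hn').1).le, by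
      rw [card_map]
      exact_mod_cast hpopular⟩
  refine (hB₂ K M R hK (hR' _ (by lia)) hRM j hj hjd _ hS ((n : ℝ) ^ j) _ fun x hx => ?_).mono
    (by lia) (by positivity) (by lia)
  obtain ⟨n', hn', rfl⟩ := mem_map.1 hx
  simpa using hB₁ K M hK ((hR' _ (by lia)).trans hRM) p hp u v n n' z (fun _ _ => rfl)
    (mem_filter.1 hn').2 j hj

end

/-! ### Exponential sums over primes -/

noncomputable section

open Polynomial Finset

open scoped ArithmeticFunction.vonMangoldt ArithmeticFunction.Moebius ArithmeticFunction.zeta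

/-- The truncation of `f` to arguments `n ≤ U`, for Vaughan's identity. -/
def lowPart (U : ℕ) (f : ArithmeticFunction ℝ) : ArithmeticFunction ℝ :=
  ⟨fun n => if n ≤ U then f n else 0, by simp⟩

/-- The truncation of `f` to arguments `n > U`, for Vaughan's identity. -/
def highPart (U : ℕ) (f : ArithmeticFunction ℝ) : ArithmeticFunction ℝ :=
  ⟨fun n => if n ≤ U then 0 else f n, by simp⟩

theorem lowPart_of_lt {U n : ℕ} (f : ArithmeticFunction ℝ) (hn : U < n) : lowPart U f n = 0 :=
  if_neg hn.not_ge

theorem highPart_of_le {U n : ℕ} (f : ArithmeticFunction ℝ) (hn : n ≤ U) : highPart U f n = 0 :=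
  if_pos hn

theorem lowPart_add_highPart (U : ℕ) (f : ArithmeticFunction ℝ) :
    lowPart U f + highPart U f = f := by
  ext n
  rw [ArithmeticFunction.add_apply]
  by_cases hn : n ≤ U
  · rw [highPart_of_le f hn, add_zero]
    exact if_pos hn
  · rw [lowPart_of_lt f (not_le.1 hn), zero_add]
    exact if_neg hn

theorem abs_lowPart_le (U : ℕ) (f : ArithmeticFunction ℝ) (n : ℕ) : |lowPart U f n| ≤ |f n| := by
  by_cases hn : n ≤ U <;> simp [lowPart, hn]

theorem abs_highPart_le (U : ℕ) (f : ArithmeticFunction ℝ) (n : ℕ) :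
    |highPart U f n| ≤ |f n| := by
  by_cases hn : n ≤ U <;> simp [highPart, hn]

theorem lowPart_mul_lowPart_of_lt {U n : ℕ} (f g : ArithmeticFunction ℝ) (hn : U * U < n) :
    (lowPart U f * lowPart U g) n = 0 := by
  rw [ArithmeticFunction.mul_apply]
  refine sum_eq_zero fun x hx => ?_
  obtain ⟨hx, -⟩ := Nat.mem_divisorsAntidiagonal.1 hx
  rcases lt_or_ge U x.1 with h₁ | h₁
  · rw [lowPart_of_lt f h₁, zero_mul]
  · rw [lowPart_of_lt g (by by_contra! h₂; exact hn.not_ge (hx ▸ Nat.mul_le_mul h₁ h₂)), mul_zero]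

theorem highPart_mul_of_le {U n : ℕ} (f g : ArithmeticFunction ℝ) (hn : n ≤ U) :
    (highPart U f * g) n = 0 := by
  rw [ArithmeticFunction.mul_apply]
  refine sum_eq_zero fun x hx => ?_
  rw [highPart_of_le f ((Nat.divisor_le (Nat.fst_mem_divisors_of_mem_antidiagonal hx)).trans hn),
    zero_mul]

theorem vonMangoldt_eq_vaughan (U : ℕ) :
    Λ = lowPart U Λ + lowPart U μ * ArithmeticFunction.log - lowPart U μ * lowPart U Λ * ζ +
      highPart U Λ * ζ * highPart U μ := by
  have hΛ := lowPart_add_highPart U Λ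
  have hμζ : (μ * ζ : ArithmeticFunction ℝ) = 1 :=
    ArithmeticFunction.coe_moebius_mul_coe_zeta
  rw [← lowPart_add_highPart U μ] at hμζ
  have hlog := ArithmeticFunction.vonMangoldt_mul_zeta
  linear_combination (-highPart U Λ) * hμζ - hΛ + lowPart U μ * (hlog + ζ * hΛ)

theorem abs_mul_apply_le_log {f g : ArithmeticFunction ℝ} (hf : ∀ n, |f n| ≤ 1)
    (hg : ∀ n, |g n| ≤ Λ n) (n : ℕ) : |(f * g) n| ≤ Real.log n := by
  rw [← ArithmeticFunction.log_apply, ← ArithmeticFunction.zeta_mul_vonMangoldt,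
    ArithmeticFunction.mul_apply, ArithmeticFunction.mul_apply]
  refine (abs_sum_le_sum_abs _ _).trans (sum_le_sum fun x hx => ?_)
  rw [abs_mul, ArithmeticFunction.natCoe_apply, ArithmeticFunction.zeta_apply_ne
    (Nat.pos_of_mem_divisors (Nat.fst_mem_divisors_of_mem_antidiagonal hx)).ne', Nat.cast_one]
  exact mul_le_mul (hf _) (hg _) (abs_nonneg _) zero_le_one

theorem log_natCast_le_of_le_two_pow {n K : ℕ} (hn : n ≤ 2 ^ K) : Real.log n ≤ K := by
  rcases n.eq_zero_or_pos with rfl | hn0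
  · simp
  calc Real.log n ≤ Real.log (2 ^ K) := Real.log_le_log (by positivity) (by exact_mod_cast hn)
    _ = K * Real.log 2 := Real.log_pow ..
    _ ≤ K := mul_le_of_le_one_right K.cast_nonneg (by linarith [Real.log_two_lt_d9])

theorem sum_Ioc_mul_apply_smul {R M : Type*} [CommSemiring R] [AddCommMonoid M] [Module R M]
    (f g : ArithmeticFunction R) {N : ℕ} {z : ℕ → M} (hz : ∀ n, N < n → z n = 0) :
    ∑ n ∈ Ioc 0 N, (f * g) n • z n =
      ∑ a ∈ Ioc 0 N, ∑ b ∈ Ioc 0 N, (f a * g b) • z (a * b) := by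
  calc ∑ n ∈ Ioc 0 N, (f * g) n • z n
      = ∑ n ∈ Ioc 0 N, ∑ x ∈ Ioc 0 N ×ˢ Ioc 0 N with x.1 * x.2 = n,
          (f x.1 * g x.2) • z (x.1 * x.2) := by
        refine sum_congr rfl fun n hn => ?_
        obtain ⟨hn0, hnN⟩ := mem_Ioc.1 hn
        rw [ArithmeticFunction.mul_apply,
          Nat.divisorsAntidiagonal_eq_prod_filter_of_le hn0.ne' hnN, sum_smul]
        exact sum_congr rfl fun x hx => by rw [(mem_filter.1 hx).2]
    _ = ∑ x ∈ Ioc 0 N ×ˢ Ioc 0 N, (f x.1 * g x.2) • z (x.1 * x.2) := by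
        simp only [sum_filter]
        rw [sum_comm]
        refine sum_congr rfl fun x hx => ?_
        rw [sum_ite_eq]
        simp only [mem_product, mem_Ioc] at hx
        have hx0 : 0 < x.1 * x.2 := Nat.mul_pos hx.1.1 hx.2.1
        split_ifs with h
        · rfl
        · rw [hz _ (by simpa [hx0] using h), smul_zero]
    _ = _ := sum_product ..

theorem exists_norm_sum_smul_le_of_monotone {E : Type*} [SeminormedAddCommGroup E]
    [NormedSpace ℝ E] {w : ℕ → ℝ} (hw : Monotone w) (hw0 : w 0 = 0) (N : ℕ) (f : ℕ → E) :
    ∃ k, ‖∑ l ∈ Ioc 0 N, w l • f l‖ ≤ w N * ‖∑ l ∈ Ioc k N, f l‖ := by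
  obtain ⟨k, -, hk⟩ := (range (N + 1)).exists_max_image (fun k => ‖∑ l ∈ Ioc k N, f l‖)
    nonempty_range_add_one
  have habel : ∑ l ∈ Ioc 0 N, w l • f l =
      ∑ i ∈ range N, (w (i + 1) - w i) • ∑ l ∈ Ioc i N, f l := by
    calc ∑ l ∈ Ioc 0 N, w l • f l
        = ∑ l ∈ Ioc 0 N, ∑ i ∈ range l, (w (i + 1) - w i) • f l :=
          sum_congr rfl fun l _ => by rw [← sum_smul, sum_range_sub, hw0, sub_zero]
      _ = ∑ i ∈ range N, ∑ l ∈ Ioc i N, (w (i + 1) - w i) • f l :=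
          sum_comm' fun l i => by simp only [mem_Ioc, mem_range]; lia
      _ = _ := by simp only [smul_sum]
  refine ⟨k, ?_⟩
  calc ‖∑ l ∈ Ioc 0 N, w l • f l‖
      ≤ ∑ i ∈ range N, (w (i + 1) - w i) * ‖∑ l ∈ Ioc k N, f l‖ := by
        rw [habel]
        refine norm_sum_le_of_le _ fun i hi => ?_
        have hi' : i ∈ range (N + 1) := mem_range.2 ((mem_range.1 hi).trans N.lt_succ_self)
        rw [norm_smul, Real.norm_of_nonneg (sub_nonneg.2 (hw i.le_succ))]
        exact mul_le_mul_of_nonneg_left (hk i hi') (sub_nonneg.2 (hw i.le_succ))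
    _ = w N * ‖∑ l ∈ Ioc k N, f l‖ := by rw [← sum_mul, sum_range_sub, hw0, sub_zero]

theorem exists_le_pow_mul_norm_of_le_pow_mul_norm_sum {ι E : Type*} [SeminormedAddCommGroup E]
    {s : Finset ι} {f : ι → E} {K X : ℝ} {A c : ℕ} (hK : 0 ≤ K) (hX : 0 < X) (hs : #s ≤ K ^ c)
    (h : X ≤ K ^ A * ‖∑ i ∈ s, f i‖) : ∃ i ∈ s, X ≤ K ^ (A + c) * ‖f i‖ := by
  have hne : s.Nonempty := by
    rw [nonempty_iff_ne_empty]
    rintro rfl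
    simp [hX.not_ge] at h
  obtain ⟨i, hi, hmax⟩ := s.exists_max_image (‖f ·‖) hne
  refine ⟨i, hi, h.trans ?_⟩
  rw [pow_add, mul_assoc]
  gcongr
  exact (norm_sum_le_of_le s hmax).trans (by rw [sum_const, nsmul_eq_mul]; gcongr)

theorem le_pow_mul_norm_of_le_pow_mul_norm_add {E : Type*} [SeminormedAddCommGroup E]
    {K X : ℝ} {A : ℕ} {x y : E} (hK : 2 ≤ K) (hX : 0 < X) (h : X ≤ K ^ A * ‖x + y‖) :
    X ≤ K ^ (A + 1) * ‖x‖ ∨ X ≤ K ^ (A + 1) * ‖y‖ := by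
  obtain ⟨i, -, hi⟩ := exists_le_pow_mul_norm_of_le_pow_mul_norm_sum (s := univ) (f := ![x, y])
    (K := K) (A := A) (X := X) (c := 1) (by linarith) hX (by simpa using hK) (by simpa using h)
  fin_cases i
  exacts [.inl hi, .inr hi]

theorem windowedPhase_of_lt {v n : ℕ} (p : ℝ[X]) (u : ℕ) (hn : v < n) :
    windowedPhase p u v n = 0 :=
  if_neg fun h => hn.not_ge h.2

theorem exists_isMajor_coeff_of_le_norm_sum_natCast_mul (d A c : ℕ) : ∃ B : ℕ, ∀ K N : ℕ, 2 ≤ K →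
    K ^ B ≤ N → ∀ p : ℝ[X], p.natDegree ≤ d → ∀ m : ℕ, 1 ≤ m → m ≤ K ^ c → ∀ u v k : ℕ,
    (N : ℝ) ≤ (K : ℝ) ^ A * ‖∑ n ∈ Ioc k N, windowedPhase p u v (m * n)‖ →
    ∀ j, 1 ≤ j → IsMajor K B (1 / (N : ℝ) ^ j) (p.coeff j) := by
  obtain ⟨B, hB⟩ := exists_isMajor_coeff_of_le_norm_sum_natCast d A
  refine ⟨B + c * d, fun K N hK hN p hp m hm hmK u v k hsum j hj => ?_⟩
  rcases lt_or_ge d j with hjd | hjd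
  · rw [coeff_eq_zero_of_natDegree_lt (by lia)]
    exact .zero (by lia) (by positivity)
  set s : Finset ℕ := {n ∈ Ioc k N | u ≤ m * n ∧ m * n ≤ v}
  have hs : (s : Set ℕ).OrdConnected := ⟨fun x hx y hy w hw => by
    simp only [s, coe_filter, Set.mem_ofPred_eq, mem_Ioc] at hx hy ⊢
    have := Nat.mul_le_mul_left m hw.1
    have := Nat.mul_le_mul_left m hw.2
    have := hw.1
    have := hw.2
    lia⟩
  have hphase : ∑ n ∈ Ioc k N, windowedPhase p u v (m * n) =
      ∑ n ∈ s, eC ((p.comp (C (m : ℝ) * X)).eval (n : ℝ)) := by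
    simp [s, windowedPhase, sum_filter]
  have hmajor := hB K N hK ((Nat.pow_le_pow_right (by lia) (by lia)).trans hN) _
    ((natDegree_comp_C_mul_X_le p m).trans hp) s hs
    (fun n hn => (mem_Ioc.1 (mem_filter.1 hn).1).2) (hphase ▸ hsum) j hj
  rw [comp_C_mul_X_coeff, mul_comm] at hmajor
  refine .of_zsmul (n := (m : ℤ) ^ j) (by lia) (by positivity) (by positivity) ?_ ?_
  · rw [Int.natAbs_pow, Int.natAbs_natCast, pow_mul]
    exact (Nat.pow_le_pow_left hmK j).trans (Nat.pow_le_pow_right (Nat.one_le_pow _ _ (by lia)) hjd)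
  · rw [← unitAddCircle_coe_intCast_mul]
    exact_mod_cast hmajor

theorem exists_isMajor_coeff_of_le_norm_typeI_sum (d A c : ℕ) : ∃ B : ℕ, ∀ K N : ℕ, 2 ≤ K →
    K ^ B ≤ N → ∀ p : ℝ[X], p.natDegree ≤ d → ∀ f w : ℕ → ℝ,
    (∀ m ∈ Ioc 0 (K ^ c), |f m| ≤ K) → Monotone w → w 0 = 0 → w N ≤ K → ∀ u v : ℕ,
    (N : ℝ) ≤ (K : ℝ) ^ A *
      ‖∑ m ∈ Ioc 0 (K ^ c), ∑ n ∈ Ioc 0 N, (f m * w n) • windowedPhase p u v (m * n)‖ →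
    ∀ j, 1 ≤ j → IsMajor K B (1 / (N : ℝ) ^ j) (p.coeff j) := by
  obtain ⟨B, hB⟩ := exists_isMajor_coeff_of_le_norm_sum_natCast_mul d (A + c + 2) c
  refine ⟨B, fun K N hK hN p hp f w hf hw hw0 hwN u v hsum => ?_⟩
  have hN0 : 0 < N := (Nat.one_le_pow _ _ (by lia)).trans hN
  obtain ⟨m, hm, hle⟩ := exists_le_pow_mul_norm_of_le_pow_mul_norm_sum K.cast_nonneg
    (by exact_mod_cast hN0) (c := c) (by simp) hsum
  obtain ⟨k, hk⟩ := exists_norm_sum_smul_le_of_monotone hw hw0 N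
    fun n => windowedPhase p u v (m * n)
  refine hB K N hK hN p hp m (mem_Ioc.1 hm).1 (mem_Ioc.1 hm).2 u v k (hle.trans ?_)
  rw [pow_add _ _ 2, mul_assoc, sq, mul_assoc]
  simp only [mul_smul, ← smul_sum]
  rw [norm_smul, Real.norm_eq_abs]
  gcongr
  · exact hf m hm
  · exact hk.trans (by gcongr)

theorem exists_isMajor_coeff_of_le_norm_sum_sum_windowedPhase (d A : ℕ) : ∃ B : ℕ, ∀ K M R : ℕ,
    2 ≤ K → K ^ B ≤ M → K ^ B ≤ R → ∀ p : ℝ[X], p.natDegree ≤ d → ∀ s t : Finset ℕ,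
    s ⊆ range M → t ⊆ range R → ∀ f g : ℕ → ℝ, (∀ m ∈ s, |f m| ≤ K) → (∀ n ∈ t, |g n| ≤ K) →
    ∀ u v : ℕ, (M : ℝ) * R ≤ (K : ℝ) ^ A *
      ‖∑ m ∈ s, ∑ n ∈ t, (f m * g n) • windowedPhase p u v (m * n)‖ →
    ∀ j, 1 ≤ j → IsMajor K B (1 / ((M : ℝ) * R) ^ j) (p.coeff j) := by
  obtain ⟨B, hB⟩ := exists_isMajor_coeff_of_le_norm_bilinear_sum d (A + 2)
  refine ⟨B, fun K M R hK hM hR p hp s t hs ht f g hf hg u v hsum j hj => ?_⟩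
  wlog hRM : R ≤ M generalizing M R s t f g
  · rw [mul_comm (M : ℝ)]
    refine this R M hR hM t s ht hs g f hg hf ?_ (le_of_not_ge hRM)
    rw [mul_comm (R : ℝ), sum_comm]
    simpa only [mul_comm] using hsum
  have hK1 : (1 : ℝ) ≤ K := by exact_mod_cast one_le_two.trans hK
  have hsq : ∀ {Q : ℕ} {r : Finset ℕ} {h : ℕ → ℝ}, (∀ m ∈ r, |h m| ≤ K) →
      ∑ m ∈ range Q, ‖if m ∈ r then (h m : ℂ) else 0‖ ^ 2 ≤ (K : ℝ) ^ (A + 2) * Q := by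
    intro Q r h hh
    calc ∑ m ∈ range Q, ‖if m ∈ r then (h m : ℂ) else 0‖ ^ 2
        ≤ ∑ m ∈ range Q, (K : ℝ) ^ 2 := by
          refine sum_le_sum fun m _ => pow_le_pow_left₀ (norm_nonneg _) ?_ 2
          split_ifs with hm
          · simpa using hh m hm
          · simp
      _ = (K : ℝ) ^ 2 * Q := by simp [mul_comm]
      _ ≤ (K : ℝ) ^ (A + 2) * Q := by
          gcongr
          lia
  refine hB K M R hK hR hRM p hp (fun m => if m ∈ s then (f m : ℂ) else 0)
    (fun n => if n ∈ t then (g n : ℂ) else 0) (hsq hf) (hsq hg) u v (hsum.trans ?_) j hj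
  gcongr
  · lia
  · simp only [ite_mul, zero_mul, mul_ite, mul_zero, sum_ite_mem, sum_ite_irrel, sum_const_zero,
      inter_eq_right.2 hs, inter_eq_right.2 ht, Complex.real_smul, Complex.ofReal_mul, le_refl]

theorem norm_sum_sum_mul_smul_le {ι κ E : Type*} [SeminormedAddCommGroup E] [NormedSpace ℝ E]
    {s : Finset ι} {t : Finset κ} {f : ι → ℝ} {g : κ → ℝ} {z : ι → κ → E} {X Y : ℝ} (hX : 0 ≤ X)
    (hf : ∀ m ∈ s, |f m| ≤ X) (hg : ∀ n ∈ t, |g n| ≤ Y) (hz : ∀ m n, ‖z m n‖ ≤ 1) :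
    ‖∑ m ∈ s, ∑ n ∈ t, (f m * g n) • z m n‖ ≤ X * Y * (#s * #t) := by
  calc ‖∑ m ∈ s, ∑ n ∈ t, (f m * g n) • z m n‖ ≤ ∑ _m ∈ s, ∑ _n ∈ t, X * Y := by
        refine norm_sum_le_of_le _ fun m hm => norm_sum_le_of_le _ fun n hn => ?_
        rw [norm_smul, Real.norm_eq_abs, abs_mul]
        exact (mul_le_of_le_one_right (by positivity) (hz m n)).trans
          (mul_le_mul (hf m hm) (hg n hn) (abs_nonneg _) hX)
    _ = X * Y * (#s * #t) := by
        simp only [sum_const, nsmul_eq_mul]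
        ring

theorem exists_isMajor_coeff_of_le_norm_dyadic_sum (d A : ℕ) : ∃ B : ℕ, ∀ K N M R : ℕ, 2 ≤ K →
    0 < N → ∀ p : ℝ[X], p.natDegree ≤ d → ∀ s t : Finset ℕ,
    (∀ m ∈ s, K ^ B ≤ m ∧ M ≤ 2 * m ∧ m < M) → (∀ n ∈ t, K ^ B ≤ n ∧ R ≤ 2 * n ∧ n < R) →
    ∀ f g : ℕ → ℝ, (∀ m ∈ s, |f m| ≤ K) → (∀ n ∈ t, |g n| ≤ K) → ∀ u v : ℕ, v ≤ N →
    (N : ℝ) ≤ (K : ℝ) ^ A * ‖∑ m ∈ s, ∑ n ∈ t, (f m * g n) • windowedPhase p u v (m * n)‖ →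
    ∀ j, 1 ≤ j → IsMajor K (B + (A + 2) * d) (1 / (N : ℝ) ^ j) (p.coeff j) := by
  obtain ⟨B, hB⟩ := exists_isMajor_coeff_of_le_norm_sum_sum_windowedPhase d (A + 2)
  refine ⟨B, fun K N M R hK hN p hp s t hs ht f g hf hg u v hv hsum j hj => ?_⟩
  rcases lt_or_ge d j with hjd | hjd
  · rw [coeff_eq_zero_of_natDegree_lt (by lia)]
    exact .zero (by lia) (by positivity)
  have hK2 : (2 : ℝ) ≤ K := by exact_mod_cast hK
  have hK4 : (4 : ℝ) ≤ (K : ℝ) ^ 2 := by nlinarith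
  obtain ⟨m, hm, n, hn, hmn⟩ : ∃ m ∈ s, ∃ n ∈ t, m * n ≤ v := by
    by_contra! hlt
    rw [sum_eq_zero fun m hm => sum_eq_zero fun n hn => by
      rw [windowedPhase_of_lt p u (hlt m hm n hn), smul_zero], norm_zero, mul_zero] at hsum
    exact hsum.not_gt (by exact_mod_cast hN)
  obtain ⟨hKm, hMm, hmM⟩ := hs m hm
  obtain ⟨hKn, hRn, hnR⟩ := ht n hn
  have hMR : (M : ℝ) * R ≤ (K : ℝ) ^ 2 * N := by
    have : M * R ≤ 4 * N := by nlinarith [Nat.mul_le_mul hMm hRn]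
    exact le_trans (by exact_mod_cast this) (mul_le_mul_of_nonneg_right hK4 N.cast_nonneg)
  have hsM : s ⊆ range M := fun m hm => mem_range.2 (hs m hm).2.2
  have htR : t ⊆ range R := fun n hn => mem_range.2 (ht n hn).2.2
  have hmajor := hB K M R hK (by lia) (by lia) p hp s t hsM htR f g hf hg u v
    (hMR.trans ((mul_le_mul_of_nonneg_left hsum (by positivity)).trans_eq (by ring))) j hj
  have htrivial : ‖∑ m ∈ s, ∑ n ∈ t, (f m * g n) • windowedPhase p u v (m * n)‖ ≤
      (K : ℝ) ^ 2 * (M * R) := by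
    refine (norm_sum_sum_mul_smul_le K.cast_nonneg hf hg fun m n =>
      norm_windowedPhase_le_one p u v (m * n)).trans ?_
    rw [← sq]
    gcongr
    · simpa using card_le_card hsM
    · simpa using card_le_card htR
  have hNMR : (N : ℝ) ≤ (K : ℝ) ^ (A + 2) * (M * R) := by
    rw [pow_add, mul_assoc]
    exact hsum.trans (by gcongr)
  have hMR0 : (0 : ℝ) < M * R := by
    exact_mod_cast Nat.mul_pos (Nat.zero_lt_of_lt hmM) (Nat.zero_lt_of_lt hnR)
  refine (hmajor.rescale (C := (A + 2) * j) (by lia) ?_).mono (by lia) (by positivity)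
    (Nat.add_le_add_left (Nat.mul_le_mul_left _ hjd) _)
  rw [mul_one_div, pow_mul, div_le_div_iff₀ (by positivity) (by positivity), one_mul, ← mul_pow]
  gcongr

theorem sum_sum_eq_sum_sum_log_fiber {M : Type*} [AddCommMonoid M] {K N : ℕ} (hN : N ≤ 2 ^ K)
    (U : ℕ) (φ : ℕ → ℕ → M) :
    ∑ m ∈ Ioc U N, ∑ n ∈ Ioc U N, φ m n = ∑ x ∈ range (K + 1) ×ˢ range (K + 1),
      ∑ m ∈ Ioc U N with Nat.log 2 m = x.1, ∑ n ∈ Ioc U N with Nat.log 2 n = x.2, φ m n := by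
  have hmaps : Set.MapsTo (Nat.log 2) (Ioc U N) (range (K + 1)) := fun m hm => by
    have hm : m ≤ 2 ^ K := (mem_Ioc.1 hm).2.trans hN
    simpa [Nat.lt_succ_iff, Nat.log_pow] using Nat.log_mono_right (b := 2) hm
  rw [sum_product, ← sum_fiberwise_of_maps_to hmaps]
  refine sum_congr rfl fun i _ => ?_
  exact (sum_congr rfl fun m _ => (sum_fiberwise_of_maps_to hmaps _).symm).trans sum_comm

theorem exists_isMajor_coeff_of_le_norm_typeII_sum (d A : ℕ) : ∃ c B : ℕ, ∀ K N : ℕ, 2 ≤ K →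
    0 < N → N ≤ 2 ^ K → ∀ p : ℝ[X], p.natDegree ≤ d → ∀ f g : ℕ → ℝ, (∀ m ≤ N, |f m| ≤ K) →
    (∀ n ≤ N, |g n| ≤ K) → ∀ u v : ℕ, v ≤ N →
    (N : ℝ) ≤ (K : ℝ) ^ A * ‖∑ m ∈ Ioc (K ^ c) N, ∑ n ∈ Ioc (K ^ c) N,
      (f m * g n) • windowedPhase p u v (m * n)‖ →
    ∀ j, 1 ≤ j → IsMajor K B (1 / (N : ℝ) ^ j) (p.coeff j) := by
  obtain ⟨c, hc⟩ := exists_isMajor_coeff_of_le_norm_dyadic_sum d (A + 4)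
  refine ⟨c, c + (A + 4 + 2) * d, fun K N hK hN hNK p hp f g hf hg u v hv hsum => ?_⟩
  have hblocks : ((#(range (K + 1) ×ˢ range (K + 1)) : ℕ) : ℝ) ≤ (K : ℝ) ^ 4 := by
    have : K + 1 ≤ K ^ 2 := by nlinarith
    rw [card_product, card_range]
    exact_mod_cast (Nat.mul_le_mul this this).trans_eq (by ring)
  rw [sum_sum_eq_sum_sum_log_fiber hNK] at hsum
  obtain ⟨⟨i, i'⟩, -, hii'⟩ := exists_le_pow_mul_norm_of_le_pow_mul_norm_sum K.cast_nonneg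
    (by exact_mod_cast hN) hblocks hsum
  have hblock : ∀ i, ∀ m ∈ {m ∈ Ioc (K ^ c) N | Nat.log 2 m = i},
      K ^ c ≤ m ∧ 2 ^ (i + 1) ≤ 2 * m ∧ m < 2 ^ (i + 1) := fun i m hm => by
    obtain ⟨hmN, rfl⟩ := mem_filter.1 hm
    have hKm := (mem_Ioc.1 hmN).1
    refine ⟨hKm.le, ?_, Nat.lt_pow_succ_log_self one_lt_two m⟩
    rw [pow_succ']
    exact Nat.mul_le_mul_left 2 (Nat.pow_log_le_self 2 (by lia))
  exact hc K N (2 ^ (i + 1)) (2 ^ (i' + 1)) hK hN p hp _ _ (hblock i) (hblock i') f g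
    (fun m hm => hf m (mem_Ioc.1 (mem_filter.1 hm).1).2)
    (fun n hn => hg n (mem_Ioc.1 (mem_filter.1 hn).1).2) u v hv hii'

theorem norm_sum_lowPart_vonMangoldt_smul_le {K N : ℕ} (hNK : N ≤ 2 ^ K) (U : ℕ) {z : ℕ → ℂ}
    (hz : ∀ n, ‖z n‖ ≤ 1) : ‖∑ n ∈ Ioc 0 N, lowPart U Λ n • z n‖ ≤ U * K := by
  calc ‖∑ n ∈ Ioc 0 N, lowPart U Λ n • z n‖ ≤ ∑ n ∈ Ioc 0 N, if n ≤ U then (K : ℝ) else 0 := by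
        refine norm_sum_le_of_le _ fun n hn => ?_
        rw [norm_smul, Real.norm_eq_abs]
        split_ifs with hnU
        · refine (mul_le_of_le_one_right (abs_nonneg _) (hz n)).trans
            ((abs_lowPart_le U Λ n).trans ?_)
          rw [abs_of_nonneg ArithmeticFunction.vonMangoldt_nonneg]
          exact ArithmeticFunction.vonMangoldt_le_log.trans
            (log_natCast_le_of_le_two_pow ((mem_Ioc.1 hn).2.trans hNK))
        · simp [lowPart_of_lt Λ (not_le.1 hnU)]
    _ = #{n ∈ Ioc 0 N | n ≤ U} * (K : ℝ) := by rw [← sum_filter, sum_const, nsmul_eq_mul]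
    _ ≤ U * K := by
        gcongr
        have hsub : {n ∈ Ioc 0 N | n ≤ U} ⊆ Ioc 0 U := fun n hn => by
          simp only [mem_filter, mem_Ioc] at hn ⊢
          exact ⟨hn.1.1, hn.2⟩
        simpa using card_le_card hsub

theorem sum_vonMangoldt_smul_eq_vaughan {M : Type*} [AddCommGroup M] [Module ℝ M] {U N : ℕ}
    (hU : U * U ≤ N) {z : ℕ → M} (hz : ∀ n, N < n → z n = 0) :
    ∑ n ∈ Ioc 0 N, Λ n • z n = ∑ n ∈ Ioc 0 N, lowPart U Λ n • z n +
      ∑ m ∈ Ioc 0 U, ∑ n ∈ Ioc 0 N, (lowPart U μ m * Real.log n) • z (m * n) -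
      ∑ m ∈ Ioc 0 (U * U), ∑ n ∈ Ioc 0 N,
        ((lowPart U μ * lowPart U Λ) m * (ζ : ArithmeticFunction ℝ) n) • z (m * n) +
      ∑ m ∈ Ioc U N, ∑ n ∈ Ioc U N, ((highPart U Λ * ζ) m * highPart U μ n) • z (m * n) := by
  have hlow : ∀ {V : ℕ} {f : ℕ → M}, V ≤ N → (∀ n, V < n → f n = 0) →
      ∑ n ∈ Ioc 0 V, f n = ∑ n ∈ Ioc 0 N, f n := fun hV hf =>
    sum_subset (Ioc_subset_Ioc_right hV) fun n hn hnV => hf n (by simp_all)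
  have hhigh : ∀ {f : ℕ → M}, (∀ n ≤ U, f n = 0) → ∑ n ∈ Ioc U N, f n = ∑ n ∈ Ioc 0 N, f n :=
    fun hf => sum_subset (Ioc_subset_Ioc_left (Nat.zero_le U)) fun n hn hnV =>
      hf n (by by_contra! h; exact hnV (mem_Ioc.2 ⟨h, (mem_Ioc.1 hn).2⟩))
  rw [hlow ((Nat.le_mul_self U).trans hU) fun m hm => by simp [lowPart_of_lt _ hm],
    hlow hU fun m hm => by simp [lowPart_mul_lowPart_of_lt _ _ hm],
    hhigh fun m hm => by simp [highPart_mul_of_le _ _ hm]]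
  simp only [fun m => hhigh (f := fun n => ((highPart U Λ * ζ) m * highPart U μ n) • z (m * n))
    fun n hn => by simp [highPart_of_le _ hn], ← ArithmeticFunction.log_apply]
  rw [← sum_Ioc_mul_apply_smul _ _ hz, ← sum_Ioc_mul_apply_smul _ _ hz,
    ← sum_Ioc_mul_apply_smul _ _ hz, ← sum_add_distrib, ← sum_sub_distrib, ← sum_add_distrib]
  refine sum_congr rfl fun n _ => ?_
  nth_rw 1 [vonMangoldt_eq_vaughan U]
  simp only [sub_eq_add_neg, ArithmeticFunction.add_apply, ArithmeticFunction.neg_apply, add_smul,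
    neg_smul]

theorem le_pow_mul_norm_of_le_pow_mul_norm_add_sub_add {E : Type*} [SeminormedAddCommGroup E]
    {K X : ℝ} {A : ℕ} {x y z w : E} (hK : 2 ≤ K) (hX : 0 < X)
    (h : X ≤ K ^ A * ‖x + y - z + w‖) : X ≤ K ^ (A + 2) * ‖x‖ ∨ X ≤ K ^ (A + 2) * ‖y‖ ∨
      X ≤ K ^ (A + 2) * ‖z‖ ∨ X ≤ K ^ (A + 2) * ‖w‖ := by
  rw [show x + y - z + w = x + y + (w - z) by abel] at h
  rcases le_pow_mul_norm_of_le_pow_mul_norm_add hK hX h with h | h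
  · rcases le_pow_mul_norm_of_le_pow_mul_norm_add hK hX h with h | h
    exacts [.inl h, .inr (.inl h)]
  · rw [sub_eq_add_neg] at h
    rcases le_pow_mul_norm_of_le_pow_mul_norm_add hK hX h with h | h
    exacts [.inr (.inr (.inr h)), .inr (.inr (.inl (norm_neg z ▸ h)))]

theorem monotone_log_natCast : Monotone fun n : ℕ => Real.log n := by
  intro m n hmn
  rcases m.eq_zero_or_pos with rfl | hm
  · simpa using Real.log_natCast_nonneg n
  · exact Real.log_le_log (by exact_mod_cast hm) (by exact_mod_cast hmn)

theorem abs_natCast_zeta_le_one (n : ℕ) : |(ζ : ArithmeticFunction ℝ) n| ≤ 1 := by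
  rw [ArithmeticFunction.natCoe_apply, ArithmeticFunction.zeta_apply]
  split_ifs <;> simp

theorem monotone_natCast_zeta : Monotone (ζ : ArithmeticFunction ℝ) := by
  intro m n hmn
  simp only [ArithmeticFunction.natCoe_apply, ArithmeticFunction.zeta_apply]
  split_ifs <;> simp_all

theorem exists_isMajor_coeff_of_le_norm_sum_vonMangoldt (d A : ℕ) : ∃ B : ℕ, ∀ K N : ℕ, 2 ≤ K →
    K ^ B ≤ N → N ≤ 2 ^ K → ∀ p : ℝ[X], p.natDegree ≤ d → ∀ u v : ℕ, v ≤ N →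
    (N : ℝ) ≤ (K : ℝ) ^ A * ‖∑ n ∈ Ioc 0 N, Λ n • windowedPhase p u v n‖ →
    ∀ j, 1 ≤ j → IsMajor K B (1 / (N : ℝ) ^ j) (p.coeff j) := by
  obtain ⟨c, B₁, hII⟩ := exists_isMajor_coeff_of_le_norm_typeII_sum d (A + 2)
  obtain ⟨B₂, hlog⟩ := exists_isMajor_coeff_of_le_norm_typeI_sum d (A + 2) c
  obtain ⟨B₃, hζ⟩ := exists_isMajor_coeff_of_le_norm_typeI_sum d (A + 2) (2 * c)
  refine ⟨B₁ + B₂ + B₃ + (A + 2 * c + 4), fun K N hK hN hNK p hp u v hv hsum j hj => ?_⟩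
  have hK2 : (2 : ℝ) ≤ K := by exact_mod_cast hK
  have hpow : ∀ e ≤ B₁ + B₂ + B₃ + (A + 2 * c + 4), K ^ e ≤ N := fun e he =>
    (Nat.pow_le_pow_right (by lia) he).trans hN
  have hN0 : 0 < N := (Nat.one_le_pow _ _ (by lia)).trans hN
  have hKN : ∀ n ≤ N, Real.log n ≤ K := fun n hn => log_natCast_le_of_le_two_pow (hn.trans hNK)
  have hU : K ^ c * K ^ c = K ^ (2 * c) := by ring
  have hμ : ∀ n, |(μ : ArithmeticFunction ℝ) n| ≤ 1 := fun n => by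
    rw [ArithmeticFunction.intCoe_apply]
    exact_mod_cast ArithmeticFunction.abs_moebius_le_one
  have hΛ : ∀ n, |Λ n| = Λ n := fun n => abs_of_nonneg ArithmeticFunction.vonMangoldt_nonneg
  have hlow := fun n => (abs_lowPart_le (K ^ c) μ n).trans (hμ n)
  rw [sum_vonMangoldt_smul_eq_vaughan (U := K ^ c) (hU ▸ hpow (2 * c) (by lia))
    fun n hn => windowedPhase_of_lt p u (hv.trans_lt hn)] at hsum
  rcases le_pow_mul_norm_of_le_pow_mul_norm_add_sub_add hK2 (by exact_mod_cast hN0) hsum with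
    h | h | h | h
  · have hlt : K ^ (A + 2 * c + 3) < N := (Nat.pow_lt_pow_right hK (by lia)).trans_le
      (hpow (A + 2 * c + 4) (by lia))
    refine absurd (h.trans (mul_le_mul_of_nonneg_left (norm_sum_lowPart_vonMangoldt_smul_le hNK _
      (norm_windowedPhase_le_one p u v)) (by positivity))) (not_le.2 ?_)
    refine lt_of_le_of_lt ?_ (by exact_mod_cast hlt : (K : ℝ) ^ (A + 2 * c + 3) < N)
    rw [Nat.cast_pow, ← pow_succ, ← pow_add]
    exact pow_le_pow_right₀ (by linarith) (by lia)
  · exact (hlog K N hK (hpow _ (by lia)) p hp (lowPart (K ^ c) μ) (fun n => Real.log n)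
      (fun m _ => (hlow m).trans (by linarith)) monotone_log_natCast (by simp) (hKN N le_rfl)
      u v h j hj).mono (by lia) (by positivity) (by lia)
  · rw [hU] at h
    refine (hζ K N hK (hpow _ (by lia)) p hp (fun m => (lowPart (K ^ c) μ * lowPart (K ^ c) Λ) m)
      (ζ : ArithmeticFunction ℝ) (fun m hm => (abs_mul_apply_le_log hlow (fun n =>
        (abs_lowPart_le (K ^ c) Λ n).trans_eq (hΛ n)) m).trans (hKN m ?_)) monotone_natCast_zeta
      (by simp) ?_ u v h j hj).mono (by lia) (by positivity) (by lia)
    · exact (mem_Ioc.1 hm).2.trans (hpow _ (by lia))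
    · exact ((le_abs_self _).trans (abs_natCast_zeta_le_one N)).trans (by linarith)
  · refine (hII K N hK hN0 hNK p hp _ _ (fun m hm => ?_) (fun m _ => ?_) u v hv h j hj).mono
      (by lia) (by positivity) (by lia)
    · rw [mul_comm]
      exact (abs_mul_apply_le_log abs_natCast_zeta_le_one
        (fun n => (abs_highPart_le _ Λ n).trans_eq (hΛ n)) m).trans (hKN m hm)
    · exact ((abs_highPart_le _ _ m).trans (hμ m)).trans (by linarith)

/-- The weight `log |x|` of a signed prime `x ∈ ±ℙ`, extended by zero to `ℤ`. -/
def primeLogWeight (x : ℤ) : ℝ := if Prime x then Real.log |(x : ℝ)| else 0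

theorem primeLogWeight_neg (x : ℤ) : primeLogWeight (-x) = primeLogWeight x := by
  have hprime : Prime (-x) ↔ Prime x := ⟨fun h => by simpa using h.neg, Prime.neg⟩
  simp [primeLogWeight, hprime]

theorem primeLogWeight_natAbs (x : ℤ) : primeLogWeight x.natAbs = primeLogWeight x := by
  rcases x.natAbs_eq with h | h
  · rw [← h]
  · nth_rw 2 [h]
    rw [primeLogWeight_neg]

theorem primeLogWeight_natCast (n : ℕ) :
    primeLogWeight n = if n.Prime then Real.log n else 0 := by
  simp [primeLogWeight, Nat.prime_iff_prime_int]

theorem primeLogWeight_nonneg (x : ℤ) : 0 ≤ primeLogWeight x := by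
  rw [← primeLogWeight_natAbs, primeLogWeight_natCast]
  split_ifs
  exacts [Real.log_natCast_nonneg _, le_rfl]

theorem primeLogWeight_natCast_le_vonMangoldt (n : ℕ) : primeLogWeight n ≤ Λ n := by
  rw [primeLogWeight_natCast]
  split_ifs with h
  exacts [(ArithmeticFunction.vonMangoldt_apply_prime h).ge,
    ArithmeticFunction.vonMangoldt_nonneg]

theorem primeLogWeight_le_of_mem_Icc {K N : ℕ} (hNK : N ≤ 2 ^ K) {x : ℤ}
    (hx : x ∈ Icc (-(N : ℤ)) N) : primeLogWeight x ≤ K := by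
  have hxN : x.natAbs ≤ N := by
    rw [mem_Icc] at hx
    lia
  rw [← primeLogWeight_natAbs]
  exact (primeLogWeight_natCast_le_vonMangoldt _).trans
    (ArithmeticFunction.vonMangoldt_le_log.trans
      (log_natCast_le_of_le_two_pow (hxN.trans hNK)))

theorem sum_Ioc_primeLogWeight (N : ℕ) :
    ∑ n ∈ Ioc 0 N, primeLogWeight n = Chebyshev.theta N := by
  simp only [primeLogWeight_natCast, Chebyshev.theta, Nat.floor_natCast, sum_filter]

theorem norm_sum_vonMangoldt_sub_primeLogWeight_smul_le {K N : ℕ} (hN : 0 < N) (hNK : N ≤ 2 ^ K)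
    {z : ℕ → ℂ} (hz : ∀ n, ‖z n‖ ≤ 1) :
    ‖∑ n ∈ Ioc 0 N, (Λ n - primeLogWeight n) • z n‖ ≤ 2 * √N * K := by
  calc ‖∑ n ∈ Ioc 0 N, (Λ n - primeLogWeight n) • z n‖
      ≤ ∑ n ∈ Ioc 0 N, (Λ n - primeLogWeight n) := by
        refine norm_sum_le_of_le _ fun n _ => ?_
        have hn := sub_nonneg.2 (primeLogWeight_natCast_le_vonMangoldt n)
        rw [norm_smul, Real.norm_of_nonneg hn]
        exact mul_le_of_le_one_right hn (hz n)
    _ = Chebyshev.psi N - Chebyshev.theta N := by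
        rw [sum_sub_distrib, sum_Ioc_primeLogWeight, Chebyshev.psi, Nat.floor_natCast]
    _ ≤ 2 * √N * Real.log N := Chebyshev.psi_sub_theta_le (by exact_mod_cast hN)
    _ ≤ 2 * √N * K := by gcongr; exact log_natCast_le_of_le_two_pow hNK

theorem exists_isMajor_coeff_of_le_norm_sum_natCast_primeLogWeight (d A : ℕ) : ∃ B : ℕ,
    ∀ K N : ℕ, 2 ≤ K → K ^ B ≤ N → N ≤ 2 ^ K → ∀ p : ℝ[X], p.natDegree ≤ d →
    ∀ u v : ℕ, v ≤ N →
    (N : ℝ) ≤ (K : ℝ) ^ A * ‖∑ n ∈ Ioc 0 N, primeLogWeight n • windowedPhase p u v n‖ →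
    ∀ j, 1 ≤ j → IsMajor K B (1 / (N : ℝ) ^ j) (p.coeff j) := by
  obtain ⟨B, hB⟩ := exists_isMajor_coeff_of_le_norm_sum_vonMangoldt d (A + 1)
  refine ⟨B + (A + 3) * 2, fun K N hK hN hNK p hp u v hv hsum j hj => ?_⟩
  have hK2 : (2 : ℝ) ≤ K := by exact_mod_cast hK
  have hN0 : 0 < N := (Nat.one_le_pow _ _ (by lia)).trans hN
  refine (hB K N hK ((Nat.pow_le_pow_right (by lia) (by lia)).trans hN) hNK p hp u v hv ?_ j
    hj).mono (by lia) (by positivity) (by lia)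
  have herror : (K : ℝ) ^ A * (2 * √N * K) ≤ N / 2 := by
    have hsqrt : (K : ℝ) ^ (A + 3) ≤ √N := by
      rw [Real.le_sqrt (by positivity) (by positivity), ← pow_mul]
      exact_mod_cast (Nat.pow_le_pow_right (by lia) (by lia)).trans hN
    have hfour : 4 * (K : ℝ) ^ (A + 1) ≤ (K : ℝ) ^ (A + 3) := by
      rw [show A + 3 = A + 1 + 2 by ring, pow_add (K : ℝ) (A + 1) 2, mul_comm]
      gcongr
      nlinarith
    rw [le_div_iff₀ two_pos]
    calc (K : ℝ) ^ A * (2 * √N * K) * 2 = 4 * (K : ℝ) ^ (A + 1) * √N := by ring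
      _ ≤ √N * √N := by gcongr; exact hfour.trans hsqrt
      _ = N := Real.mul_self_sqrt (by positivity)
  have hsplit : ∑ n ∈ Ioc 0 N, primeLogWeight n • windowedPhase p u v n =
      ∑ n ∈ Ioc 0 N, Λ n • windowedPhase p u v n -
        ∑ n ∈ Ioc 0 N, (Λ n - primeLogWeight n) • windowedPhase p u v n := by
    simp only [← sum_sub_distrib, ← sub_smul, sub_sub_cancel]
  rw [hsplit] at hsum
  have hhalf : (N : ℝ) ≤
      (K : ℝ) ^ A * ‖∑ n ∈ Ioc 0 N, Λ n • windowedPhase p u v n‖ + N / 2 := by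
    refine (hsum.trans (mul_le_mul_of_nonneg_left (norm_sub_le _ _) (by positivity))).trans ?_
    rw [mul_add]
    refine add_le_add_right (le_trans ?_ herror) _
    gcongr
    exact norm_sum_vonMangoldt_sub_primeLogWeight_smul_le hN0 hNK
      (norm_windowedPhase_le_one p u v)
  have hdouble : 2 * ((K : ℝ) ^ A * ‖∑ n ∈ Ioc 0 N, Λ n • windowedPhase p u v n‖) ≤
      K * ((K : ℝ) ^ A * ‖∑ n ∈ Ioc 0 N, Λ n • windowedPhase p u v n‖) := by gcongr
  rw [pow_succ', mul_assoc]
  linarith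

theorem sum_Icc_neg_natCast_eq_add {M : Type*} [AddCommMonoid M] {g : ℤ → M} (hg : g 0 = 0)
    (N : ℕ) : ∑ x ∈ Icc (-(N : ℤ)) N, g x =
      ∑ n ∈ Ioc 0 N, g n + ∑ n ∈ Ioc 0 N, g (-n) := by
  induction N with
  | zero => simp [hg]
  | succ N ih =>
    have hIcc : Icc (-((N + 1 : ℕ) : ℤ)) (N + 1 : ℕ) =
        insert (N + 1 : ℤ) (insert (-(N + 1 : ℤ)) (Icc (-(N : ℤ)) N)) := by
      ext x
      simp only [mem_Icc, mem_insert]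
      lia
    rw [hIcc, sum_insert (by simp; lia), sum_insert (by simp), ih,
      sum_Ioc_succ_top (Nat.zero_le N), sum_Ioc_succ_top (Nat.zero_le N)]
    push_cast
    abel

theorem windowedPhase_toNat (p : ℝ[X]) (u v : ℤ) {n : ℕ} (hn : 0 < n) :
    windowedPhase p u.toNat v.toNat n =
      if (n : ℤ) ∈ Icc u v then eC (p.eval (n : ℝ)) else 0 :=
  if_congr (by rw [mem_Icc]; lia) rfl rfl

theorem windowedPhase_comp_neg_toNat (p : ℝ[X]) (u v : ℤ) {n : ℕ} (hn : 0 < n) :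
    windowedPhase (p.comp (C (-1) * X)) (-v).toNat (-u).toNat n =
      if -(n : ℤ) ∈ Icc u v then eC (p.eval (-n : ℝ)) else 0 :=
  if_congr (by rw [mem_Icc]; lia) (by simp) rfl

theorem sum_primeLogWeight_smul_eC_eq_add {N : ℕ} (p : ℝ[X]) {u v : ℤ} (hu : -(N : ℤ) ≤ u)
    (hv : v ≤ N) : ∑ x ∈ Icc u v, primeLogWeight x • eC (p.eval (x : ℝ)) =
      ∑ n ∈ Ioc 0 N, primeLogWeight n • windowedPhase p u.toNat v.toNat n +
        ∑ n ∈ Ioc 0 N,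
          primeLogWeight n • windowedPhase (p.comp (C (-1) * X)) (-v).toNat (-u).toNat n := by
  have hIcc : Icc u v = {x ∈ Icc (-(N : ℤ)) N | x ∈ Icc u v} := by
    ext x
    simp only [mem_filter, mem_Icc]
    lia
  have h0 : primeLogWeight 0 = 0 := by simp [primeLogWeight]
  rw [hIcc, sum_filter, sum_Icc_neg_natCast_eq_add (by simp [h0])]
  congr 1 <;> refine sum_congr rfl fun n hn => ?_
  · rw [windowedPhase_toNat p u v (mem_Ioc.1 hn).1, smul_ite, smul_zero, Int.cast_natCast]
  · rw [windowedPhase_comp_neg_toNat p u v (mem_Ioc.1 hn).1, smul_ite, smul_zero,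
      primeLogWeight_neg, Int.cast_neg, Int.cast_natCast]

theorem exists_isMajor_coeff_of_le_norm_sum_primeLogWeight (d A : ℕ) : ∃ B : ℕ,
    ∀ K N : ℕ, 2 ≤ K → K ^ B ≤ N → N ≤ 2 ^ K → ∀ p : ℝ[X], p.natDegree ≤ d →
    ∀ u v : ℤ, -(N : ℤ) ≤ u → v ≤ N →
    (N : ℝ) ≤ (K : ℝ) ^ A * ‖∑ x ∈ Icc u v, primeLogWeight x • eC (p.eval (x : ℝ))‖ →
    ∀ j, 1 ≤ j → IsMajor K B (1 / (N : ℝ) ^ j) (p.coeff j) := by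
  obtain ⟨B, hB⟩ := exists_isMajor_coeff_of_le_norm_sum_natCast_primeLogWeight d (A + 1)
  refine ⟨B, fun K N hK hN hNK p hp u v hu hv hsum j hj => ?_⟩
  have hN0 : (0 : ℝ) < N := by exact_mod_cast (Nat.one_le_pow _ _ (by lia)).trans hN
  rw [sum_primeLogWeight_smul_eC_eq_add p hu hv] at hsum
  rcases le_pow_mul_norm_of_le_pow_mul_norm_add (by exact_mod_cast hK) hN0 hsum with h | h
  · exact hB K N hK hN hNK p hp _ _ (by lia) h j hj
  · have hneg := hB K N hK hN hNK _ ((natDegree_comp_C_mul_X_le p (-1)).trans hp) _ _ (by lia) h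
      j hj
    rw [comp_C_mul_X_coeff] at hneg
    rcases neg_one_pow_eq_or ℝ j with hj | hj
    · simpa [hj] using hneg
    · simpa [hj] using hneg.neg

end

/-! ### Slicing in several variables -/

noncomputable section

open Polynomial Finset

section slices

variable {n d : ℕ} {K A N : ℕ}

/-- The value at the integer point `x` of the polynomial `∑ γ, c γ x ^ γ` in `n` variables, of
degree at most `d` in each of them. -/
def monomialSum (c : (Fin n → Fin (d + 1)) → ℝ) (x : Fin n → ℤ) : ℝ :=
  ∑ γ, c γ * ∏ i, (x i : ℝ) ^ (γ i : ℕ)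

/-- The polynomial `t ↦ ∑ γ, c γ x ^ γ`, where the `i`-th coordinate of `x` is `t` and the other
ones are given by `y`. -/
def slicePolynomial (c : (Fin (n + 1) → Fin (d + 1)) → ℝ) (i : Fin (n + 1)) (y : Fin n → ℤ) :
    ℝ[X] :=
  ∑ j : Fin (d + 1), C (monomialSum (fun γ => c (i.insertNth j γ)) y) * X ^ (j : ℕ)

theorem natDegree_slicePolynomial_le (c : (Fin (n + 1) → Fin (d + 1)) → ℝ) (i : Fin (n + 1))
    (y : Fin n → ℤ) : (slicePolynomial c i y).natDegree ≤ d :=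
  natDegree_sum_le_of_forall_le _ _ fun j _ => (natDegree_C_mul_X_pow_le _ _).trans (by lia)

theorem coeff_slicePolynomial (c : (Fin (n + 1) → Fin (d + 1)) → ℝ) (i : Fin (n + 1))
    (y : Fin n → ℤ) (j : Fin (d + 1)) :
    (slicePolynomial c i y).coeff j = monomialSum (fun γ => c (i.insertNth j γ)) y := by
  simp [slicePolynomial, coeff_X_pow, Fin.val_inj]

theorem monomialSum_insertNth (c : (Fin (n + 1) → Fin (d + 1)) → ℝ) (i : Fin (n + 1))
    (y : Fin n → ℤ) (t : ℤ) :
    monomialSum c (i.insertNth t y) = (slicePolynomial c i y).eval (t : ℝ) := by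
  rw [slicePolynomial, monomialSum, eval_finsetSum,
    ← Equiv.sum_comp (Fin.insertNthEquiv (fun _ => Fin (d + 1)) i), Fintype.sum_prod_type]
  refine sum_congr rfl fun j _ => ?_
  rw [eval_mul, eval_C, eval_pow, eval_X, monomialSum, sum_mul]
  refine sum_congr rfl fun γ _ => ?_
  rw [Fin.prod_univ_succAbove _ i]
  simp only [Fin.insertNthEquiv, Equiv.coe_fn_mk, Fin.insertNth_apply_same,
    Fin.insertNth_apply_succAbove]
  ring

/-- The integer points of the cube `[-N, N] ^ n`. -/
def intBox (n N : ℕ) : Finset (Fin n → ℤ) :=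
  Fintype.piFinset fun _ => Icc (-(N : ℤ)) N

theorem mem_intBox {x : Fin n → ℤ} : x ∈ intBox n N ↔ ∀ i, x i ∈ Icc (-(N : ℤ)) N :=
  Fintype.mem_piFinset

theorem card_Icc_neg_natCast_le (hK : 2 ≤ K) (hN : 0 < N) : #(Icc (-(N : ℤ)) N) ≤ K ^ 2 * N := by
  rw [Int.card_Icc]
  have : 2 ^ 2 * N ≤ K ^ 2 * N := by gcongr
  lia

theorem card_intBox_le (hK : 2 ≤ K) (hN : 0 < N) (n : ℕ) :
    #(intBox n N) ≤ K ^ (2 * n) * N ^ n := by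
  rw [intBox, Fintype.card_piFinset_const, pow_mul, ← mul_pow]
  exact Nat.pow_le_pow_left (card_Icc_neg_natCast_le hK hN) n

/-- The `t` such that `S` contains the point whose `i`-th coordinate is `t` and whose other
coordinates are given by `y`. -/
def lineSlice (S : Finset (Fin (n + 1) → ℤ)) (i : Fin (n + 1)) (y : Fin n → ℤ) : Finset ℤ :=
  {x ∈ S | i.removeNth x = y}.image fun x => x i

variable {S : Finset (Fin (n + 1) → ℤ)}

theorem mem_lineSlice {i : Fin (n + 1)} {y : Fin n → ℤ} {t : ℤ} :
    t ∈ lineSlice S i y ↔ (i.insertNth t y : Fin (n + 1) → ℤ) ∈ S := by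
  simp only [lineSlice, mem_image, mem_filter]
  constructor
  · rintro ⟨x, ⟨hx, rfl⟩, rfl⟩
    rwa [Fin.insertNth_self_removeNth]
  · exact fun h => ⟨_, ⟨h, Fin.removeNth_insertNth (α := fun _ => ℤ) i t y⟩,
      Fin.insertNth_apply_same (α := fun _ => ℤ) i t y⟩

theorem lineSlice_subset_Icc (hS : S ⊆ intBox (n + 1) N) (i : Fin (n + 1)) (y : Fin n → ℤ) :
    lineSlice S i y ⊆ Icc (-(N : ℤ)) N := fun t ht => by
  simpa using mem_intBox.1 (hS (mem_lineSlice.1 ht)) i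

theorem sum_eq_sum_sum_lineSlice {M : Type*} [AddCommMonoid M] (hS : S ⊆ intBox (n + 1) N)
    (i : Fin (n + 1)) (g : (Fin (n + 1) → ℤ) → M) :
    ∑ x ∈ S, g x = ∑ y ∈ intBox n N, ∑ t ∈ lineSlice S i y, g (i.insertNth t y) := by
  have hmaps : ∀ x ∈ S, i.removeNth x ∈ intBox n N := fun x hx =>
    mem_intBox.2 fun j => mem_intBox.1 (hS hx) (i.succAbove j)
  rw [← sum_fiberwise_of_maps_to hmaps]
  refine sum_congr rfl fun y _ => ?_
  have hself : ∀ x, i.removeNth x = y → (i.insertNth (x i) y : Fin (n + 1) → ℤ) = x := by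
    rintro x rfl
    exact Fin.insertNth_self_removeNth i x
  rw [lineSlice, sum_image]
  · exact sum_congr rfl fun x hx => by rw [hself x (mem_filter.1 hx).2]
  · intro x hx x' hx' h
    rw [← hself x (mem_filter.1 hx).2, ← hself x' (mem_filter.1 hx').2]
    exact congrArg (fun t : ℤ => (i.insertNth t y : Fin (n + 1) → ℤ)) h

theorem exists_forall_isDenseIn_lineSlice (hK : 2 ≤ K) (hN : 0 < N) (hS : S ⊆ intBox (n + 1) N)
    (hcard : N ^ (n + 1) ≤ K ^ A * #S) (i : Fin (n + 1)) :
    ∃ T ⊆ intBox n N, N ^ n ≤ K ^ (A + 3) * #T ∧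
      ∀ y ∈ T, IsDenseIn (lineSlice S i y) K (A + 2 * n + 1) N := by
  have hslices : #S = ∑ y ∈ intBox n N, #(lineSlice S i y) := by
    simpa only [card_eq_sum_ones] using sum_eq_sum_sum_lineSlice hS i fun _ => 1
  have hmany := le_pow_mul_card_filter_of_le_sum (s := intBox n N) (c := 2 * n) (e := 2) (A := A)
    (f := fun y => (#(lineSlice S i y) : ℝ)) (K := K) (X := (N : ℝ) ^ n) (Y := N)
    (by exact_mod_cast hK) (by positivity) (by positivity)
    (by exact_mod_cast card_intBox_le hK hN n)
    (fun y _ => by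
      exact_mod_cast (card_le_card (lineSlice_subset_Icc hS i y)).trans
        (card_Icc_neg_natCast_le hK hN))
    (by
      rw [hslices, pow_succ] at hcard
      exact_mod_cast hcard)
  exact ⟨_, filter_subset _ _, by exact_mod_cast hmany, fun y hy =>
    ⟨lineSlice_subset_Icc hS i y, by exact_mod_cast (mem_filter.1 hy).2⟩⟩

theorem exists_isMajor_monomialSum_insertNth (d A : ℕ) : ∃ B : ℕ, ∀ K N : ℕ, 2 ≤ K → K ^ B ≤ N →
    ∀ {n : ℕ} (c : (Fin (n + 1) → Fin (d + 1)) → ℝ) (i : Fin (n + 1)) (y : Fin n → ℤ)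
      (S : Finset ℤ), IsDenseIn S K A N → ∀ ε : ℝ, 0 ≤ ε → ε * N ≤ (K : ℝ) ^ A →
    ∀ q : ℕ, 0 < q → q ≤ K ^ A →
    (∀ t ∈ S, ‖q • (monomialSum c (i.insertNth t y) : UnitAddCircle)‖ ≤ ε) →
    ∀ j : Fin (d + 1), IsMajor K B (ε / (N : ℝ) ^ (j : ℕ))
      (monomialSum (fun γ => c (i.insertNth j γ)) y) := by
  obtain ⟨B, hB⟩ := exists_isMajor_coeff_of_norm_eval_le d A
  refine ⟨B + A, fun K N hK hN n c i y S hS ε hε hεN q hq hqA hqS j => ?_⟩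
  have h := hB K N hK ((Nat.pow_le_pow_right (by lia) (by lia)).trans hN)
    (C (q : ℝ) * slicePolynomial c i y)
    ((natDegree_C_mul_le _ _).trans (natDegree_slicePolynomial_le c i y)) S hS ε hεN
    (fun t ht => by
      simpa [← monomialSum_insertNth, unitAddCircle_coe_natCast_mul] using hqS t ht) j
  rw [coeff_C_mul, coeff_slicePolynomial, unitAddCircle_coe_natCast_mul, ← natCast_zsmul] at h
  exact h.of_zsmul (by lia) (by positivity) (by lia) (by simpa)

theorem div_pow_div_pow_sum_removeNth (ε x : ℝ) (γ : Fin (n + 1) → Fin (d + 1))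
    (i : Fin (n + 1)) : ε / x ^ (γ i : ℕ) / x ^ (∑ j, (i.removeNth γ j : ℕ)) =
      ε / x ^ ∑ j, (γ j : ℕ) := by
  rw [div_div, ← pow_add, Fin.sum_univ_succAbove _ i]
  rfl

theorem exists_isMajor_of_forall_isMajor_monomialSum (d n : ℕ) : ∀ A : ℕ, ∃ B : ℕ,
    ∀ K N : ℕ, 2 ≤ K → K ^ B ≤ N → ∀ c : (Fin n → Fin (d + 1)) → ℝ,
    ∀ S ⊆ intBox n N, N ^ n ≤ K ^ A * #S → ∀ ε : ℝ, 0 ≤ ε → ε * N ≤ (K : ℝ) ^ A →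
    (∀ x ∈ S, IsMajor K A ε (monomialSum c x)) →
    ∀ γ, IsMajor K B (ε / (N : ℝ) ^ ∑ i, (γ i : ℕ)) (c γ) := by
  induction n with
  | zero =>
    refine fun A => ⟨A, fun K N _ _ c S _ hcard ε _ _ h γ => ?_⟩
    obtain ⟨x, hx⟩ : S.Nonempty := card_pos.1 (Nat.pos_of_mul_pos_left (one_pos.trans_le hcard))
    have hc : monomialSum c x = c γ := by
      rw [monomialSum, Fintype.sum_subsingleton _ γ]
      simp
    simpa [hc] using h x hx
  | succ n ih =>
    intro A
    obtain ⟨B₁, hB₁⟩ := exists_isMajor_monomialSum_insertNth d (2 * A + 2 * n + 1)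
    obtain ⟨B₂, hB₂⟩ := ih (B₁ + 2 * A + 3)
    refine ⟨B₁ + B₂ + A, fun K N hK hN c S hS hcard ε hε hεN h γ => ?_⟩
    have hpow : ∀ b ≤ B₁ + B₂ + A, K ^ b ≤ N := fun b hb =>
      (Nat.pow_le_pow_right (by lia) hb).trans hN
    have hN0 : 0 < N := (Nat.one_le_pow 0 _ (by lia)).trans (hpow 0 (by lia))
    have hK1 : (1 : ℝ) ≤ K := by exact_mod_cast (by lia : 1 ≤ K)
    have hεK : (K : ℝ) ^ A * ε * N ≤ (K : ℝ) ^ (2 * A) := by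
      rw [two_mul, pow_add, mul_assoc]
      gcongr
    obtain ⟨q, hq, hqA, S', hS'S, hS', hqS'⟩ :=
      IsMajor.exists_denominator_of_forall_mem (by lia) S h
    obtain ⟨T, hT, hTcard, hslice⟩ := exists_forall_isDenseIn_lineSlice (A := 2 * A) hK hN0
      (hS'S.trans hS) (hcard.trans (by rw [two_mul, pow_add, mul_assoc]; gcongr)) 0
    have hmajor : ∀ y ∈ T, IsMajor K B₁ (K ^ A * ε / (N : ℝ) ^ (γ 0 : ℕ))
        (monomialSum (fun γ' => c (Fin.insertNth 0 (γ 0) γ')) y) := fun y hy =>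
      hB₁ K N hK (hpow _ (by lia)) c 0 y _ (hslice y hy) _ (by positivity)
        (hεK.trans (pow_le_pow_right₀ hK1 (by lia))) q hq
        (hqA.trans (Nat.pow_le_pow_right (by lia) (by lia)))
        (fun t ht => hqS' _ (mem_lineSlice.1 ht)) (γ 0)
    have hscale : K ^ A * ε / (N : ℝ) ^ (γ 0 : ℕ) * N ≤ (K : ℝ) ^ (B₁ + 2 * A + 3) := by
      have hdiv : (K : ℝ) ^ A * ε / (N : ℝ) ^ (γ 0 : ℕ) ≤ K ^ A * ε :=
        div_le_self (by positivity) (one_le_pow₀ (by exact_mod_cast hN0))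
      exact (mul_le_mul_of_nonneg_right hdiv (by positivity)).trans
        (hεK.trans (pow_le_pow_right₀ hK1 (by lia)))
    have hlast := hB₂ K N hK (hpow _ (by lia)) (fun γ' => c (Fin.insertNth 0 (γ 0) γ')) T hT
      (hTcard.trans (Nat.mul_le_mul_right _ (Nat.pow_le_pow_right (by lia) (by lia)))) _
      (by positivity) hscale
      (fun y hy => (hmajor y hy).mono (by lia) (by positivity) (by lia)) (Fin.removeNth 0 γ)
    rw [Fin.insertNth_self_removeNth, div_pow_div_pow_sum_removeNth, mul_div_assoc] at hlast
    exact (hlast.rescale (by lia) le_rfl).mono (by lia) (by positivity) (by lia)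

end slices

/-- The weight of one coordinate of `ℤ ^ k' × (±ℙ) ^ k''`: that of a signed prime if `P` holds, and
`1` otherwise. -/
def coordWeight (P : Prop) [Decidable P] (x : ℤ) : ℝ := if P then primeLogWeight x else 1

section coordWeight

variable (P : Prop) [Decidable P]

theorem coordWeight_nonneg (x : ℤ) : 0 ≤ coordWeight P x := by
  unfold coordWeight
  split_ifs
  exacts [primeLogWeight_nonneg x, zero_le_one]

theorem coordWeight_le_of_mem_Icc {K N : ℕ} (hK : 1 ≤ K) (hNK : N ≤ 2 ^ K) {x : ℤ}
    (hx : x ∈ Icc (-(N : ℤ)) N) : coordWeight P x ≤ K := by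
  unfold coordWeight
  split_ifs
  exacts [primeLogWeight_le_of_mem_Icc hNK hx, by exact_mod_cast hK]

end coordWeight

theorem exists_isMajor_coeff_of_le_norm_sum_coordWeight (d A : ℕ) : ∃ B : ℕ,
    ∀ K N : ℕ, 2 ≤ K → K ^ B ≤ N → N ≤ 2 ^ K → ∀ (P : Prop) [Decidable P],
    ∀ p : ℝ[X], p.natDegree ≤ d → ∀ s ⊆ Icc (-(N : ℤ)) N, (s : Set ℤ).OrdConnected →
    (N : ℝ) ≤ (K : ℝ) ^ A * ‖∑ x ∈ s, coordWeight P x • eC (p.eval (x : ℝ))‖ →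
    ∀ j, 1 ≤ j → IsMajor K B (1 / (N : ℝ) ^ j) (p.coeff j) := by
  obtain ⟨B₁, hB₁⟩ := exists_isMajor_coeff_of_le_norm_sum_Icc d A
  obtain ⟨B₂, hB₂⟩ := exists_isMajor_coeff_of_le_norm_sum_primeLogWeight d A
  refine ⟨B₁ + B₂, fun K N hK hN hNK P _ p hp s hsN hs hsum j hj => ?_⟩
  have hpow : ∀ b ≤ B₁ + B₂, K ^ b ≤ N := fun b hb =>
    (Nat.pow_le_pow_right (by lia) hb).trans hN
  obtain ⟨u, v, hu, hv, rfl⟩ := exists_eq_Icc_of_ordConnected hs hsN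
  by_cases hP : P
  · simp only [coordWeight, if_pos hP] at hsum
    exact (hB₂ K N hK (hpow _ (by lia)) hNK p hp u v hu hv hsum j hj).mono (by lia)
      (by positivity) (by lia)
  · simp only [coordWeight, if_neg hP, one_smul] at hsum
    exact (hB₁ K N hK (hpow _ (by lia)) p hp u v hu hv hsum j hj).mono (by lia)
      (by positivity) (by lia)

section multivariate

variable {n d K A N : ℕ} {S : Finset (Fin (n + 1) → ℤ)} (P : Fin (n + 1) → Prop) [DecidablePred P]

/-- The weighted exponential sum with phase `∑ γ, c γ x ^ γ` over the points `x` of `S` on the line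
in direction `i` given by `y`; the weights of the fixed coordinates are left out. -/
def lineSum (S : Finset (Fin (n + 1) → ℤ)) (c : (Fin (n + 1) → Fin (d + 1)) → ℝ)
    (i : Fin (n + 1)) (y : Fin n → ℤ) : ℂ :=
  ∑ t ∈ lineSlice S i y, coordWeight (P i) t • eC ((slicePolynomial c i y).eval (t : ℝ))

theorem sum_prod_coordWeight_smul_eC_eq_sum_lineSum (hS : S ⊆ intBox (n + 1) N)
    (c : (Fin (n + 1) → Fin (d + 1)) → ℝ) (i : Fin (n + 1)) :
    ∑ x ∈ S, (∏ j, coordWeight (P j) (x j)) • eC (monomialSum c x) =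
      ∑ y ∈ intBox n N, (∏ j, coordWeight (P (i.succAbove j)) (y j)) • lineSum P S c i y := by
  rw [sum_eq_sum_sum_lineSlice hS i]
  refine sum_congr rfl fun y _ => ?_
  rw [lineSum, smul_sum]
  refine sum_congr rfl fun t _ => ?_
  rw [Fin.prod_univ_succAbove _ i, monomialSum_insertNth, smul_smul, mul_comm]
  simp only [Fin.insertNth_apply_same, Fin.insertNth_apply_succAbove]

theorem norm_lineSum_le (hK : 2 ≤ K) (hN : 0 < N) (hNK : N ≤ 2 ^ K) (hS : S ⊆ intBox (n + 1) N)
    (c : (Fin (n + 1) → Fin (d + 1)) → ℝ) (i : Fin (n + 1)) (y : Fin n → ℤ) :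
    ‖lineSum P S c i y‖ ≤ (K : ℝ) ^ 3 * N := by
  have hsub := lineSlice_subset_Icc hS i y
  have hcard : (#(lineSlice S i y) : ℝ) ≤ K ^ 2 * N := by
    exact_mod_cast (card_le_card hsub).trans (card_Icc_neg_natCast_le hK hN)
  calc ‖lineSum P S c i y‖ ≤ ∑ _t ∈ lineSlice S i y, (K : ℝ) := by
        refine norm_sum_le_of_le _ fun t ht => ?_
        rw [norm_smul, norm_eC, mul_one, Real.norm_of_nonneg (coordWeight_nonneg _ t)]
        exact coordWeight_le_of_mem_Icc _ (by lia) hNK (hsub ht)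
    _ = #(lineSlice S i y) * K := by rw [sum_const, nsmul_eq_mul]
    _ ≤ K ^ 2 * N * K := by gcongr
    _ = K ^ 3 * N := by ring

theorem norm_sum_prod_coordWeight_smul_eC_le (hK : 1 ≤ K) (hNK : N ≤ 2 ^ K)
    (hS : S ⊆ intBox (n + 1) N) (c : (Fin (n + 1) → Fin (d + 1)) → ℝ) (i : Fin (n + 1)) :
    ‖∑ x ∈ S, (∏ j, coordWeight (P j) (x j)) • eC (monomialSum c x)‖ ≤
      (K : ℝ) ^ n * ∑ y ∈ intBox n N, ‖lineSum P S c i y‖ := by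
  rw [sum_prod_coordWeight_smul_eC_eq_sum_lineSum P hS c i, mul_sum]
  refine norm_sum_le_of_le _ fun y hy => ?_
  have hweight : ∏ j, coordWeight (P (i.succAbove j)) (y j) ≤ (K : ℝ) ^ n := by
    simpa using prod_le_prod (s := univ) (fun j _ => coordWeight_nonneg (P (i.succAbove j)) (y j))
      fun j _ => coordWeight_le_of_mem_Icc (P (i.succAbove j)) hK hNK (mem_intBox.1 hy j)
  rw [norm_smul, Real.norm_of_nonneg (prod_nonneg fun j _ => coordWeight_nonneg _ _)]
  gcongr

theorem exists_forall_le_norm_lineSum (hK : 2 ≤ K) (hN : 0 < N) (hNK : N ≤ 2 ^ K)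
    (hS : S ⊆ intBox (n + 1) N) (c : (Fin (n + 1) → Fin (d + 1)) → ℝ)
    (hsum : (N : ℝ) ^ (n + 1) ≤
      (K : ℝ) ^ A * ‖∑ x ∈ S, (∏ j, coordWeight (P j) (x j)) • eC (monomialSum c x)‖)
    (i : Fin (n + 1)) : ∃ T ⊆ intBox n N, N ^ n ≤ K ^ (A + n + 4) * #T ∧
      ∀ y ∈ T, (N : ℝ) ≤ (K : ℝ) ^ (A + 3 * n + 1) * ‖lineSum P S c i y‖ := by
  have hmany := le_pow_mul_card_filter_of_le_sum (s := intBox n N) (c := 2 * n) (e := 3)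
    (A := A + n) (f := fun y => ‖lineSum P S c i y‖) (K := K) (X := (N : ℝ) ^ n) (Y := N)
    (by exact_mod_cast hK) (by positivity) (by positivity)
    (by exact_mod_cast card_intBox_le hK hN n)
    (fun y _ => norm_lineSum_le P hK hN hNK hS c i y)
    (by
      rw [← pow_succ, pow_add (K : ℝ), mul_assoc]
      refine hsum.trans (mul_le_mul_of_nonneg_left ?_ (by positivity))
      exact norm_sum_prod_coordWeight_smul_eC_le P (by lia) hNK hS c i)
  refine ⟨_, filter_subset _ _, by exact_mod_cast hmany, fun y hy => ?_⟩
  rw [show A + 3 * n + 1 = A + n + 2 * n + 1 by ring]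
  exact_mod_cast (mem_filter.1 hy).2

end multivariate

theorem exists_isMajor_of_le_norm_sum_prod_coordWeight (d n A : ℕ) : ∃ B : ℕ,
    ∀ K N : ℕ, 2 ≤ K → K ^ B ≤ N → N ≤ 2 ^ K → ∀ (P : Fin (n + 1) → Prop) [DecidablePred P],
    ∀ c : (Fin (n + 1) → Fin (d + 1)) → ℝ, ∀ S ⊆ intBox (n + 1) N,
    (∀ i y, (lineSlice S i y : Set ℤ).OrdConnected) →
    (N : ℝ) ^ (n + 1) ≤
      (K : ℝ) ^ A * ‖∑ x ∈ S, (∏ i, coordWeight (P i) (x i)) • eC (monomialSum c x)‖ →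
    ∀ γ, (∃ i, 1 ≤ (γ i : ℕ)) → IsMajor K B (1 / (N : ℝ) ^ ∑ i, (γ i : ℕ)) (c γ) := by
  obtain ⟨B₁, hB₁⟩ := exists_isMajor_coeff_of_le_norm_sum_coordWeight d (A + 3 * n + 1)
  obtain ⟨B₂, hB₂⟩ := exists_isMajor_of_forall_isMajor_monomialSum d n (B₁ + A + n + 4)
  refine ⟨B₁ + B₂, fun K N hK hN hNK P _ c S hS hord hsum γ ⟨i, hi⟩ => ?_⟩
  have hpow : ∀ b ≤ B₁ + B₂, K ^ b ≤ N := fun b hb =>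
    (Nat.pow_le_pow_right (by lia) hb).trans hN
  have hN0 : 0 < N := (Nat.one_le_pow 0 _ (by lia)).trans (hpow 0 (by lia))
  have hK1 : (1 : ℝ) ≤ K := by exact_mod_cast (by lia : 1 ≤ K)
  obtain ⟨T, hT, hTcard, hlarge⟩ := exists_forall_le_norm_lineSum P hK hN0 hNK hS c hsum i
  have hmajor : ∀ y ∈ T, IsMajor K B₁ (1 / (N : ℝ) ^ (γ i : ℕ))
      (monomialSum (fun γ' => c (i.insertNth (γ i) γ')) y) := fun y hy => by
    rw [← coeff_slicePolynomial]
    exact hB₁ K N hK (hpow _ (by lia)) hNK (P i) _ (natDegree_slicePolynomial_le c i y) _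
      (lineSlice_subset_Icc hS i y) (hord i y) (hlarge y hy) _ hi
  have hscale : 1 / (N : ℝ) ^ (γ i : ℕ) * N ≤ (K : ℝ) ^ (B₁ + A + n + 4) := by
    refine le_trans ?_ (one_le_pow₀ hK1)
    rw [one_div, inv_mul_le_iff₀ (by positivity), mul_one]
    exact le_self_pow₀ (by exact_mod_cast hN0) (by lia)
  have hlast := hB₂ K N hK (hpow _ (by lia)) (fun γ' => c (i.insertNth (γ i) γ')) T hT
    (hTcard.trans (Nat.mul_le_mul_right _ (Nat.pow_le_pow_right (by lia) (by lia)))) _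
    (by positivity) hscale
    (fun y hy => (hmajor y hy).mono (by lia) (by positivity) (by lia)) (i.removeNth γ)
  rw [Fin.insertNth_self_removeNth, div_pow_div_pow_sum_removeNth] at hlast
  exact hlast.mono (by lia) (by positivity) (by lia)

end

/-! ### Minor arcs -/

noncomputable section

open Finset Filter

section primeWeight

variable {k : ℕ} (k' : ℕ) (v : Fin k → ℤ)

theorem primeWeight_eq_prod_coordWeight :
    primeWeight k' v = ∏ i : Fin k, coordWeight (k' ≤ (i : ℕ)) (v i) := by
  unfold primeWeight
  by_cases h : ∀ i : Fin k, k' ≤ (i : ℕ) → Prime (v i)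
  · rw [Set.indicator_of_mem (by exact h), one_mul]
    refine prod_congr rfl fun i _ => ?_
    by_cases hi : k' ≤ (i : ℕ)
    · simp [coordWeight, primeLogWeight, hi, h i hi]
    · simp [coordWeight, hi]
  · rw [Set.indicator_of_notMem (by exact h), zero_mul]
    push Not at h
    obtain ⟨i, hi, hprime⟩ := h
    exact (prod_eq_zero (mem_univ i) (by simp [coordWeight, primeLogWeight, hi, hprime])).symm

theorem primeWeight_nonneg : 0 ≤ primeWeight k' v := by
  rw [primeWeight_eq_prod_coordWeight]
  exact prod_nonneg fun i _ => coordWeight_nonneg _ _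

end primeWeight

open Classical in
/-- The integer points of `Ω_N`, for `Ω` inside the unit ball; the box makes this a finite set. -/
def latticePoints {k : ℕ} (Ω : Set (EuclideanSpace ℝ (Fin k))) (N : ℕ) : Finset (Fin k → ℤ) :=
  {v ∈ intBox k N | zEmbed v ∈ dilate Ω N}

section latticePoints

variable {k N : ℕ} {Ω : Set (EuclideanSpace ℝ (Fin k))}

theorem latticePoints_subset_intBox : latticePoints Ω N ⊆ intBox k N := by
  classical exact filter_subset _ _

theorem mem_latticePoints (hΩ : Ω ⊆ Metric.ball 0 1) (hN : 0 < N) {v : Fin k → ℤ} :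
    v ∈ latticePoints Ω N ↔ zEmbed v ∈ dilate Ω N := by
  classical
  rw [latticePoints, mem_filter, and_iff_right_iff_imp, mem_intBox]
  intro hv i
  have hnorm : ‖(N : ℝ)⁻¹ • zEmbed v‖ < 1 := mem_ball_zero_iff.1 (hΩ hv)
  have hcoord : |(v i : ℝ)| < N := by
    have h := (PiLp.norm_apply_le ((N : ℝ)⁻¹ • zEmbed v) i).trans_lt hnorm
    rwa [PiLp.smul_apply, norm_smul, Real.norm_of_nonneg (by positivity),
      inv_mul_lt_iff₀ (by positivity), mul_one] at h
  exact mem_Icc.2 (abs_le.1 (by exact_mod_cast hcoord.le))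

theorem tsum_eq_sum_latticePoints {E : Type*} [AddCommMonoid E] [TopologicalSpace E]
    (hΩ : Ω ⊆ Metric.ball 0 1) (hN : 0 < N) {f : (Fin k → ℤ) → E}
    (hf : ∀ v, zEmbed v ∉ dilate Ω N → f v = 0) : ∑' v, f v = ∑ v ∈ latticePoints Ω N, f v :=
  tsum_eq_sum fun v hv => hf v (mt (mem_latticePoints hΩ hN).2 hv)

theorem ordConnected_lineSlice_latticePoints {n : ℕ} {Ω : Set (EuclideanSpace ℝ (Fin (n + 1)))}
    (hconv : Convex ℝ Ω) (hΩ : Ω ⊆ Metric.ball 0 1) (hN : 0 < N) (i : Fin (n + 1))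
    (y : Fin n → ℤ) : (lineSlice (latticePoints Ω N) i y : Set ℤ).OrdConnected := by
  set line : ℝ → EuclideanSpace ℝ (Fin (n + 1)) := fun s =>
    (N : ℝ)⁻¹ • WithLp.toLp 2 (i.insertNth s (fun j => (y j : ℝ)) : Fin (n + 1) → ℝ) with hline
  have hmem : ∀ t : ℤ, t ∈ (lineSlice (latticePoints Ω N) i y : Set ℤ) ↔ line t ∈ Ω := fun t => by
    have hcast : (fun j => (((i.insertNth t y : Fin (n + 1) → ℤ) j : ℤ) : ℝ)) =
        (i.insertNth (t : ℝ) (fun j => (y j : ℝ)) : Fin (n + 1) → ℝ) := by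
      ext j
      rcases Fin.eq_self_or_eq_succAbove i j with rfl | ⟨j, rfl⟩ <;> simp
    simp only [mem_coe, mem_lineSlice, mem_latticePoints hΩ hN, hline, ← hcast]
    rfl
  have hpreimage : Convex ℝ (line ⁻¹' Ω) := fun s hs s' hs' a b ha hb hab => by
    rw [Set.mem_preimage]
    convert hconv hs hs' ha hb hab using 1
    ext j
    rcases Fin.eq_self_or_eq_succAbove i j with rfl | ⟨j, rfl⟩
    · simp [hline]
      ring
    · simp [hline, ← add_mul, hab]
  refine ⟨fun t ht t' ht' u hu => ?_⟩
  rw [hmem] at ht ht' ⊢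
  exact hpreimage.ordConnected.out ht ht' ⟨by exact_mod_cast hu.1, by exact_mod_cast hu.2⟩

theorem norm_zEmbed_le {M : ℕ} {v : Fin k → ℤ} (hv : v ∈ intBox k M) : ‖zEmbed v‖ ≤ k * M := by
  calc ‖zEmbed v‖ ≤ ∑ i, |(v i : ℝ)| := by
        rw [EuclideanSpace.norm_eq, Real.sqrt_le_left (sum_nonneg fun _ _ => abs_nonneg _)]
        exact sum_sq_le_sq_sum_of_nonneg fun i _ => abs_nonneg _
    _ ≤ ∑ _i : Fin k, (M : ℝ) := by
        refine sum_le_sum fun i _ => ?_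
        exact_mod_cast abs_le.2 (mem_Icc.1 (mem_intBox.1 hv i))
    _ = k * M := by simp

theorem intBox_subset_latticePoints {M : ℕ} {r : ℝ} (hr : Metric.ball 0 r ⊆ Ω)
    (hΩ : Ω ⊆ Metric.ball 0 1) (hN : 0 < N) (hM : k * M < N * r) :
    intBox k M ⊆ latticePoints Ω N := fun v hv => by
  refine (mem_latticePoints hΩ hN).2 (hr ?_)
  rw [mem_ball_zero_iff, norm_smul, Real.norm_of_nonneg (by positivity),
    inv_mul_lt_iff₀ (by positivity)]
  exact (norm_zEmbed_le hv).trans_lt hM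

end latticePoints

section discMultA

variable {k N : ℕ} (k' : ℕ) {Ω : Set (EuclideanSpace ℝ (Fin k))}

theorem cheby_eq_sum (hΩ : Ω ⊆ Metric.ball 0 1) (hN : 0 < N) :
    cheby k' Ω N = ∑ v ∈ latticePoints Ω N, primeWeight k' v := by
  rw [cheby, tsum_eq_sum_latticePoints hΩ hN fun v hv => by simp [Set.indicator_of_notMem hv]]
  refine sum_congr rfl fun v hv => ?_
  rw [Set.indicator_of_mem ((mem_latticePoints hΩ hN).1 hv), mul_one]

theorem cheby_nonneg (hΩ : Ω ⊆ Metric.ball 0 1) (hN : 0 < N) : 0 ≤ cheby k' Ω N := by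
  rw [cheby_eq_sum k' hΩ hN]
  exact sum_nonneg fun v _ => primeWeight_nonneg k' v

theorem norm_discMultA (hΩ : Ω ⊆ Metric.ball 0 1) (hN : 0 < N) (Γ : Finset (Fin k → ℕ))
    (ξ : (Fin k → ℕ) → ℝ) :
    ‖discMultA Γ k' Ω N ξ‖ =
      (cheby k' Ω N)⁻¹ * ‖∑ v ∈ latticePoints Ω N, primeWeight k' v • eC (qPair Γ ξ v)‖ := by
  rw [discMultA, norm_mul, norm_inv, Complex.norm_of_nonneg (cheby_nonneg k' hΩ hN),
    tsum_eq_sum_latticePoints hΩ hN fun v hv => by simp [Set.indicator_of_notMem hv]]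
  congr 2
  refine sum_congr rfl fun v hv => ?_
  rw [Set.indicator_of_mem ((mem_latticePoints hΩ hN).1 hv), mul_one, Complex.real_smul]

theorem norm_discMultA_le_one (hΩ : Ω ⊆ Metric.ball 0 1) (hN : 0 < N) (Γ : Finset (Fin k → ℕ))
    (ξ : (Fin k → ℕ) → ℝ) : ‖discMultA Γ k' Ω N ξ‖ ≤ 1 := by
  rw [norm_discMultA k' hΩ hN]
  refine inv_mul_le_one_of_le₀ ?_ (cheby_nonneg k' hΩ hN)
  rw [cheby_eq_sum k' hΩ hN]
  refine norm_sum_le_of_le _ fun v _ => ?_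
  rw [norm_smul, norm_eC, mul_one, Real.norm_of_nonneg (primeWeight_nonneg k' v)]

end discMultA

theorem natCast_le_mul_theta {K M : ℕ} (hK : 4 ≤ K) (hKM : K ^ 6 ≤ M) (hMK : M ≤ 2 ^ K) :
    (M : ℝ) ≤ K * Chebyshev.theta M := by
  have hK4 : (4 : ℝ) ≤ K := by exact_mod_cast hK
  have hlog : Real.log M ≤ K := log_natCast_le_of_le_two_pow hMK
  have hlog_succ : Real.log (M + 1) ≤ K + 1 := by
    have := log_natCast_le_of_le_two_pow (K := K + 1) (n := M + 1)
      (by have := Nat.one_le_two_pow (n := K); lia)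
    exact_mod_cast this
  have hcube : 16 * (K : ℝ) ≤ K ^ 3 := by
    calc 16 * (K : ℝ) = 4 ^ 2 * K := by norm_num
      _ ≤ K ^ 2 * K := by gcongr
      _ = K ^ 3 := by ring
  have hsqrt : (K : ℝ) ^ 3 ≤ √M := by
    rw [Real.le_sqrt (by positivity) (by positivity), ← pow_mul]
    exact_mod_cast hKM
  have herror : 2 * √M * Real.log M ≤ M / 8 := by
    calc 2 * √M * Real.log M ≤ 2 * √M * K := by gcongr
      _ = √M * (16 * K) / 8 := by ring
      _ ≤ √M * √M / 8 := by gcongr; exact hcube.trans hsqrt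
      _ = M / 8 := by rw [Real.mul_self_sqrt (by positivity)]
  have herror_succ : (K : ℝ) + 1 ≤ M / 8 := by
    have : (K : ℝ) ^ 3 ≤ K ^ 6 := pow_le_pow_right₀ (by linarith) (by lia)
    have : (K : ℝ) ^ 6 ≤ M := by exact_mod_cast hKM
    linarith
  have hmain : (M : ℝ) * 0.69 ≤ M * Real.log 2 := by
    gcongr
    linarith [Real.log_two_gt_d9]
  have htheta : (M : ℝ) / 4 ≤ Chebyshev.theta M := by
    linarith [Chebyshev.theta_ge M, Nat.cast_nonneg (α := ℝ) M]
  nlinarith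

theorem natCast_le_mul_sum_coordWeight (P : Prop) [Decidable P] {K M : ℕ} (hK : 4 ≤ K)
    (hKM : K ^ 6 ≤ M) (hMK : M ≤ 2 ^ K) :
    (M : ℝ) ≤ K * ∑ x ∈ Icc (-(M : ℤ)) M, coordWeight P x := by
  by_cases hP : P
  · simp only [coordWeight, if_pos hP]
    refine (natCast_le_mul_theta hK hKM hMK).trans ?_
    rw [sum_Icc_neg_natCast_eq_add (by simp [primeLogWeight]), sum_Ioc_primeLogWeight]
    gcongr
    exact le_add_of_nonneg_right (sum_nonneg fun _ _ => primeLogWeight_nonneg _)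
  · simp only [coordWeight, if_neg hP, sum_const, nsmul_one, Int.card_Icc]
    have hcard : M ≤ ((M : ℤ) + 1 - -(M : ℤ)).toNat := by lia
    exact_mod_cast hcard.trans (Nat.le_mul_of_pos_left _ (by lia))

section cheby

variable {k K M N : ℕ} (k' : ℕ) {Ω : Set (EuclideanSpace ℝ (Fin k))}

theorem prod_sum_coordWeight_le_cheby (hΩ : Ω ⊆ Metric.ball 0 1) (hN : 0 < N)
    (hM : intBox k M ⊆ latticePoints Ω N) :
    ∏ i : Fin k, ∑ x ∈ Icc (-(M : ℤ)) M, coordWeight (k' ≤ (i : ℕ)) x ≤ cheby k' Ω N := by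
  rw [prod_univ_sum, cheby_eq_sum k' hΩ hN]
  simp only [← primeWeight_eq_prod_coordWeight]
  exact sum_le_sum_of_subset_of_nonneg hM fun v _ _ => primeWeight_nonneg k' v

theorem pow_le_pow_mul_cheby (hΩ : Ω ⊆ Metric.ball 0 1) (hN : 0 < N)
    (hM : intBox k M ⊆ latticePoints Ω N) (hK : 4 ≤ K) (hKM : K ^ 6 ≤ M) (hMK : M ≤ 2 ^ K)
    (hNM : N ≤ K * M) : (N : ℝ) ^ k ≤ (K : ℝ) ^ (2 * k) * cheby k' Ω N := by
  calc (N : ℝ) ^ k = ∏ _i : Fin k, (N : ℝ) := by rw [prod_const, card_univ, Fintype.card_fin]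
    _ ≤ ∏ i : Fin k, (K ^ 2 * ∑ x ∈ Icc (-(M : ℤ)) M, coordWeight (k' ≤ (i : ℕ)) x) := by
        refine prod_le_prod (fun i _ => by positivity) fun i _ => ?_
        calc (N : ℝ) ≤ K * M := by exact_mod_cast hNM
          _ ≤ K * (K * ∑ x ∈ Icc (-(M : ℤ)) M, coordWeight (k' ≤ (i : ℕ)) x) := by
              gcongr
              exact natCast_le_mul_sum_coordWeight _ hK hKM hMK
          _ = K ^ 2 * ∑ x ∈ Icc (-(M : ℤ)) M, coordWeight (k' ≤ (i : ℕ)) x := by ring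
    _ = (K : ℝ) ^ (2 * k) * ∏ i : Fin k, ∑ x ∈ Icc (-(M : ℤ)) M, coordWeight (k' ≤ (i : ℕ)) x := by
        rw [prod_mul_distrib, prod_const, card_univ, Fintype.card_fin, pow_mul]
    _ ≤ (K : ℝ) ^ (2 * k) * cheby k' Ω N := by
        gcongr
        exact prod_sum_coordWeight_le_cheby k' hΩ hN hM

theorem exists_forall_pow_le_pow_mul_cheby {r : ℝ} (hr0 : 0 < r) (hr : Metric.ball 0 r ⊆ Ω)
    (hΩ : Ω ⊆ Metric.ball 0 1) : ∃ K₀ : ℕ, ∀ K ≥ K₀, ∀ N : ℕ, K ^ 7 ≤ N → N ≤ 2 ^ K →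
      (N : ℝ) ^ k ≤ (K : ℝ) ^ (2 * k) * cheby k' Ω N := by
  obtain ⟨D, hD⟩ := exists_nat_gt ((k : ℝ) / r)
  refine ⟨2 * D + 4, fun K hK N hN hNK => ?_⟩
  have hD0 : 0 < D := by exact_mod_cast (by positivity : (0 : ℝ) ≤ k / r).trans_lt hD
  have hKN : K ≤ N := (Nat.le_self_pow (by lia) K).trans hN
  have hM0 : 0 < N / D := Nat.div_pos (by lia) hD0
  have hNM : N ≤ K * (N / D) := by
    have hlt : N < D * (N / D + 1) := Nat.lt_mul_div_succ N hD0
    nlinarith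
  have hKM : K ^ 6 ≤ N / D :=
    Nat.le_of_mul_le_mul_left ((pow_succ' K 6).symm.le.trans (hN.trans hNM)) (by lia)
  refine pow_le_pow_mul_cheby k' hΩ (by lia) (intBox_subset_latticePoints hr hΩ (by lia) ?_)
    (by lia) hKM ((Nat.div_le_self _ _).trans hNK) hNM
  calc (k : ℝ) * (N / D : ℕ) < D * r * (N / D : ℕ) := by
        gcongr
        rwa [div_lt_iff₀ hr0] at hD
    _ = (N / D * D : ℕ) * r := by push_cast; ring
    _ ≤ N * r := by gcongr; exact Nat.div_mul_le_self N D

end cheby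

theorem not_isMajor_of_abs_sub_div_le {K B : ℕ} {η x : ℝ} {a q : ℤ} (hcop : IsCoprime a q)
    (hKq : 2 * (K : ℝ) ^ B < q) (hqη : 2 * q * (K ^ B * η) < 1)
    (hx : |x - (a : ℝ) / q| ≤ 1 / (q : ℝ) ^ 2) : ¬IsMajor K B η x := by
  rintro ⟨q', hq'0, hq', hnorm⟩
  have hq : (0 : ℝ) < q := lt_of_le_of_lt (by positivity) hKq
  have hq'K : (q' : ℝ) ≤ (K : ℝ) ^ B := by exact_mod_cast hq'
  set a' := round (q' * x)
  have hx' : |q' * x - a'| ≤ K ^ B * η := by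
    rwa [← unitAddCircle_coe_natCast_mul, UnitAddCircle.norm_eq] at hnorm
  have hfirst : |q * (q' * x - a')| < 1 / 2 := by
    rw [abs_mul, abs_of_pos hq]
    nlinarith
  have hsecond : |q' * q * (x - a / q)| < 1 / 2 := by
    rw [abs_mul, abs_of_nonneg (by positivity)]
    calc (q' : ℝ) * q * |x - a / q| ≤ K ^ B * q * (1 / (q : ℝ) ^ 2) := by gcongr
      _ = K ^ B / q := by field_simp
      _ < 1 / 2 := by rw [div_lt_div_iff₀ hq two_pos]; linarith
  have hdiff : ((q' * a - a' * q : ℤ) : ℝ) = q * (q' * x - a') - q' * q * (x - a / q) := by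
    push_cast
    field_simp
    ring
  have hzero : q' * a - a' * q = 0 := by
    rw [← Int.abs_lt_one_iff]
    have hlt : |((q' * a - a' * q : ℤ) : ℝ)| < 1 := by
      rw [hdiff]
      exact (abs_sub _ _).trans_lt (by linarith)
    exact_mod_cast hlt
  have hdvd : q ∣ q' := hcop.symm.dvd_of_dvd_mul_right ⟨a', by linarith⟩
  have hle : (q : ℝ) ≤ q' := by exact_mod_cast Int.le_of_dvd (by exact_mod_cast hq'0) hdvd
  linarith

/-- The minor arc condition on the frequency `x` of a monomial of degree `g`: with `L = log N`,
there is a reduced fraction `a / q` with `|x - a / q| ≤ 1 / q ^ 2` and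
`L ^ β ≤ q ≤ N ^ g * L ^ (-β)`. -/
def IsMinor (N g : ℕ) (β x : ℝ) : Prop :=
  ∃ a q : ℤ, IsCoprime a q ∧ Real.log N ^ β ≤ q ∧ q ≤ (N : ℝ) ^ (g : ℝ) * Real.log N ^ (-β) ∧
    |x - (a : ℝ) / q| ≤ 1 / (q : ℝ) ^ 2

theorem IsMinor.not_isMajor {K B g N : ℕ} {β x : ℝ} (h : IsMinor N g β x) (hN : 0 < N)
    (hK : K ≤ 4 * Real.log N) (hlog : 2 * 4 ^ B < Real.log N) (hβ : B + 1 ≤ β) :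
    ¬IsMajor K B (1 / (N : ℝ) ^ g) x := by
  obtain ⟨a, q, hcop, hq, hqN, hx⟩ := h
  set L := Real.log N
  have hL1 : 1 < L := by linarith [one_le_pow₀ (n := B) (by norm_num : (1 : ℝ) ≤ 4)]
  have hL0 : 0 < L := by linarith
  have hKLβ : 2 * (K : ℝ) ^ B < L ^ β := by
    calc 2 * (K : ℝ) ^ B ≤ 2 * (4 * L) ^ B := by gcongr
      _ = 2 * 4 ^ B * L ^ B := by rw [mul_pow]; ring
      _ < L * L ^ B := by gcongr
      _ = L ^ ((B : ℝ) + 1) := by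
          rw [Real.rpow_add hL0, Real.rpow_natCast, Real.rpow_one, mul_comm]
      _ ≤ L ^ β := Real.rpow_le_rpow_of_exponent_le hL1.le hβ
  refine not_isMajor_of_abs_sub_div_le hcop (hKLβ.trans_le hq) ?_ hx
  have hq0 : (0 : ℝ) < q := (Real.rpow_pos_of_pos hL0 β).trans_le hq
  rw [Real.rpow_natCast, Real.rpow_neg hL0.le, ← div_eq_mul_inv,
    le_div_iff₀ (Real.rpow_pos_of_pos hL0 β)] at hqN
  calc 2 * q * ((K : ℝ) ^ B * (1 / N ^ g)) = q * (2 * K ^ B) / N ^ g := by ring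
    _ < q * L ^ β / N ^ g := by gcongr
    _ ≤ 1 := div_le_one_of_le₀ hqN (by positivity)

theorem IsMajor.of_le_four_mul {K B G g M N : ℕ} {x : UnitAddCircle} (hK : 2 ≤ K) (hN : 0 < N)
    (hNM : N ≤ 4 * M) (hg : g ≤ G) (hx : IsMajor K B (1 / (M : ℝ) ^ g) x) :
    IsMajor K (B + 2 * G) (1 / (N : ℝ) ^ g) x := by
  have hM : 0 < M := by lia
  refine hx.rescale (by lia) ?_
  rw [mul_one_div, div_le_div_iff₀ (by positivity) (by positivity), one_mul]
  calc (N : ℝ) ^ g ≤ (4 * M) ^ g := by gcongr; exact_mod_cast hNM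
    _ = 2 ^ (2 * g) * M ^ g := by rw [mul_pow, pow_mul]; norm_num
    _ ≤ 2 ^ (2 * G) * M ^ g := by gcongr; norm_num
    _ ≤ K ^ (2 * G) * M ^ g := by gcongr; exact_mod_cast hK

section boxCoeff

variable {k : ℕ} (Γ : Finset (Fin k → ℕ)) (ξ : (Fin k → ℕ) → ℝ) (d : ℕ)

/-- The frequencies `ξ γ`, `γ ∈ Γ`, extended by zero to all exponents in `{0, …, d} ^ k`;
these are the coefficients of `ξ · 𝒬` as a `monomialSum`. -/
def boxCoeff (γ : Fin k → Fin (d + 1)) : ℝ :=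
  if (fun i => (γ i : ℕ)) ∈ Γ then ξ (fun i => γ i) else 0

variable {Γ d}

theorem monomialSum_boxCoeff (hd : ∀ γ ∈ Γ, ∀ i, γ i ≤ d) (v : Fin k → ℤ) :
    monomialSum (boxCoeff Γ ξ d) v = qPair Γ ξ v := by
  simp only [monomialSum, boxCoeff, ite_mul, zero_mul]
  rw [← sum_filter]
  exact sum_bij' (fun γ _ i => (γ i : ℕ))
    (fun γ hγ i => ⟨γ i, Nat.lt_succ_of_le (hd γ hγ i)⟩)
    (fun γ hγ => by simpa using hγ) (fun γ hγ => by simpa using hγ)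
    (fun _ _ => rfl) (fun _ _ => rfl) (fun _ _ => rfl)

end boxCoeff

theorem le_sum_sum {k : ℕ} {Γ : Finset (Fin k → ℕ)} {γ : Fin k → ℕ} (hγ : γ ∈ Γ) :
    ∑ i, γ i ≤ ∑ γ ∈ Γ, ∑ i, γ i :=
  single_le_sum (f := fun γ : Fin k → ℕ => ∑ i, γ i) (fun _ _ => Nat.zero_le _) hγ

theorem exists_forall_isMajor_of_one_lt_mul_norm_discMultA {n : ℕ}
    {Γ : Finset (Fin (n + 1) → ℕ)} (h0 : (0 : Fin (n + 1) → ℕ) ∉ Γ) (k' : ℕ)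
    {Ω : Set (EuclideanSpace ℝ (Fin (n + 1)))} (hconv : Convex ℝ Ω) {r : ℝ} (hr0 : 0 < r)
    (hr : Metric.ball 0 r ⊆ Ω) (hΩ : Ω ⊆ Metric.ball 0 1) (A : ℕ) :
    ∃ B K₀ : ℕ, ∀ K ≥ K₀, ∀ N : ℕ, K ^ B ≤ N → N ≤ 2 ^ K → ∀ ξ : (Fin (n + 1) → ℕ) → ℝ,
      1 < (K : ℝ) ^ A * ‖discMultA Γ k' Ω N ξ‖ →
      ∀ γ ∈ Γ, IsMajor K B (1 / (N : ℝ) ^ ∑ i, γ i) (ξ γ) := by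
  set d := ∑ γ ∈ Γ, ∑ i, γ i
  have hd : ∀ γ ∈ Γ, ∀ i, γ i ≤ d := fun γ hγ i =>
    (single_le_sum (f := γ) (fun _ _ => Nat.zero_le _) (mem_univ i)).trans (le_sum_sum hγ)
  obtain ⟨B, hB⟩ := exists_isMajor_of_le_norm_sum_prod_coordWeight d n (A + 2 * (n + 1))
  obtain ⟨K₀, hK₀⟩ := exists_forall_pow_le_pow_mul_cheby k' hr0 hr hΩ
  refine ⟨B + 7, K₀ + 2, fun K hK N hN hNK ξ hlarge γ hγ => ?_⟩
  have hpow : ∀ b ≤ B + 7, K ^ b ≤ N := fun b hb =>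
    (Nat.pow_le_pow_right (by lia) hb).trans hN
  have hN0 : 0 < N := (Nat.one_le_pow 0 _ (by lia)).trans (hpow 0 (by lia))
  have hcheby := hK₀ K (by lia) N (hpow 7 (by lia)) hNK
  have hcheby0 : 0 < cheby k' Ω N :=
    pos_of_mul_pos_right ((by positivity : (0 : ℝ) < (N : ℝ) ^ (n + 1)).trans_le hcheby)
      (by positivity)
  have hsum : (N : ℝ) ^ (n + 1) ≤ (K : ℝ) ^ (A + 2 * (n + 1)) *
      ‖∑ v ∈ latticePoints Ω N, primeWeight k' v • eC (qPair Γ ξ v)‖ := by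
    rw [norm_discMultA k' hΩ hN0, mul_left_comm, ← div_eq_inv_mul, one_lt_div₀ hcheby0] at hlarge
    calc (N : ℝ) ^ (n + 1) ≤ (K : ℝ) ^ (2 * (n + 1)) * cheby k' Ω N := hcheby
      _ ≤ (K : ℝ) ^ (2 * (n + 1)) * (K ^ A * ‖_‖) := by gcongr
      _ = _ := by rw [← mul_assoc, ← pow_add, add_comm A]
  simp only [← monomialSum_boxCoeff ξ hd, primeWeight_eq_prod_coordWeight] at hsum
  obtain ⟨i, hi⟩ : ∃ i, γ i ≠ 0 := Function.ne_iff.1 (ne_of_mem_of_not_mem hγ h0)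
  have hmajor := hB K N (by lia) (hpow B (by lia)) hNK _ _ _ latticePoints_subset_intBox
    (ordConnected_lineSlice_latticePoints hconv hΩ hN0) hsum
    (fun i => ⟨γ i, Nat.lt_succ_of_le (hd γ hγ i)⟩) ⟨i, Nat.one_le_iff_ne_zero.2 hi⟩
  rw [boxCoeff, if_pos hγ] at hmajor
  exact hmajor.mono (by lia) (by positivity) (by lia)

theorem log_two_add_one_le_four_mul_log {N : ℕ} (hN : 2 ≤ N) :
    ((Nat.log 2 N + 1 : ℕ) : ℝ) ≤ 4 * Real.log N := by
  have hlog1 : (1 : ℝ) ≤ Nat.log 2 N := by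
    exact_mod_cast Nat.le_log_of_pow_le (by lia) (by simpa using hN)
  have hlog : Nat.log 2 N * Real.log 2 ≤ Real.log N := by
    rw [← Real.log_pow]
    exact Real.log_le_log (by positivity) (by exact_mod_cast Nat.pow_log_le_self 2 (by lia))
  push_cast
  nlinarith [Real.log_two_gt_d9]

theorem tendsto_log_natCast_atTop : Tendsto (fun N : ℕ => Real.log N) atTop atTop :=
  Real.tendsto_log_atTop.comp tendsto_natCast_atTop_atTop

theorem eventually_mul_log_two_add_one_pow_le (c B : ℕ) :
    ∀ᶠ N : ℕ in atTop, c * (Nat.log 2 N + 1) ^ B ≤ N := by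
  have hlittle := ((Real.isLittleO_pow_log_id_atTop (n := B)).comp_tendsto
    tendsto_natCast_atTop_atTop (k := (Nat.cast : ℕ → ℝ))).bound
    (by positivity : (0 : ℝ) < 1 / ((c + 1) * 4 ^ B))
  filter_upwards [hlittle, eventually_ge_atTop 2] with N hN hN2
  simp only [Function.comp_apply, id_eq, Real.norm_natCast] at hN
  rw [Real.norm_of_nonneg (by positivity)] at hN
  have hreal : (c : ℝ) * ((Nat.log 2 N + 1 : ℕ) : ℝ) ^ B ≤ N := by
    calc (c : ℝ) * ((Nat.log 2 N + 1 : ℕ) : ℝ) ^ B ≤ (c + 1) * (4 * Real.log N) ^ B := by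
          gcongr
          exacts [le_add_of_nonneg_right zero_le_one, log_two_add_one_le_four_mul_log hN2]
      _ = (c + 1) * 4 ^ B * Real.log N ^ B := by rw [mul_pow]; ring
      _ ≤ (c + 1) * 4 ^ B * (1 / ((c + 1) * 4 ^ B) * N) := by gcongr
      _ = N := by field_simp
  exact_mod_cast hreal

theorem norm_le_rpow_neg_of_pow_mul_norm_le_one {z : ℂ} {K L α : ℝ} (hL : 1 ≤ L) (hLK : L ≤ K)
    (hz : K ^ ⌈α⌉₊ * ‖z‖ ≤ 1) : ‖z‖ ≤ L ^ (-α) := by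
  have hL0 : 0 < L := by linarith
  have hpow : L ^ α ≤ K ^ ⌈α⌉₊ := by
    calc L ^ α ≤ L ^ (⌈α⌉₊ : ℝ) := Real.rpow_le_rpow_of_exponent_le hL (Nat.le_ceil α)
      _ = L ^ ⌈α⌉₊ := Real.rpow_natCast _ _
      _ ≤ K ^ ⌈α⌉₊ := by gcongr
  rw [Real.rpow_neg hL0.le, ← one_div, le_div_iff₀' (Real.rpow_pos_of_pos hL0 α)]
  exact (mul_le_mul_of_nonneg_right hpow (norm_nonneg z)).trans hz

section decay

variable {k : ℕ} {Γ : Finset (Fin k → ℕ)} {Ω : Set (EuclideanSpace ℝ (Fin k))} {r : ℝ}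

theorem exists_forall_ge_norm_discMultA_le (h0 : (0 : Fin k → ℕ) ∉ Γ) (k' : ℕ)
    (hconv : Convex ℝ Ω) (hr0 : 0 < r) (hr : Metric.ball 0 r ⊆ Ω) (hΩ : Ω ⊆ Metric.ball 0 1)
    (α : ℝ) : ∃ β₀ : ℝ, 0 < β₀ ∧ ∃ N₀ : ℕ, ∀ N ≥ N₀, ∀ M ≤ N, N ≤ 4 * M → ∀ β ≥ β₀,
      ∀ ξ : (Fin k → ℕ) → ℝ, ∀ γ ∈ Γ, IsMinor N (∑ i, γ i) β (ξ γ) →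
      ‖discMultA Γ k' Ω M ξ‖ ≤ Real.log N ^ (-α) := by
  rcases k with _ | n
  · exact ⟨1, one_pos, 0, fun _ _ _ _ _ _ _ _ γ hγ => absurd (Subsingleton.elim γ 0 ▸ hγ) h0⟩
  obtain ⟨B, K₀, hmajor⟩ := exists_forall_isMajor_of_one_lt_mul_norm_discMultA h0 k' hconv hr0 hr
    hΩ ⌈α⌉₊
  set G := ∑ γ ∈ Γ, ∑ i, γ i
  obtain ⟨N₀, hN₀⟩ := eventually_atTop.1 ((eventually_mul_log_two_add_one_pow_le 4 B).and
    ((tendsto_log_natCast_atTop.eventually_gt_atTop (2 * 4 ^ (B + 2 * G))).and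
      (eventually_ge_atTop (2 ^ (K₀ + 1)))))
  refine ⟨(B + 2 * G : ℕ) + 1, by positivity, N₀, fun N hN M hMN hNM β hβ ξ γ hγ hminor => ?_⟩
  obtain ⟨hpow, hlog, hKN⟩ := hN₀ N hN
  have hN2 : 2 ≤ N := (Nat.le_self_pow (by lia) 2).trans hKN
  set K := Nat.log 2 N + 1
  have hK : K₀ + 2 ≤ K := Nat.succ_le_succ (Nat.le_log_of_pow_le (by lia) hKN)
  have hNK : N ≤ 2 ^ K := (Nat.lt_pow_succ_log_self (by lia) N).le
  have hlog1 : 1 ≤ Real.log N := by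
    linarith [one_le_pow₀ (n := B + 2 * G) (by norm_num : (1 : ℝ) ≤ 4)]
  refine norm_le_rpow_neg_of_pow_mul_norm_le_one hlog1 (log_natCast_le_of_le_two_pow hNK) ?_
  by_contra! hlarge
  refine hminor.not_isMajor (by lia) (log_two_add_one_le_four_mul_log hN2) hlog hβ ?_
  exact (hmajor K (by lia) M (by lia) (hMN.trans hNK) ξ hlarge γ hγ).of_le_four_mul (by lia)
    (by lia) hNM (le_sum_sum hγ)

theorem exists_forall_norm_discMultA_le_mul (h0 : (0 : Fin k → ℕ) ∉ Γ) (k' : ℕ)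
    (hconv : Convex ℝ Ω) (hr0 : 0 < r) (hr : Metric.ball 0 r ⊆ Ω) (hΩ : Ω ⊆ Metric.ball 0 1)
    (α : ℝ) : ∃ β₀ : ℝ, 0 < β₀ ∧ ∃ C : ℝ, 0 < C ∧ ∀ N ≥ 2, ∀ M ≤ N, N ≤ 4 * M → ∀ β ≥ β₀,
      ∀ ξ : (Fin k → ℕ) → ℝ, ∀ γ ∈ Γ, IsMinor N (∑ i, γ i) β (ξ γ) →
      ‖discMultA Γ k' Ω M ξ‖ ≤ C * Real.log N ^ (-α) := by
  obtain ⟨β₀, hβ₀, N₀, hdecay⟩ :=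
    exists_forall_ge_norm_discMultA_le h0 k' hconv hr0 hr hΩ α
  obtain ⟨C, hC⟩ := ((range N₀).image fun N : ℕ => Real.log N ^ α).exists_le
  refine ⟨β₀, hβ₀, max 1 C, by positivity, fun N hN M hMN hNM β hβ ξ γ hγ hminor => ?_⟩
  have hlog : 0 < Real.log N := Real.log_pos (by exact_mod_cast hN)
  rcases lt_or_ge N N₀ with hlt | hge
  · calc ‖discMultA Γ k' Ω M ξ‖ ≤ 1 := norm_discMultA_le_one k' hΩ (by lia) Γ ξ
      _ = Real.log N ^ α * Real.log N ^ (-α) := by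
          rw [← Real.rpow_add hlog, add_neg_cancel, Real.rpow_zero]
      _ ≤ max 1 C * Real.log N ^ (-α) := by
          gcongr
          exact (hC _ (mem_image_of_mem _ (mem_range.2 hlt))).trans (le_max_right _ _)
  · exact (hdecay N hge M hMN hNM β hβ ξ γ hγ hminor).trans
      (le_mul_of_one_le_left (by positivity) (le_max_left _ _))

theorem minor_arc_multiplier_decay_general (h0 : (0 : Fin k → ℕ) ∉ Γ) (k' : ℕ)
    (hconv : Convex ℝ Ω) (hr0 : 0 < r) (hr : Metric.ball 0 r ⊆ Ω) (hΩ : Ω ⊆ Metric.ball 0 1)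
    (α : ℝ) : ∃ β₀ : ℝ, 0 < β₀ ∧ ∃ C : ℝ, 0 < C ∧ ∀ N ≥ 2, ∀ M ≤ N, N ≤ 4 * M → ∀ β ≥ β₀,
      ∀ ξ : (Fin k → ℕ) → ℝ, ∀ γ ∈ Γ, IsMinor N (∑ i, γ i) β (ξ γ) →
      ‖discMultA Γ k' Ω N ξ - discMultA Γ k' Ω M ξ‖ ≤ C * Real.log N ^ (-α) := by
  obtain ⟨β₀, hβ₀, C, hC, hdecay⟩ :=
    exists_forall_norm_discMultA_le_mul h0 k' hconv hr0 hr hΩ α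
  refine ⟨β₀, hβ₀, 2 * C, by positivity, fun N hN M hMN hNM β hβ ξ γ hγ hminor => ?_⟩
  calc ‖discMultA Γ k' Ω N ξ - discMultA Γ k' Ω M ξ‖
      ≤ ‖discMultA Γ k' Ω N ξ‖ + ‖discMultA Γ k' Ω M ξ‖ := norm_sub_le _ _
    _ ≤ C * Real.log N ^ (-α) + C * Real.log N ^ (-α) :=
        add_le_add (hdecay N hN N le_rfl (by lia) β hβ ξ γ hγ hminor)
          (hdecay N hN M hMN hNM β hβ ξ γ hγ hminor)
    _ = 2 * C * Real.log N ^ (-α) := by ring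

end decay

section Nseq

variable {τ : ℝ}

theorem Nseq_mono (hτ : 0 < τ) : Monotone (Nseq τ) := fun m n hmn =>
  Nat.floor_le_floor (Real.rpow_le_rpow_of_exponent_le one_le_two
    (Real.rpow_le_rpow (by positivity) (by exact_mod_cast hmn) hτ.le))

theorem Nseq_pos (hτ : 0 < τ) (n : ℕ) : 0 < Nseq τ n := by
  refine lt_of_lt_of_le ?_ (Nseq_mono hτ (Nat.zero_le n))
  simp [Nseq, Real.zero_rpow hτ.ne']

theorem two_le_Nseq (hτ : 0 < τ) {n : ℕ} (hn : 1 ≤ n) : 2 ≤ Nseq τ n := by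
  refine le_trans ?_ (Nseq_mono hτ hn)
  simp [Nseq]

theorem Nseq_succ_le_four_mul (hτ0 : 0 < τ) (hτ1 : τ ≤ 1) (n : ℕ) :
    Nseq τ (n + 1) ≤ 4 * Nseq τ n := by
  have hexp : ((n + 1 : ℕ) : ℝ) ^ τ ≤ (n : ℝ) ^ τ + 1 := by
    simpa using Real.rpow_add_le_add_rpow n.cast_nonneg zero_le_one hτ0.le hτ1
  have hfloor : (2 : ℝ) ^ ((n : ℝ) ^ τ) < Nseq τ n + 1 := Nat.lt_floor_add_one _
  have hpos : (1 : ℝ) ≤ Nseq τ n := by exact_mod_cast Nseq_pos hτ0 n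
  have hreal : (Nseq τ (n + 1) : ℝ) ≤ 4 * Nseq τ n := by
    calc (Nseq τ (n + 1) : ℝ) ≤ 2 ^ (((n + 1 : ℕ) : ℝ) ^ τ) := Nat.floor_le (by positivity)
      _ ≤ 2 ^ ((n : ℝ) ^ τ + 1) := Real.rpow_le_rpow_of_exponent_le one_le_two hexp
      _ = 2 ^ ((n : ℝ) ^ τ) * 2 := by rw [Real.rpow_add two_pos, Real.rpow_one]
      _ ≤ 4 * Nseq τ n := by linarith
  exact_mod_cast hreal

end Nseq

end

/-- Property 1, averages case: minor arc decay of the discrete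
multipliers. For each `α > 0` there is `β_α > 0` such that for any `β > β_α` and `n ∈ ℕ`,
if some `ξ_{γ₀}` admits a rational approximation `a/q` with
`(log N_n)^β ≤ q ≤ N_n^{|γ₀|} (log N_n)^{-β}`, then
`|𝔪_{N_n}(ξ) - 𝔪_{N_{n-1}}(ξ)| ≲ (log N_n)^{-α}`. -/
theorem minor_arc_multiplier_decay
    (k k' k'' : ℕ) (hk : k' + k'' = k)
    (Γ : Finset (Fin k → ℕ)) (hΓ : Γ.Nonempty) (h0 : (0 : Fin k → ℕ) ∉ Γ)
    (Ω : Set (EuclideanSpace ℝ (Fin k))) (cΩ : ℝ)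
    (hc0 : 0 < cΩ) (hc1 : cΩ < 1) (hopen : IsOpen Ω) (hconv : Convex ℝ Ω)
    (hball : Metric.ball 0 cΩ ⊆ Ω) (hball' : Ω ⊆ Metric.ball 0 1)
    (τ : ℝ) (hτ0 : 0 < τ) (hτ1 : τ ≤ 1)
    (α : ℝ) (hα : 0 < α) :
    ∃ β₀ : ℝ, 0 < β₀ ∧ ∀ β : ℝ, β₀ < β →
      ∃ C : ℝ, 0 < C ∧
        ∀ n : ℕ, 1 ≤ n →
        ∀ ξ : (Fin k → ℕ) → ℝ, ∀ γ₀ ∈ Γ, ∀ a q : ℤ,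
          IsCoprime a q → 1 ≤ a → a ≤ q →
          (Real.log (Nseq τ n)) ^ β ≤ (q : ℝ) →
          (q : ℝ) ≤ ((Nseq τ n : ℝ)) ^ ((∑ i, γ₀ i : ℕ) : ℝ) *
              (Real.log (Nseq τ n)) ^ (-β) →
          |ξ γ₀ - (a : ℝ) / (q : ℝ)| ≤ 1 / (q : ℝ) ^ 2 →
          ‖discMultA Γ k' Ω (Nseq τ n) ξ - discMultA Γ k' Ω (Nseq τ (n - 1)) ξ‖
            ≤ C * (Real.log (Nseq τ n)) ^ (-α) := by
  obtain ⟨β₀, hβ₀, C, hC, hdecay⟩ :=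
    minor_arc_multiplier_decay_general h0 k' hconv hc0 hball hball' α
  refine ⟨β₀, hβ₀, fun β hβ => ⟨C, hC, fun n hn ξ γ₀ hγ₀ a q hcop _ _ hq hqN hx => ?_⟩⟩
  obtain ⟨m, rfl⟩ := Nat.exists_eq_add_of_le' hn
  exact hdecay _ (two_le_Nseq hτ0 hn) _ (Nseq_mono hτ0 m.le_succ)
    (Nseq_succ_le_four_mul hτ0 hτ1 m) β hβ.le ξ γ₀ hγ₀ ⟨a, q, hcop, hq, hqN, hx⟩
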